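/- Let D be a finite set of positive integers with at least two elements and let e ∈ D satisfy e ∉ {1, 2, 3, 4, 6}. Suppose that for every d ∈ D \ {e}, the rational number d/e is not a positive power of a prime (in particular d/e need not be an integer), and suppose that O(D \ {e}) is a GE_2-ring. Then O(D) is a GE_2-ring. -/

import Mathlib

/-!
Write `S = D \ {e}`, `R = O(D)`, `R₀ = O(S)`, `A = ℤ[ζ_e]`, `φ : R → A` for the projection, and let
`P ∈ R` be the class of `∏ Φ_d`, `d ∈ S`. The kernel of `R → R₀` is `P R`, and `P` annihilates the
kernel of `φ`. Elementary matrices lift along `R → R₀`, so if `R₀` is a `GE_2`-ring it suffices to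
treat matrices over `R` with first row `(1 + P r, P s)`. Since multiplication by `P` factors through
`φ`, such a row is governed by the pair `(α, β) = (φ (1 + P r), φ s)` over `A`, with `π = φ P`:
it may be changed by `β ↦ β + t α`, by `α ↦ α + t π β`, and by
`(α, β) ↦ (w α, w⁻¹ β)` for a unit `w ≡ 1 mod π`. The relation `Red π α β` says that these moves
lead to `α = 1`; `Red.good` and `isGE_of_red` carry a reduction back to `R`.

The hypothesis on `d / e` enters through `prod_dvd_radical`: `Φ_d(ζ_e)` is a unit unless `d / e` is
a prime power with nonzero, possibly negative, exponent. As positive exponents are excluded, `π`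
divides the product of the primes dividing `e`.

It remains to prove `thmA`: over `A`, a unimodular row `(α, β)` with `α ≡ 1 mod π` is reducible. Let
`E` be the number of roots of unity in `ℚ(ζ_e)`. First `β` is made prime to `E`. Then `α` is
replaced by some `y ≡ α mod β` that is close to a fixed element `Y ≡ 1 mod π` whose norm is
`1 + E t` with `t` prime to `E` (`exists_Y`), and such that `(y)` is a prime `q₁`, or a product
`q₁ q₂` with `q₂` a prime chosen in advance. The choice of `Y` makes every unit modulo `q₁` a root
of unity times the `E`-th power of an integer, so that `β` becomes `η z₀ ^ E` with `η` a unit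
(`red_final`). Finally `red_power` reduces such a row: because `e ∉ {1, 2, 3, 4, 6}` there is a unit
of infinite order congruent to `1` modulo `π`, and the powers of this unit allow replacing `α` by a
rational prime `p` modulo a high power of a suitable lift `z` of `z₀`; then
`z ^ (p - 1) ≡ 1 mod p` makes the second entry a unit.

The existence of `y` is a weak form of the theorem that ray classes contain primes (`KD_main`). It
is proved from scratch. Partial zeta functions of ray classes are expressed by sums over cosets of
ideals, weighted by a smooth enough function that selects associates (`exists_weight`,
`partial_zeta`). Comparing cosets shows that all classes share one polar part, of order at most
one at `s = 1` (`ind_eqA`), which gives the residues of the prime sums of ray class characters up to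
the orders of vanishing of their `L`-functions (`lft_res`). Nonvanishing of `L(1, χ)` is not proved.
Instead, positivity shows that at most one character, a quadratic one, can be exceptional
(`exc_mul`); the auxiliary prime `q₂`, on which this character takes the value `-1`, corrects the
class of `y` when necessary (`exists_q2`, `exists_generator`). Dirichlet's theorem over `ℤ` supplies
sufficiently many primes of degree one (`not_summable_W`).
-/

/-- The set of `n × n` elementary matrices over `R`: matrices differing from the
identity by a single off-diagonal entry. -/
def ElemMatrices (n : ℕ) (R : Type*) [CommRing R] : Set (Matrix (Fin n) (Fin n) R) :=
  {M | ∃ (i j : Fin n) (c : R), i ≠ j ∧ M = Matrix.transvection i j c}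

/-- `R` is a `GE_n`-ring: every matrix of determinant one is a product of
elementary matrices, i.e. `SL_n(R) = E_n(R)`. -/
def IsGE (R : Type*) [CommRing R] (n : ℕ) : Prop :=
  ∀ A : Matrix (Fin n) (Fin n) R, A.det = 1 → A ∈ Submonoid.closure (ElemMatrices n R)

/-- `R` is a generalized Euclidean ring: a `GE_n`-ring for every `n ≥ 2`. -/
def IsGERing (R : Type*) [CommRing R] : Prop := ∀ n, 2 ≤ n → IsGE R n

set_option linter.unusedSectionVars false
set_option linter.unusedVariables false
set_option linter.unusedSimpArgs false

/-! ### Weighted zeta sums over integers -/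

namespace KD

section
open NumberField NumberField.InfinitePlace Module Filter Topology
open scoped Classical
variable {K : Type*} [Field K] [NumberField K]

/-- A weight on the integers of `K`: invariant under multiplication by `2`, supported where the
absolute values at all infinite places are comparable, and Lipschitz in their logarithms. -/
structure IsWeight (v : 𝓞 K → ℝ) : Prop where
  nonneg : ∀ b, 0 ≤ v b
  le_one : ∀ b, v b ≤ 1
  two : ∀ b, b ≠ 0 → v (2 * b) = v b
  comp : ∃ C : ℝ, 1 ≤ C ∧ ∀ b : 𝓞 K, b ≠ 0 → v b ≠ 0 → ∀ w w' : InfinitePlace K,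
    w (b : K) ≤ C * w' (b : K)
  lip : ∃ C : ℝ, 0 ≤ C ∧ ∀ b b' : 𝓞 K, b ≠ 0 → b' ≠ 0 → ∀ δ : ℝ,
    (∀ w : InfinitePlace K, |Real.log (w (b : K)) - Real.log (w (b' : K))| ≤ δ) →
    |v b - v b'| ≤ C * δ

/-- The largest absolute value of `b` at an infinite place, as the sup norm of its mixed embedding. -/
noncomputable def size (b : 𝓞 K) : ℝ := ‖mixedEmbedding K (b : K)‖

/-- The absolute norm of an integer. -/
noncomputable def nrm (b : 𝓞 K) : ℕ := Ideal.absNorm (Ideal.span {b})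

/-- The term `v(b) N(b)^{-s}` of a weighted zeta sum. -/
noncomputable def H (v : 𝓞 K → ℝ) (s : ℂ) (b : 𝓞 K) : ℂ := (v b : ℂ) * (nrm b : ℂ) ^ (-s)

lemma size_nonneg (b : 𝓞 K) : 0 ≤ size b := norm_nonneg _

lemma place_le_size (b : 𝓞 K) (w : InfinitePlace K) : w (b : K) ≤ size b := by
  rw [size, mixedEmbedding.norm_eq_sup'_normAtPlace]
  rw [← mixedEmbedding.normAtPlace_apply w (b : K)]
  exact Finset.le_sup' (f := fun w => mixedEmbedding.normAtPlace w (mixedEmbedding K (b : K)))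
    (Finset.mem_univ w)

lemma size_le_iff (b : 𝓞 K) (r : ℝ) : size b ≤ r ↔ ∀ w : InfinitePlace K, w (b : K) ≤ r := by
  rw [size, mixedEmbedding.norm_eq_sup'_normAtPlace]
  simp [mixedEmbedding.normAtPlace_apply]

lemma size_add_le (a b : 𝓞 K) : size (a + b) ≤ size a + size b := by
  simp only [size, map_add]; exact norm_add_le _ _

lemma size_sub_le (a b : 𝓞 K) : size (a - b) ≤ size a + size b := by
  simp only [size, map_sub]; exact norm_sub_le _ _

lemma size_neg (a : 𝓞 K) : size (-a) = size a := by
  simp only [size, map_neg, norm_neg]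

lemma size_eq_zero {a : 𝓞 K} : size a = 0 ↔ a = 0 := by
  simp [size]

lemma nrm_eq_abs (b : 𝓞 K) : (nrm b : ℝ) = |((Algebra.norm ℚ (b : K) : ℚ) : ℝ)| := by
  rw [nrm, Ideal.absNorm_span_singleton, ← Algebra.coe_norm_int]
  simp

lemma nrm_eq_prod (b : 𝓞 K) : (nrm b : ℝ) = ∏ w : InfinitePlace K, w (b : K) ^ w.mult := by
  rw [nrm_eq_abs, InfinitePlace.prod_eq_abs_norm]
  push_cast; rfl

lemma nrm_eq_zero {b : 𝓞 K} : nrm b = 0 ↔ b = 0 := by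
  rw [nrm, Ideal.absNorm_eq_zero_iff, Ideal.span_singleton_eq_bot]

lemma nrm_mul (a b : 𝓞 K) : nrm (a * b) = nrm a * nrm b := by
  rw [nrm, ← Ideal.span_singleton_mul_span_singleton, map_mul]; rfl

lemma place_pos {b : 𝓞 K} (hb : b ≠ 0) (w : InfinitePlace K) : 0 < w (b : K) := by
  rw [InfinitePlace.pos_iff]; simpa using hb

lemma log_nrm {b : 𝓞 K} (hb : b ≠ 0) :
    Real.log (nrm b) = ∑ w : InfinitePlace K, w.mult * Real.log (w (b : K)) := by
  rw [nrm_eq_prod, Real.log_prod]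
  · simp
  · intro w _; exact pow_ne_zero _ (place_pos hb w).ne'

lemma norm_H_le_one {v : 𝓞 K → ℝ} (hv : IsWeight v) {s : ℂ} (hs : 0 < s.re) (b : 𝓞 K) :
    ‖H v s b‖ ≤ 1 := by
  have hs0 : s ≠ 0 := by rintro rfl; simp at hs
  rw [H, norm_mul]
  refine mul_le_one₀ ?_ (norm_nonneg _) ?_
  · rw [Complex.norm_real, Real.norm_of_nonneg (hv.nonneg b)]; exact hv.le_one b
  · by_cases hb : b = 0
    · simp [hb, nrm_eq_zero.2, hs0]
    · rw [Complex.norm_natCast_cpow_of_pos (Nat.pos_of_ne_zero (mt nrm_eq_zero.1 hb))]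
      exact Real.rpow_le_one_of_one_le_of_nonpos
        (by exact_mod_cast Nat.pos_of_ne_zero (mt nrm_eq_zero.1 hb)) (by simp [hs.le])

lemma summable_size {r : ℝ} (hr : r < -(finrank ℚ K : ℝ)) :
    Summable fun b : 𝓞 K => size b ^ r := by
  have hL : finrank ℤ (mixedEmbedding.integerLattice K) = finrank ℚ K := by
    rw [← mixedEmbedding.finrank K]; exact ZLattice.rank ℝ (mixedEmbedding.integerLattice K)
  have h1 := ZLattice.summable_norm_rpow (mixedEmbedding.integerLattice K) r (by rw [hL]; exact hr)
  have hm : ∀ b : 𝓞 K, mixedEmbedding K (b : K) ∈ mixedEmbedding.integerLattice K := fun b =>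
    LinearMap.mem_range.2 ⟨b, rfl⟩
  have hf : Function.Injective (fun b : 𝓞 K =>
      (⟨mixedEmbedding K (b : K), hm b⟩ : mixedEmbedding.integerLattice K)) := by
    intro a b h
    have := congrArg Subtype.val h
    exact RingOfIntegers.ext (mixedEmbedding_injective K this)
  have h2 := h1.comp_injective hf
  refine h2.congr fun b => ?_
  simp only [Function.comp_apply, size, Submodule.coe_norm]

lemma finite_size_le (R : ℝ) : {b : 𝓞 K | size b ≤ R}.Finite := by
  have h := (summable_size (K := K) (r := -(finrank ℚ K : ℝ) - 1) (by linarith)).tendsto_cofinite_zero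
  have hr : -(finrank ℚ K : ℝ) - 1 < 0 := by
    have : (0:ℝ) ≤ finrank ℚ K := by positivity
    linarith
  have hR : 0 < (max R 1) ^ (-(finrank ℚ K : ℝ) - 1) := by positivity
  have h2 := h.eventually (gt_mem_nhds hR)
  rw [Filter.eventually_cofinite] at h2
  refine (h2.union (Set.finite_singleton 0)).subset ?_
  intro b hb
  by_cases h0 : b = 0
  · right; exact h0
  left
  simp only [Set.mem_ofPred_eq, not_lt] at hb ⊢
  have hp : 0 < size b := lt_of_le_of_ne (size_nonneg b) (Ne.symm (mt size_eq_zero.1 h0))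
  exact Real.rpow_le_rpow_of_nonpos hp (hb.trans (le_max_left _ _)) hr.le

/-- Lower bound for the norm on the support of a weight. -/
lemma nrm_ge {C : ℝ} (hC : 1 ≤ C) {b : 𝓞 K}
    (h : ∀ w w' : InfinitePlace K, w (b : K) ≤ C * w' (b : K)) :
    (size b / C) ^ (finrank ℚ K) ≤ nrm b := by
  rw [nrm_eq_prod, ← InfinitePlace.sum_mult_eq, ← Finset.prod_pow_eq_pow_sum]
  refine Finset.prod_le_prod (fun w _ => by have := size_nonneg b; positivity) fun w _ => ?_
  refine pow_le_pow_left₀ (by have := size_nonneg b; positivity) ?_ _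
  rw [div_le_iff₀ (by linarith), size_le_iff]
  intro w'
  rw [mul_comm]; exact h w' w

lemma norm_cpow_le {C : ℝ} (hC : 1 ≤ C) {b : 𝓞 K} (hb : b ≠ 0)
    (h : ∀ w w' : InfinitePlace K, w (b : K) ≤ C * w' (b : K)) {s : ℂ} (h0 : 0 < s.re) :
    ‖(nrm b : ℂ) ^ (-s)‖ ≤ C ^ (finrank ℚ K * s.re) * size b ^ (-(finrank ℚ K * s.re)) := by
  have hp : 0 < size b := lt_of_le_of_ne (size_nonneg b) (Ne.symm (mt size_eq_zero.1 hb))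
  rw [Complex.norm_natCast_cpow_of_pos (Nat.pos_of_ne_zero (mt nrm_eq_zero.1 hb))]
  have h1 := nrm_ge hC h
  have hC0 : 0 < C := by linarith
  calc (nrm b : ℝ) ^ (-s).re ≤ ((size b / C) ^ (finrank ℚ K)) ^ (-s).re :=
        Real.rpow_le_rpow_of_nonpos (by positivity) h1 (by simp [h0.le])
    _ = _ := by
        rw [← Real.rpow_natCast, ← Real.rpow_mul (by positivity), Real.div_rpow hp.le hC0.le,
          Complex.neg_re, mul_neg, Real.rpow_neg hC0.le, div_inv_eq_mul, mul_comm]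

lemma norm_H_le {v : 𝓞 K → ℝ} (hv : IsWeight v) {C : ℝ} (hC : 1 ≤ C)
    (h : ∀ b : 𝓞 K, b ≠ 0 → v b ≠ 0 → ∀ w w' : InfinitePlace K, w (b : K) ≤ C * w' (b : K))
    {s : ℂ} (h0 : 0 < s.re) (b : 𝓞 K) :
    ‖H v s b‖ ≤ C ^ (finrank ℚ K * s.re) * size b ^ (-(finrank ℚ K * s.re)) := by
  have hs0 : s ≠ 0 := by rintro rfl; simp at h0
  have hC0 : 0 < C := by linarith
  have hsz := size_nonneg b
  by_cases hb : b = 0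
  · rw [H, nrm_eq_zero.2 hb]; simp [hs0]; positivity
  by_cases hvb : v b = 0
  · rw [H, hvb]; simp; positivity
  rw [H, norm_mul]
  refine (mul_le_of_le_one_left (norm_nonneg _) ?_).trans (norm_cpow_le hC hb (h b hb hvb) h0)
  rw [Complex.norm_real, Real.norm_of_nonneg (hv.nonneg b)]; exact hv.le_one b

lemma summable_H {v : 𝓞 K → ℝ} (hv : IsWeight v) {s : ℂ} (hs : 1 < s.re) :
    Summable fun b : 𝓞 K => ‖H v s b‖ := by
  obtain ⟨C, hC, h⟩ := hv.comp
  refine Summable.of_nonneg_of_le (fun _ => norm_nonneg _)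
    (fun b => norm_H_le hv hC h (by linarith) b) ?_
  refine Summable.mul_left _ (summable_size ?_)
  have : (0:ℝ) < finrank ℚ K := by exact_mod_cast finrank_pos
  nlinarith

/-- The weighted partial zeta sum over a coset `x + 𝔞`. -/
noncomputable def S (v : 𝓞 K → ℝ) (I : Ideal (𝓞 K)) (x : 𝓞 K) (s : ℂ) : ℂ :=
  ∑' b : I, H v s (x + b)

lemma summable_S {v : 𝓞 K → ℝ} (hv : IsWeight v) {s : ℂ} (hs : 1 < s.re) (I : Ideal (𝓞 K))
    (x : 𝓞 K) : Summable fun b : I => ‖H v s (x + b)‖ :=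
  (summable_H hv hs).comp_injective (i := fun b : I => x + (b : 𝓞 K))
    (fun a b h => Subtype.ext (add_left_cancel h))

end

end KD

/-! ### Comparison of cosets -/

namespace KD

section
open NumberField NumberField.InfinitePlace Module Filter Topology
open scoped Classical
variable {K : Type*} [Field K] [NumberField K]

lemma place_add_le (w : InfinitePlace K) (x y : K) : w (x + y) ≤ w x + w y := by
  simp only [← InfinitePlace.norm_embedding_eq w, map_add]
  exact norm_add_le _ _

lemma log_sub_le {x y T : ℝ} (hx : 0 < x) (hT : 0 ≤ T) (h2 : 2 * T ≤ x) (h : |x - y| ≤ T)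
    (hy : 0 < y) : |Real.log x - Real.log y| ≤ 2 * T / x := by
  rw [abs_le] at h
  have hy2 : x / 2 ≤ y := by linarith
  rw [abs_le]
  constructor
  · have := Real.log_le_sub_one_of_pos (div_pos hy hx)
    rw [Real.log_div hy.ne' hx.ne'] at this
    have h3 : y / x - 1 ≤ 2 * T / x := by
      rw [div_sub_one hx.ne']; gcongr; linarith
    linarith
  · have := Real.log_le_sub_one_of_pos (div_pos hx hy)
    rw [Real.log_div hx.ne' hy.ne'] at this
    have h3 : x / y - 1 ≤ 2 * T / x := by
      rw [div_sub_one hy.ne', div_le_div_iff₀ hy hx]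
      nlinarith
    linarith

lemma nrm_cpow {b : 𝓞 K} (hb : b ≠ 0) (s : ℂ) :
    (nrm b : ℂ) ^ (-s) = Complex.exp (-s * (Real.log (nrm b) : ℂ)) := by
  have h0 : (nrm b : ℂ) ≠ 0 := by exact_mod_cast mt nrm_eq_zero.1 hb
  rw [Complex.cpow_def_of_ne_zero h0, ← Complex.natCast_log, mul_comm]

/-- Terms at nearby integers differ by one order less than their size: the logarithms of the
absolute values, on which both factors of the term depend in a Lipschitz way, move by `O(1 / size b)`. -/
lemma H_close_supp {v : 𝓞 K → ℝ} (hv : IsWeight v) {T : ℝ} (hT : 0 ≤ T) :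
    ∃ C R : ℝ, 0 ≤ C ∧ 1 ≤ R ∧ ∀ b b' : 𝓞 K, size (b - b') ≤ T → R ≤ size b → v b ≠ 0 →
      ∀ s : ℂ, 0 < s.re → ‖s‖ ≤ 2 → 
        ‖H v s b - H v s b'‖ ≤ C * size b ^ (-(finrank ℚ K * s.re) - 1) := by
  obtain ⟨C1, hC1, h1⟩ := hv.comp
  obtain ⟨C2, hC2, h2⟩ := hv.lip
  set n := finrank ℚ K with hn
  have hn0 : (0:ℝ) ≤ n := by positivity
  have hC10 : 0 < C1 := by linarith
  refine ⟨C1 ^ (n * 2 : ℝ) * (2 * T * C1 * (C2 + 4 * n)), 1 + 2 * C1 * T + 4 * n * T * C1,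
    by positivity, by nlinarith [mul_nonneg hn0 hT, mul_nonneg (mul_nonneg hn0 hT) hC10.le], ?_⟩
  intro b b' hbb hR hvb s hs hs2
  have hsz : 0 < size b := by
    have : 0 ≤ 2 * C1 * T := by positivity
    have : 0 ≤ 4 * n * T * C1 := by positivity
    linarith
  have hb : b ≠ 0 := by rintro rfl; simp [size] at hsz
  have hw : ∀ w : InfinitePlace K, size b / C1 ≤ w (b : K) := fun w => by
    rw [div_le_iff₀ hC10, size_le_iff]
    intro w'; rw [mul_comm]; exact h1 b hb hvb w' w
  have hwT : ∀ w : InfinitePlace K, 2 * T < w (b : K) := fun w => by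
    refine lt_of_lt_of_le ?_ (hw w)
    rw [lt_div_iff₀ hC10]
    have : 0 ≤ 4 * n * T * C1 := by positivity
    nlinarith
  have hd : ∀ w : InfinitePlace K, |w (b : K) - w (b' : K)| ≤ T := fun w => by
    have h3 := place_le_size (b - b') w
    have h4 := place_le_size (b' - b) w
    have h5 : size (b' - b) = size (b - b') := by rw [← size_neg]; congr 1; ring
    have e1 : w (b : K) ≤ w ((b - b' : 𝓞 K) : K) + w (b' : K) := by
      have := place_add_le w ((b - b' : 𝓞 K) : K) (b' : K)
      rwa [← map_add, sub_add_cancel] at this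
    have e2 : w (b' : K) ≤ w ((b' - b : 𝓞 K) : K) + w (b : K) := by
      have := place_add_le w ((b' - b : 𝓞 K) : K) (b : K)
      rwa [← map_add, sub_add_cancel] at this
    rw [abs_le]; constructor <;> linarith
  have hb'pos : ∀ w : InfinitePlace K, 0 < w (b' : K) := fun w => by
    have := hd w; have := hwT w; rw [abs_le] at *; linarith
  have hb' : b' ≠ 0 := by
    rintro rfl
    obtain ⟨w⟩ := (inferInstance : Nonempty (InfinitePlace K))
    have := hb'pos w; simp at this
  set δ := 2 * T * C1 / size b with hδ
  have hδ0 : 0 ≤ δ := by positivity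
  have hlog : ∀ w : InfinitePlace K, |Real.log (w (b : K)) - Real.log (w (b' : K))| ≤ δ := by
    intro w
    refine (log_sub_le (place_pos hb w) hT (hwT w).le (hd w) (hb'pos w)).trans ?_
    rw [hδ, div_le_div_iff₀ (place_pos hb w) hsz]
    have := hw w
    rw [div_le_iff₀ hC10] at this
    nlinarith
  have hv1 := h2 b b' hb hb' δ hlog
  have hnl : |Real.log (nrm b) - Real.log (nrm b')| ≤ n * δ := by
    rw [log_nrm hb, log_nrm hb', ← Finset.sum_sub_distrib, hn, ← InfinitePlace.sum_mult_eq]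
    push_cast
    rw [Finset.sum_mul]
    refine (Finset.abs_sum_le_sum_abs _ _).trans (Finset.sum_le_sum fun w _ => ?_)
    rw [← mul_sub, abs_mul, abs_of_nonneg (by positivity)]
    gcongr
    exact hlog w
  have hnd : 2 * (n * δ) ≤ 1 := by
    rw [hδ, show 2 * (n * (2 * T * C1 / size b)) = (4 * n * T * C1) / size b by ring,
      div_le_one hsz]
    have : 0 ≤ 2 * C1 * T := by positivity
    linarith
  have hexp : ‖(nrm b : ℂ) ^ (-s) - (nrm b' : ℂ) ^ (-s)‖ ≤ ‖(nrm b : ℂ) ^ (-s)‖ * (4 * (n * δ)) := by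
    rw [nrm_cpow hb, nrm_cpow hb']
    set l := Real.log (nrm b)
    set l' := Real.log (nrm b')
    have : Complex.exp (-s * (l:ℂ)) - Complex.exp (-s * (l':ℂ)) = 
      - (Complex.exp (-s * (l:ℂ)) * (Complex.exp (s * ((l - l' : ℝ) : ℂ)) - 1)) := by
      rw [mul_sub, ← Complex.exp_add]
      push_cast
      ring_nf
    rw [this, norm_neg, norm_mul]
    gcongr
    have hx : ‖s * ((l - l' : ℝ) : ℂ)‖ ≤ 2 * (n * δ) := by
      rw [norm_mul, Complex.norm_real, Real.norm_eq_abs]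
      gcongr
    refine (Complex.norm_exp_sub_one_le (hx.trans hnd)).trans ?_
    linarith
  have hN := norm_cpow_le hC1 hb (h1 b hb hvb) hs
  have hre : s.re ≤ 2 := (Complex.re_le_norm s).trans hs2
  have hN' : ‖(nrm b : ℂ) ^ (-s)‖ ≤ C1 ^ (n * 2 : ℝ) * size b ^ (-(n * s.re)) := by
    refine hN.trans ?_
    gcongr
  have hsplit : H v s b - H v s b' = ((v b - v b' : ℝ) : ℂ) * (nrm b : ℂ) ^ (-s) +
      (v b' : ℂ) * ((nrm b : ℂ) ^ (-s) - (nrm b' : ℂ) ^ (-s)) := by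
    simp only [H]; push_cast; ring
  rw [hsplit]
  have hvb' : ‖(v b' : ℂ)‖ ≤ 1 := by
    rw [Complex.norm_real, Real.norm_of_nonneg (hv.nonneg b')]; exact hv.le_one b'
  calc _ ≤ (C2 * δ) * ‖(nrm b : ℂ) ^ (-s)‖ + 1 * (‖(nrm b : ℂ) ^ (-s)‖ * (4 * (n * δ))) := by
        refine (norm_add_le _ _).trans (add_le_add ?_ ?_)
        · rw [norm_mul, Complex.norm_real, Real.norm_eq_abs]; gcongr
        · rw [norm_mul]; gcongr
    _ = ‖(nrm b : ℂ) ^ (-s)‖ * (δ * (C2 + 4 * n)) := by ring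
    _ ≤ (C1 ^ (n * 2 : ℝ) * size b ^ (-(n * s.re))) * (δ * (C2 + 4 * n)) := by gcongr
    _ = _ := by
      rw [Real.rpow_sub_one hsz.ne', hδ]; field_simp

lemma H_close {v : 𝓞 K → ℝ} (hv : IsWeight v) {T : ℝ} (hT : 0 ≤ T) :
    ∃ C R : ℝ, 0 ≤ C ∧ 1 ≤ R ∧ ∀ b b' : 𝓞 K, size (b - b') ≤ T → R ≤ size b → R ≤ size b' →
      ∀ s : ℂ, 0 < s.re → ‖s‖ ≤ 2 → 
        ‖H v s b - H v s b'‖ ≤ C * (size b ^ (-(finrank ℚ K * s.re) - 1) + 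
          size b' ^ (-(finrank ℚ K * s.re) - 1)) := by
  obtain ⟨C, R, hC, hR, h⟩ := H_close_supp hv hT
  refine ⟨C, R, hC, hR, fun b b' hbb hb hb' s hs hs2 => ?_⟩
  have p1 : 0 ≤ size b ^ (-(finrank ℚ K * s.re) - 1) := Real.rpow_nonneg (size_nonneg b) _
  have p2 : 0 ≤ size b' ^ (-(finrank ℚ K * s.re) - 1) := Real.rpow_nonneg (size_nonneg b') _
  by_cases h1 : v b = 0
  · by_cases h2 : v b' = 0
    · simp only [H, h1, h2]; simp; positivity
    · have := h b' b (by rw [← size_neg]; simpa using hbb) hb' h2 s hs hs2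
      rw [norm_sub_rev]; nlinarith
  · have := h b b' hbb hb h1 s hs hs2
    nlinarith

/-- Equality near `s = 1`, on `re s > 1`, up to a function analytic at `1`. -/
def EqA (f g : ℂ → ℂ) : Prop :=
  ∃ h : ℂ → ℂ, AnalyticAt ℂ h 1 ∧ ∀ᶠ s in 𝓝 (1 : ℂ), 1 < s.re → f s - g s = h s

lemma EqA.refl (f : ℂ → ℂ) : EqA f f := ⟨0, analyticAt_const, by simp⟩

lemma EqA.symm {f g : ℂ → ℂ} (h : EqA f g) : EqA g f := by
  obtain ⟨k, hk, h⟩ := h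
  refine ⟨-k, hk.neg, h.mono fun s hs h1 => ?_⟩
  simp [← hs h1]

lemma EqA.trans {f g k : ℂ → ℂ} (h : EqA f g) (h' : EqA g k) : EqA f k := by
  obtain ⟨a, ha, h⟩ := h
  obtain ⟨a', ha', h'⟩ := h'
  refine ⟨a + a', ha.add ha', (h.and h').mono fun s hs h1 => ?_⟩
  simp [← hs.1 h1, ← hs.2 h1]

lemma EqA.add {f g f' g' : ℂ → ℂ} (h : EqA f g) (h' : EqA f' g') :
    EqA (fun s => f s + f' s) (fun s => g s + g' s) := by
  obtain ⟨a, ha, h⟩ := h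
  obtain ⟨a', ha', h'⟩ := h'
  refine ⟨a + a', ha.add ha', (h.and h').mono fun s hs h1 => ?_⟩
  simp [← hs.1 h1, ← hs.2 h1]; ring

lemma EqA.mul_left {f g c : ℂ → ℂ} (h : EqA f g) (hc : AnalyticAt ℂ c 1) :
    EqA (fun s => c s * f s) (fun s => c s * g s) := by
  obtain ⟨a, ha, h⟩ := h
  refine ⟨c * a, hc.mul ha, h.mono fun s hs h1 => ?_⟩
  simp [← hs h1]; ring

lemma EqA.sum {ι : Type*} (t : Finset ι) {f g : ι → ℂ → ℂ} (h : ∀ i ∈ t, EqA (f i) (g i)) :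
    EqA (fun s => ∑ i ∈ t, f i s) (fun s => ∑ i ∈ t, g i s) := by
  induction t using Finset.induction_on with
  | empty => simpa using EqA.refl _
  | insert a t ha ih =>
    simp only [Finset.sum_insert ha]
    exact (h a (by simp)).add (ih fun i hi => h i (by simp [hi]))

lemma EqA.congr {f g f' g' : ℂ → ℂ} (h : EqA f g) (hf : ∀ s : ℂ, 1 < s.re → f s = f' s)
    (hg : ∀ s : ℂ, 1 < s.re → g s = g' s) : EqA f' g' := by
  obtain ⟨a, ha, h⟩ := h
  exact ⟨a, ha, h.mono fun s hs h1 => by rw [← hf s h1, ← hg s h1, hs h1]⟩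

/-- Sums over two cosets of the same ideal differ by a function analytic at `1`. -/
lemma S_eqA {v : 𝓞 K → ℝ} (hv : IsWeight v) (I : Ideal (𝓞 K)) (x x' : 𝓞 K) :
    EqA (S v I x) (S v I x') := by
  set n := finrank ℚ K with hn
  have hn0 : (0:ℝ) < n := by exact_mod_cast finrank_pos
  have hn1 : (1:ℝ) ≤ n := by exact_mod_cast (finrank_pos : 0 < finrank ℚ K)
  set T := size x + size x' with hT
  have hT0 : 0 ≤ T := add_nonneg (size_nonneg _) (size_nonneg _)
  obtain ⟨C, R, hC, hR, h⟩ := H_close hv hT0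
  set r : ℝ := -(n * (1 - 1 / (2 * n))) - 1 with hr
  have hr' : r = -n - 1 / 2 := by rw [hr]; field_simp; ring
  let U : Set ℂ := Metric.ball 1 (1 / (2 * n))
  have hε : (0:ℝ) < 1 / (2 * n) := by positivity
  have hε1 : 1 / (2 * (n:ℝ)) ≤ 1 / 2 := by
    rw [div_le_div_iff₀ (by positivity) (by norm_num)]; linarith
  let u : I → ℝ := fun b => (if size (b : 𝓞 K) ≤ R + T then 2 else 0) + 
    C * (size (x + (b : 𝓞 K)) ^ r + size (x' + (b : 𝓞 K)) ^ r)
  have inj : ∀ y : 𝓞 K, Function.Injective (fun b : I => y + (b : 𝓞 K)) := fun y a b h =>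
    Subtype.ext (add_left_cancel h)
  have hu : Summable u := by
    refine Summable.add ?_ (Summable.mul_left _ (Summable.add ?_ ?_))
    · refine summable_of_hasFiniteSupport ?_
      have := (finite_size_le (K := K) (R + T)).preimage 
        (f := (Subtype.val : I → 𝓞 K)) Subtype.val_injective.injOn
      refine this.subset fun b hb => ?_
      simp only [Function.mem_support] at hb
      by_contra hcon
      exact hb (if_neg hcon)
    · exact (summable_size (K := K) (r := r) (by rw [hr']; linarith)).comp_injective (inj x)
    · exact (summable_size (K := K) (r := r) (by rw [hr']; linarith)).comp_injective (inj x')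
  have hUs : ∀ s ∈ U, 0 < s.re ∧ ‖s‖ ≤ 2 ∧ 1 - 1 / (2 * n) ≤ s.re := by
    intro s hs
    rw [Metric.mem_ball, dist_eq_norm] at hs
    have h1 := Complex.abs_re_le_norm (s - 1)
    rw [Complex.sub_re, Complex.one_re, abs_le] at h1
    refine ⟨by linarith, ?_, by linarith⟩
    have := norm_add_le (s - 1) 1
    rw [sub_add_cancel, norm_one] at this
    linarith
  have hb : ∀ (b : I) (s : ℂ), s ∈ U → ‖H v s (x + (b : 𝓞 K)) - H v s (x' + (b : 𝓞 K))‖ ≤ u b := by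
    intro b s hs
    obtain ⟨h0, h2, hl⟩ := hUs s hs
    have q1 : 0 ≤ size (x + (b : 𝓞 K)) ^ r := Real.rpow_nonneg (size_nonneg _) _
    have q2 : 0 ≤ size (x' + (b : 𝓞 K)) ^ r := Real.rpow_nonneg (size_nonneg _) _
    by_cases hc : size (b : 𝓞 K) ≤ R + T
    · have := norm_sub_le (H v s (x + (b : 𝓞 K))) (H v s (x' + (b : 𝓞 K)))
      have := norm_H_le_one hv h0 (x + (b : 𝓞 K))
      have := norm_H_le_one hv h0 (x' + (b : 𝓞 K))
      have : 0 ≤ C * (size (x + (b : 𝓞 K)) ^ r + size (x' + (b : 𝓞 K)) ^ r) := by positivity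
      simp only [u, if_pos hc]
      linarith
    · simp only [u, if_neg hc, zero_add]
      push Not at hc
      have e1 : R ≤ size (x + (b : 𝓞 K)) := by
        have := size_sub_le (x + (b : 𝓞 K)) x
        rw [add_sub_cancel_left] at this
        have := size_nonneg x'
        linarith
      have e2 : R ≤ size (x' + (b : 𝓞 K)) := by
        have := size_sub_le (x' + (b : 𝓞 K)) x'
        rw [add_sub_cancel_left] at this
        have := size_nonneg x
        linarith
      have e3 := h (x + (b : 𝓞 K)) (x' + (b : 𝓞 K)) (by rw [add_sub_add_right_eq_sub]; exact size_sub_le _ _)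
        e1 e2 s h0 h2
      refine e3.trans ?_
      have e4 : -(n * s.re) - 1 ≤ r := by rw [hr]; nlinarith
      gcongr <;> linarith
  refine ⟨fun s => ∑' b : I, (H v s (x + (b : 𝓞 K)) - H v s (x' + (b : 𝓞 K))), ?_, ?_⟩
  · have : DifferentiableOn ℂ (fun s => ∑' b : I, (H v s (x + (b : 𝓞 K)) - H v s (x' + (b : 𝓞 K)))) U := by
      refine Complex.differentiableOn_tsum_of_summable_norm hu ?_ Metric.isOpen_ball hb
      intro b
      have hH : ∀ c : 𝓞 K, DifferentiableOn ℂ (fun s => H v s c) U := by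
        intro c s hs
        have hs0 : s ≠ 0 := by
          rintro rfl; have := (hUs 0 hs).1; simp at this
        refine DifferentiableAt.differentiableWithinAt ?_
        simp only [H]
        refine DifferentiableAt.const_mul ?_ _
        exact DifferentiableAt.const_cpow differentiableAt_id.neg (Or.inr (by simpa using hs0))
      exact (hH _).sub (hH _)
    exact this.analyticAt (Metric.ball_mem_nhds _ hε)
  · refine Eventually.of_forall fun s hs => ?_
    rw [S, S, ← Summable.tsum_sub]
    · exact (summable_S hv hs I x).of_norm
    · exact (summable_S hv hs I x').of_norm

end

end KD

/-! ### The simple pole at one -/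

namespace KD

section
open NumberField NumberField.InfinitePlace Module Filter Topology
open scoped Classical
variable {K : Type*} [Field K] [NumberField K]

/-- The weighted zeta sum over all integers. -/
noncomputable def SA (v : 𝓞 K → ℝ) (s : ℂ) : ℂ := ∑' b : 𝓞 K, H v s b

lemma SA_eq_sum {v : 𝓞 K → ℝ} (hv : IsWeight v) {s : ℂ} (hs : 1 < s.re) (I : Ideal (𝓞 K))
    [Fintype (𝓞 K ⧸ I)] :
    SA v s = ∑ q : 𝓞 K ⧸ I, S v I (Quotient.out q) s := by
  have hsum := (summable_H hv hs).of_norm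
  let f : (𝓞 K ⧸ I) × I → 𝓞 K := fun p => Quotient.out p.1 + (p.2 : 𝓞 K)
  have hq : ∀ q : 𝓞 K ⧸ I, Ideal.Quotient.mk I (Quotient.out q) = q := Ideal.Quotient.mk_out
  have hf : Function.Bijective f := by
    constructor
    · rintro ⟨q, b⟩ ⟨q', b'⟩ h
      simp only [f] at h
      have h1 := congrArg (Ideal.Quotient.mk I) h
      rw [map_add, map_add, hq, hq, Ideal.Quotient.eq_zero_iff_mem.2 b.2,
        Ideal.Quotient.eq_zero_iff_mem.2 b'.2, add_zero, add_zero] at h1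
      subst h1
      rw [Subtype.ext (add_left_cancel h)]
    · intro c
      refine ⟨(Ideal.Quotient.mk I c, ⟨c - Quotient.out (Ideal.Quotient.mk I c), ?_⟩), ?_⟩
      · rw [← Ideal.Quotient.eq_zero_iff_mem, map_sub, hq, sub_self]
      · simp only [f]; ring
  have h2 := (Equiv.ofBijective f hf).summable_iff.2 hsum
  rw [SA, ← (Equiv.ofBijective f hf).tsum_eq]
  refine (h2.tsum_prod).trans ?_
  rw [tsum_fintype]
  rfl

/-- All cosets of `I` contribute equally to the full sum, up to functions analytic at `1`. -/
lemma SA_eqA {v : 𝓞 K → ℝ} (hv : IsWeight v) {I : Ideal (𝓞 K)} (hI : I ≠ ⊥) (x : 𝓞 K) :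
    EqA (SA v) (fun s => (Ideal.absNorm I : ℂ) * S v I x s) := by
  have : Finite (𝓞 K ⧸ I) := Ideal.finiteQuotientOfFreeOfNeBot I hI
  have := Fintype.ofFinite (𝓞 K ⧸ I)
  have h := EqA.sum Finset.univ (f := fun q : 𝓞 K ⧸ I => S v I (Quotient.out q))
    (g := fun q => S v I x) (fun q _ => S_eqA hv I _ x)
  refine h.congr (fun s hs => (SA_eq_sum hv hs I).symm) (fun s hs => ?_)
  rw [Finset.sum_const, nsmul_eq_mul]
  congr 2
  rw [Ideal.absNorm_apply, Submodule.cardQuot_apply, Finset.card_univ, ← Nat.card_eq_fintype_card]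

lemma nrm_two : nrm (2 : 𝓞 K) = 2 ^ finrank ℚ K := by
  have h : (nrm (2 : 𝓞 K) : ℝ) = 2 ^ finrank ℚ K := by
    rw [nrm_eq_abs]
    have : ((2 : 𝓞 K) : K) = algebraMap ℚ K 2 := by
      rw [map_ofNat]; exact map_ofNat (algebraMap (𝓞 K) K) 2
    rw [this, Algebra.norm_algebraMap]; simp
  exact_mod_cast h

lemma H_two {v : 𝓞 K → ℝ} (hv : IsWeight v) {s : ℂ} (hs : s ≠ 0) (b : 𝓞 K) :
    H v s (2 * b) = (2 : ℂ) ^ (-(finrank ℚ K * s)) * H v s b := by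
  by_cases hb : b = 0
  · simp [hb, H, nrm_eq_zero.2, hs]
  rw [H, H, hv.two b hb, nrm_mul, nrm_two]
  rw [Nat.cast_mul, Complex.natCast_mul_natCast_cpow]
  rw [Nat.cast_pow, ← Complex.natCast_cpow_natCast_mul, mul_neg]
  push_cast; ring

lemma S_two {v : 𝓞 K → ℝ} (hv : IsWeight v) {s : ℂ} (hs : s ≠ 0) :
    S v (Ideal.span {2}) 0 s = (2 : ℂ) ^ (-(finrank ℚ K * s)) * SA v s := by
  have h2 : (2 : 𝓞 K) ≠ 0 := two_ne_zero
  let f : 𝓞 K → (Ideal.span {2} : Ideal (𝓞 K)) := fun b =>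
    ⟨2 * b, Ideal.mem_span_singleton.2 (Dvd.intro _ rfl)⟩
  have hf : Function.Bijective f := by
    constructor
    · intro a b h
      exact mul_left_cancel₀ h2 (congrArg Subtype.val h)
    · rintro ⟨c, hc⟩
      obtain ⟨d, hd⟩ := Ideal.mem_span_singleton.1 hc
      exact ⟨d, Subtype.ext hd.symm⟩
  rw [S, ← (Equiv.ofBijective f hf).tsum_eq, SA, ← tsum_mul_left]
  refine tsum_congr fun b => ?_
  rw [← H_two hv hs, zero_add]; rfl

lemma exists_factor {h : ℂ → ℂ} (hh : AnalyticAt ℂ h 1) (h1 : h 1 = 0) :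
    ∃ g : ℂ → ℂ, AnalyticAt ℂ g 1 ∧ g 1 = deriv h 1 ∧ ∀ s, h s = (s - 1) * g s := by
  obtain ⟨p, hp⟩ := hh
  refine ⟨dslope h 1, ⟨_, hp.has_fpower_series_dslope_fslope⟩, dslope_same _ _, fun s => ?_⟩
  have := sub_smul_dslope h 1 s
  rw [h1, sub_zero, smul_eq_mul] at this
  exact this.symm

/-- The full sum has at most a simple pole at `1`. The coset `2 𝓞` contributes
`2^{-ns}` times the full sum by invariance under `2`, and `2^{-n}` times it up to an analytic function
by comparison of cosets; `2^{-ns} - 2^{-n}` has a simple zero at `1`. -/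
lemma SA_pole {v : 𝓞 K → ℝ} (hv : IsWeight v) : EqA (fun s => (s - 1) * SA v s) 0 := by
  set n := finrank ℚ K with hn
  have hn0 : (n : ℂ) ≠ 0 := by exact_mod_cast (finrank_pos (R := ℚ) (M := K)).ne'
  let c : ℂ → ℂ := fun s => 1 - (2 : ℂ) ^ ((n : ℂ) - n * s)
  have hca : AnalyticAt ℂ c 1 := by
    have : Differentiable ℂ c := by
      intro s
      refine DifferentiableAt.sub (by fun_prop) ?_
      exact DifferentiableAt.const_cpow (by fun_prop) (Or.inl two_ne_zero)
    exact this.analyticAt 1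
  have hc1 : c 1 = 0 := by simp [c]
  have hcd : deriv c 1 ≠ 0 := by
    have h1 : HasDerivAt (fun s : ℂ => (n : ℂ) - n * s) (-(n:ℂ)) 1 := by
      simpa using ((hasDerivAt_id (1:ℂ)).const_mul (n:ℂ)).const_sub (n:ℂ)
    have h2 := (h1.const_cpow (c := 2) (Or.inl two_ne_zero)).const_sub 1
    rw [h2.deriv]
    simp [hn0]
    have := Complex.natCast_log (n := 2)
    have h3 : Real.log 2 ≠ 0 := (Real.log_pos (by norm_num)).ne'
    push_cast at this
    rw [← this]; exact_mod_cast h3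
  obtain ⟨g, hg, hg1, hcg⟩ := exists_factor hca hc1
  have hI : (Ideal.span {2} : Ideal (𝓞 K)) ≠ ⊥ := by
    rw [Ne, Ideal.span_singleton_eq_bot]; exact two_ne_zero
  have key : EqA (fun s => c s * SA v s) 0 := by
    obtain ⟨a, ha, h⟩ := SA_eqA hv hI 0
    refine ⟨a, ha, h.mono fun s hs h1 => ?_⟩
    have hs0 : s ≠ 0 := by rintro rfl; norm_num at h1
    rw [← hs h1]
    beta_reduce
    rw [S_two hv hs0]
    have : (Ideal.absNorm (Ideal.span {(2 : 𝓞 K)}) : ℂ) = 2 ^ n := by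
      have := nrm_two (K := K)
      rw [nrm] at this; rw [this]; push_cast; rfl
    rw [this]
    have h3 : (2:ℂ) ^ ((n : ℂ) - n * s) = 2 ^ n * 2 ^ (-(n * s)) := by
      rw [sub_eq_add_neg, Complex.cpow_add _ _ two_ne_zero, Complex.cpow_natCast]
    simp only [c, h3, Pi.zero_apply]; ring
  obtain ⟨a, ha, h⟩ := key
  have hg0 : g 1 ≠ 0 := by rw [hg1]; exact hcd
  refine ⟨fun s => (g s)⁻¹ * a s, (hg.inv hg0).mul ha, ?_⟩
  filter_upwards [h, hg.continuousAt.eventually_ne hg0] with s hs hgs h1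
  rw [← hs h1, hcg s]
  simp only [Pi.zero_apply, sub_zero]
  field_simp

/-- Since the pole is simple, the factor `t^s` may be replaced by its value `t` at `1`. -/
lemma tS_eqA {v : 𝓞 K → ℝ} (hv : IsWeight v) {I : Ideal (𝓞 K)} (hI : I ≠ ⊥) (x : 𝓞 K)
    {t : ℕ} (ht : t ≠ 0) :
    EqA (fun s => (t : ℂ) ^ s * S v I x s)
      (fun s => ((t : ℂ) / Ideal.absNorm I) * SA v s) := by
  have ht' : (t : ℂ) ≠ 0 := by exact_mod_cast ht
  have hN : (Ideal.absNorm I : ℂ) ≠ 0 := by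
    exact_mod_cast mt Ideal.absNorm_eq_zero_iff.1 hI
  have hta : AnalyticAt ℂ (fun s : ℂ => (t : ℂ) ^ s) 1 := by
    have : Differentiable ℂ (fun s : ℂ => (t : ℂ) ^ s) := by
      intro s; exact DifferentiableAt.const_cpow (by fun_prop) (Or.inl ht')
    exact this.analyticAt 1
  have h1 : EqA (fun s => (t : ℂ) ^ s * S v I x s)
      (fun s => ((t : ℂ) ^ s / Ideal.absNorm I) * SA v s) := by
    refine (((SA_eqA hv hI x).symm).mul_left (c := fun s => (t : ℂ) ^ s / Ideal.absNorm I)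
      (hta.div_const)).congr (fun s _ => by field_simp) (fun s _ => rfl)
  refine h1.trans ?_
  let d : ℂ → ℂ := fun s => (t : ℂ) ^ s / Ideal.absNorm I - (t : ℂ) / Ideal.absNorm I
  obtain ⟨g, hg, -, hd⟩ := exists_factor (h := d) (hta.div_const.sub analyticAt_const) (by simp [d])
  obtain ⟨a, ha, h⟩ := (SA_pole hv).mul_left hg
  refine ⟨a, ha, h.mono fun s hs h1 => ?_⟩
  rw [← hs h1, ← sub_mul]
  have := hd s
  simp only [d] at this
  rw [this]; simp; ring

end

end KD

namespace KD

section
open NumberField NumberField.InfinitePlace Module Filter Topology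
open scoped Classical
variable {K : Type*} [Field K] [NumberField K]

/-! ### Weights from the logarithmic embedding -/

open NumberField.Units NumberField.Units.dirichletUnitTheorem

/-- The logarithmic embedding, normalized by the norm and hence invariant under multiplication by
`2`. -/
noncomputable def lg (b : 𝓞 K) : logSpace K := mixedEmbedding.logMap (mixedEmbedding K (b : K))

lemma norm_mixed (b : 𝓞 K) : mixedEmbedding.norm (mixedEmbedding K (b : K)) = nrm b := by
  rw [mixedEmbedding.norm_eq_norm, nrm_eq_abs]; push_cast; rfl

lemma lg_apply (b : 𝓞 K) (w : {w : InfinitePlace K // w ≠ w₀}) :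
    lg b w = w.1.mult * (Real.log (w.1 (b : K)) - Real.log (nrm b) * (finrank ℚ K : ℝ)⁻¹) := by
  rw [lg, mixedEmbedding.logMap_apply, norm_mixed, mixedEmbedding.normAtPlace_apply]

lemma finrank_ne : (finrank ℚ K : ℝ) ≠ 0 := Nat.cast_ne_zero.2 finrank_pos.ne'

lemma sum_mult_real : ∑ w : InfinitePlace K, (w.mult : ℝ) = finrank ℚ K := by
  exact_mod_cast InfinitePlace.sum_mult_eq (K := K)

lemma mult_le_two' (w : InfinitePlace K) : (w.mult : ℝ) ≤ 2 := by
  rw [InfinitePlace.mult]; split_ifs <;> norm_num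

lemma one_le_mult' (w : InfinitePlace K) : (1 : ℝ) ≤ w.mult := by
  rw [InfinitePlace.mult]; split_ifs <;> norm_num

lemma lg_two {b : 𝓞 K} (hb : b ≠ 0) : lg (2 * b) = lg b := by
  have : mixedEmbedding K ((2 * b : 𝓞 K) : K) = (2 : ℝ) • mixedEmbedding K (b : K) := by
    rw [two_smul, ← map_add]
    congr 1
    rw [two_mul]; rfl
  rw [lg, this, mixedEmbedding.logMap_real_smul _ two_ne_zero, lg]
  rw [norm_mixed]; exact_mod_cast mt nrm_eq_zero.1 hb

lemma lg_unit {b : 𝓞 K} (hb : b ≠ 0) (u : (𝓞 K)ˣ) :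
    lg (b * (u : 𝓞 K)) = lg b + logEmbedding K (Additive.ofMul u) := by
  have : mixedEmbedding K ((b * (u : 𝓞 K) : 𝓞 K) : K) = u • mixedEmbedding K (b : K) := by
    rw [mixedEmbedding.unitSMul_smul, ← map_mul]
    congr 1
    rw [mul_comm]; rfl
  rw [lg, this, mixedEmbedding.logMap_unit_smul, lg, add_comm]
  rw [norm_mixed]; exact_mod_cast mt nrm_eq_zero.1 hb

lemma lg_sub_le {b b' : 𝓞 K} (hb : b ≠ 0) (hb' : b' ≠ 0) {δ : ℝ}
    (h : ∀ w : InfinitePlace K, |Real.log (w (b : K)) - Real.log (w (b' : K))| ≤ δ) :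
    ‖lg b - lg b'‖ ≤ 4 * δ := by
  have hδ : 0 ≤ δ := (abs_nonneg _).trans (h w₀)
  have hN : |Real.log (nrm b) - Real.log (nrm b')| ≤ finrank ℚ K * δ := by
    rw [log_nrm hb, log_nrm hb', ← Finset.sum_sub_distrib, ← sum_mult_real, Finset.sum_mul]
    refine (Finset.abs_sum_le_sum_abs _ _).trans (Finset.sum_le_sum fun w _ => ?_)
    rw [← mul_sub, abs_mul, abs_of_nonneg (by positivity)]
    exact mul_le_mul_of_nonneg_left (h w) (by positivity)
  rw [pi_norm_le_iff_of_nonneg (by positivity)]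
  intro w
  rw [Pi.sub_apply, lg_apply, lg_apply, ← mul_sub, Real.norm_eq_abs, abs_mul,
    abs_of_nonneg (by positivity : (0:ℝ) ≤ w.1.mult)]
  have h1 : |Real.log (w.1 (b:K)) - Real.log (nrm b) * (finrank ℚ K : ℝ)⁻¹ -
      (Real.log (w.1 (b':K)) - Real.log (nrm b') * (finrank ℚ K : ℝ)⁻¹)| ≤ δ + δ := by
    have h2 : |(Real.log (nrm b) - Real.log (nrm b')) * (finrank ℚ K : ℝ)⁻¹| ≤ δ := by
      rw [abs_mul, abs_of_nonneg (by positivity : (0:ℝ) ≤ (finrank ℚ K : ℝ)⁻¹),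
        ← div_eq_mul_inv, div_le_iff₀ (by have := finrank_pos (R := ℚ) (M := K); positivity)]
      linarith
    have h3 := h w.1
    rw [abs_le] at *
    constructor <;> nlinarith [h2.1, h2.2, h3.1, h3.2]
  calc _ ≤ 2 * (δ + δ) := mul_le_mul (mult_le_two' _) h1 (abs_nonneg _) (by norm_num)
    _ = 4 * δ := by ring

/-- A bounded logarithmic embedding forces comparable absolute values at all infinite places. -/
lemma comp_of_lg {b : 𝓞 K} (hb : b ≠ 0) {L : ℝ} (h : ‖lg b‖ ≤ L) (w w' : InfinitePlace K) :
    w (b : K) ≤ Real.exp (2 * ((Fintype.card (InfinitePlace K) + 1) * L)) * w' (b : K) := by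
  have hL : 0 ≤ L := (norm_nonneg _).trans h
  set ν := Real.log (nrm b) * (finrank ℚ K : ℝ)⁻¹ with hν
  have hne : ∀ w : InfinitePlace K, w ≠ w₀ → |w.mult * (Real.log (w (b:K)) - ν)| ≤ L := by
    intro w hw
    have := (norm_le_pi_norm (lg b) ⟨w, hw⟩).trans h
    rwa [lg_apply] at this
  have hsum : ∑ w : InfinitePlace K, w.mult * (Real.log (w (b:K)) - ν) = 0 := by
    simp_rw [mul_sub]
    rw [Finset.sum_sub_distrib, ← log_nrm hb, ← Finset.sum_mul, sum_mult_real, hν]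
    field_simp [finrank_ne (K := K)]
    ring
  have hall : ∀ w : InfinitePlace K,
      |w.mult * (Real.log (w (b:K)) - ν)| ≤ (Fintype.card (InfinitePlace K) + 1) * L := by
    intro w
    by_cases hw : w = w₀
    · rw [hw]
      rw [← Finset.add_sum_erase _ _ (Finset.mem_univ w₀)] at hsum
      rw [eq_neg_of_add_eq_zero_left hsum, abs_neg]
      refine (Finset.abs_sum_le_sum_abs _ _).trans ?_
      refine (Finset.sum_le_card_nsmul _ _ L fun w hw => hne w (Finset.ne_of_mem_erase hw)).trans ?_
      rw [nsmul_eq_mul]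
      refine mul_le_mul_of_nonneg_right ?_ hL
      have : (Finset.univ.erase (w₀ : InfinitePlace K)).card ≤ Fintype.card (InfinitePlace K) :=
        Finset.card_le_univ _
      have h' : ((Finset.univ.erase (w₀ : InfinitePlace K)).card : ℝ) ≤ Fintype.card (InfinitePlace K) := by
        exact_mod_cast this
      linarith
    · refine (hne w hw).trans ?_
      have : (0:ℝ) ≤ Fintype.card (InfinitePlace K) := by positivity
      nlinarith
  have hall' : ∀ w : InfinitePlace K,
      |Real.log (w (b:K)) - ν| ≤ (Fintype.card (InfinitePlace K) + 1) * L := by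
    intro w
    refine le_trans ?_ (hall w)
    rw [abs_mul, abs_of_nonneg (by positivity : (0:ℝ) ≤ w.mult)]
    exact le_mul_of_one_le_left (abs_nonneg _) (one_le_mult' w)
  rw [← Real.log_le_log_iff (place_pos hb w) (mul_pos (Real.exp_pos _) (place_pos hb w')),
    Real.log_mul (Real.exp_pos _).ne' (place_pos hb w').ne', Real.log_exp]
  have h1 := abs_le.1 (hall' w)
  have h2 := abs_le.1 (hall' w')
  linarith [h1.2, h2.1]

/-- The basis of the logarithmic space given by the fundamental units. -/
noncomputable def Bs : Basis (Fin (rank K)) ℝ (logSpace K) :=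
  (basisUnitLattice K).ofZLatticeBasis ℝ (unitLattice K)

/-- The coordinates of the logarithmic embedding in the basis of fundamental units. -/
noncomputable def crd (b : 𝓞 K) (i : Fin (rank K)) : ℝ := Bs.repr (lg b) i

lemma crd_unit {b : 𝓞 K} (hb : b ≠ 0) (m : Fin (rank K) → ℤ) (i : Fin (rank K)) :
    crd (b * ((∏ j, fundSystem K j ^ m j : (𝓞 K)ˣ) : 𝓞 K)) i = crd b i + m i := by
  have h : logEmbedding K (Additive.ofMul (∏ j, fundSystem K j ^ m j)) =
      ∑ j, (m j : ℝ) • (Bs (K := K)) j := by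
    rw [ofMul_prod, map_sum]
    refine Finset.sum_congr rfl fun j _ => ?_
    rw [ofMul_zpow, map_zsmul, logEmbedding_fundSystem, Bs, Basis.ofZLatticeBasis_apply,
      Int.cast_smul_eq_zsmul]
  rw [crd, lg_unit hb, h, map_add, Finsupp.add_apply, crd]
  congr 1
  rw [map_sum]
  simp [Finsupp.finsetSum_apply, Finsupp.single_apply]

/-- The tent function, whose integer translates sum to `1`. -/
noncomputable def tent (x : ℝ) : ℝ := max 0 (1 - |x|)

lemma tent_nonneg (x : ℝ) : 0 ≤ tent x := le_max_left _ _
lemma tent_le_one (x : ℝ) : tent x ≤ 1 := max_le zero_le_one (by linarith [abs_nonneg x])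
lemma tent_lip (x y : ℝ) : |tent x - tent y| ≤ |x - y| := by
  have h := abs_max_sub_max_le_max 0 (1 - |x|) 0 (1 - |y|)
  simp only [sub_self, abs_zero] at h
  refine h.trans (max_le (abs_nonneg _) ?_)
  rw [show 1 - |x| - (1 - |y|) = |y| - |x| by ring, abs_sub_comm x y]
  exact abs_abs_sub_abs_le _ _
lemma tent_ne {x : ℝ} (h : tent x ≠ 0) : |x| ≤ 1 := by
  by_contra h'
  apply h
  rw [tent, max_eq_left]; linarith

lemma hsum_eq {α : Type*} {f : α → ℝ} {a b : ℝ} (h : HasSum f a) (e : a = b) : HasSum f b := e ▸ h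

lemma tent_sum (x : ℝ) : HasSum (fun m : ℤ => tent (x + m)) 1 := by
  have h0 : ∀ m ∉ ({-⌊x⌋, -⌊x⌋ - 1} : Finset ℤ), tent (x + m) = 0 := by
    intro m hm
    simp only [Finset.mem_insert, Finset.mem_singleton, not_or] at hm
    rw [tent, max_eq_left]
    have h1 := Int.floor_le x
    have h2 := Int.lt_floor_add_one x
    rcases lt_or_ge m (-⌊x⌋ - 1) with h | h
    · have h3 : m ≤ -⌊x⌋ - 2 := by omega
      have h3' : (m : ℝ) ≤ -⌊x⌋ - 2 := by exact_mod_cast h3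
      have := neg_le_abs (x + m)
      linarith
    · have h3 : -⌊x⌋ + 1 ≤ m := by omega
      have h3' : -(⌊x⌋:ℝ) + 1 ≤ m := by exact_mod_cast h3
      have := le_abs_self (x + m)
      linarith
  refine hsum_eq (hasSum_sum_of_ne_finset_zero h0) ?_
  rw [Finset.sum_pair (by omega)]
  have h1 := Int.floor_le x
  have h2 := Int.lt_floor_add_one x
  push_cast
  rw [tent, tent, abs_of_nonneg (by linarith), abs_of_nonpos (by linarith), max_eq_right (by linarith),
    max_eq_right (by linarith)]
  ring

lemma tent_prod_sum {r : ℕ} (x : Fin r → ℝ) :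
    HasSum (fun m : Fin r → ℤ => ∏ i, tent (x i + m i)) 1 := by
  let T : Fin r → Finset ℤ := fun i => Finset.Icc (⌊-x i - 1⌋) (⌈- x i + 1⌉)
  have hT : ∀ i, ∀ m ∉ T i, tent (x i + m) = 0 := by
    intro i m hm
    by_contra h
    apply hm
    have := abs_le.1 (tent_ne h)
    simp only [T, Finset.mem_Icc]
    constructor
    · have : (⌊-x i - 1⌋ : ℝ) ≤ m := (Int.floor_le _).trans (by linarith)
      exact_mod_cast this
    · have : (m : ℝ) ≤ ⌈-x i + 1⌉ := le_trans (by linarith) (Int.le_ceil _)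
      exact_mod_cast this
  have h0 : ∀ m ∉ Fintype.piFinset T, ∏ i, tent (x i + m i) = 0 := by
    intro m hm
    rw [Fintype.mem_piFinset] at hm
    push Not at hm
    obtain ⟨i, hi⟩ := hm
    exact Finset.prod_eq_zero (Finset.mem_univ i) (hT i _ hi)
  refine hsum_eq (hasSum_sum_of_ne_finset_zero h0) ?_
  have hps := Finset.prod_univ_sum T (fun i (m : ℤ) => tent (x i + m))
  have hps' : ∏ i, ∑ m ∈ T i, tent (x i + m) = ∑ b ∈ Fintype.piFinset T, ∏ i, tent (x i + b i) := by
    convert hps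
  rw [← hps']
  refine Finset.prod_eq_one fun i _ => ?_
  exact (hasSum_sum_of_ne_finset_zero (hT i)).unique (tent_sum (x i))

/-- The product of tents of width `k` in the logarithmic coordinates; its translates by `k`-th
powers of the fundamental units sum to `1`. -/
noncomputable def vk (k : ℕ) (b : 𝓞 K) : ℝ := ∏ i, tent (crd b i / k)

lemma prod_lip {ι : Type*} (s : Finset ι) (f g : ι → ℝ) (hf : ∀ i, 0 ≤ f i ∧ f i ≤ 1)
    (hg : ∀ i, 0 ≤ g i ∧ g i ≤ 1) : |∏ i ∈ s, f i - ∏ i ∈ s, g i| ≤ ∑ i ∈ s, |f i - g i| := by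
  induction s using Finset.induction_on with
  | empty => simp
  | insert a s ha ih =>
    rw [Finset.prod_insert ha, Finset.prod_insert ha, Finset.sum_insert ha]
    have h1 : |∏ i ∈ s, f i| ≤ 1 := by
      rw [abs_of_nonneg (Finset.prod_nonneg fun i _ => (hf i).1)]
      exact Finset.prod_le_one (fun i _ => (hf i).1) fun i _ => (hf i).2
    have h2 : |g a| ≤ 1 := by rw [abs_of_nonneg (hg a).1]; exact (hg a).2
    calc |f a * ∏ i ∈ s, f i - g a * ∏ i ∈ s, g i|
        = |(f a - g a) * ∏ i ∈ s, f i + g a * (∏ i ∈ s, f i - ∏ i ∈ s, g i)| := by ring_nf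
      _ ≤ |f a - g a| * |∏ i ∈ s, f i| + |g a| * |∏ i ∈ s, f i - ∏ i ∈ s, g i| := by
        refine (abs_add_le _ _).trans ?_
        rw [abs_mul, abs_mul]
      _ ≤ |f a - g a| * 1 + 1 * ∑ i ∈ s, |f i - g i| := by gcongr
      _ = _ := by ring

lemma isWeight_vk {k : ℕ} (hk : k ≠ 0) : IsWeight (vk (K := K) k) where
  nonneg b := Finset.prod_nonneg fun i _ => tent_nonneg _
  le_one b := Finset.prod_le_one (fun i _ => tent_nonneg _) fun i _ => tent_le_one _
  two b hb := by simp only [vk, crd, lg_two hb]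
  comp := by
    set L : ℝ := ∑ i, k * ‖(Bs (K := K)) i‖
    have hL : 0 ≤ L := Finset.sum_nonneg fun i _ => by positivity
    refine ⟨Real.exp (2 * ((Fintype.card (InfinitePlace K) + 1) * L)),
      Real.one_le_exp (by positivity), fun b hb hv w w' => comp_of_lg hb ?_ w w'⟩
    rw [← (Bs (K := K)).sum_repr (lg b)]
    refine (norm_sum_le _ _).trans (Finset.sum_le_sum fun i _ => ?_)
    rw [norm_smul]
    refine mul_le_mul_of_nonneg_right ?_ (norm_nonneg _)
    have h1 := tent_ne (Finset.prod_ne_zero_iff.1 hv i (Finset.mem_univ i))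
    rwa [abs_div, div_le_one (by positivity), Nat.abs_cast] at h1
  lip := by
    set C : ℝ := ∑ i, ‖LinearMap.toContinuousLinearMap ((Bs (K := K)).coord i)‖ * 4
    refine ⟨C, Finset.sum_nonneg fun i _ => by positivity, fun b b' hb hb' δ h => ?_⟩
    refine (prod_lip _ _ _ (fun i => ⟨tent_nonneg _, tent_le_one _⟩)
      (fun i => ⟨tent_nonneg _, tent_le_one _⟩)).trans ?_
    rw [Finset.sum_mul]
    refine Finset.sum_le_sum fun i _ => (tent_lip _ _).trans ?_
    rw [← sub_div, abs_div, Nat.abs_cast]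
    have hk1 : (1:ℝ) ≤ k := by exact_mod_cast Nat.one_le_iff_ne_zero.2 hk
    refine (div_le_self (abs_nonneg _) hk1).trans ?_
    have h1 := (LinearMap.toContinuousLinearMap ((Bs (K := K)).coord i)).le_opNorm (lg b - lg b')
    have h2 : |crd b i - crd b' i| =
        ‖LinearMap.toContinuousLinearMap ((Bs (K := K)).coord i) (lg b - lg b')‖ := by
      simp [crd]
    rw [h2]
    refine h1.trans ?_
    rw [mul_assoc]
    exact mul_le_mul_of_nonneg_left (lg_sub_le hb hb' h) (norm_nonneg _)

/-- Units congruent to one modulo `m`. -/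
noncomputable def Um (m : Ideal (𝓞 K)) : Subgroup (𝓞 K)ˣ := (Units.map (Ideal.Quotient.mk m).toMonoidHom).ker

lemma mem_Um {m : Ideal (𝓞 K)} {u : (𝓞 K)ˣ} : u ∈ Um m ↔ (u : 𝓞 K) - 1 ∈ m := by
  rw [Um, MonoidHom.mem_ker, Units.ext_iff, ← Ideal.Quotient.eq_zero_iff_mem, map_sub, sub_eq_zero]
  simp

/-- The subgroup of units generated by `k`-th powers of the fundamental units. -/
noncomputable def Wk (K : Type*) [Field K] [NumberField K] (k : ℕ) : Subgroup (𝓞 K)ˣ where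
  carrier := {u | ∃ m : Fin (rank K) → ℤ, u = ∏ j, fundSystem K j ^ ((k : ℤ) * m j)}
  mul_mem' := by
    rintro _ _ ⟨m, rfl⟩ ⟨m', rfl⟩
    refine ⟨m + m', ?_⟩
    rw [← Finset.prod_mul_distrib]
    simp only [Pi.add_apply, mul_add, zpow_add]
  one_mem' := ⟨0, by simp⟩
  inv_mem' := by
    rintro _ ⟨m, rfl⟩
    refine ⟨-m, ?_⟩
    rw [← Finset.prod_inv_distrib]
    simp only [Pi.neg_apply, mul_neg, zpow_neg]

lemma Wk_finite {k : ℕ} (hk : k ≠ 0) : Finite ((𝓞 K)ˣ ⧸ Wk K k) := by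
  let f : torsion K × (Fin (rank K) → Fin k) → (𝓞 K)ˣ ⧸ Wk K k := fun p =>
    QuotientGroup.mk ((p.1 : (𝓞 K)ˣ) * ∏ j, fundSystem K j ^ ((p.2 j : ℕ) : ℤ))
  refine Finite.of_surjective f ?_
  intro q
  obtain ⟨u, rfl⟩ := QuotientGroup.mk_surjective q
  obtain ⟨⟨z, m⟩, h, -⟩ := exist_unique_eq_mul_prod K u
  have hkz : (0:ℤ) < k := by exact_mod_cast Nat.pos_of_ne_zero hk
  refine ⟨⟨z, fun j => ⟨(m j % k).toNat, ?_⟩⟩, ?_⟩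
  · have := Int.emod_lt_of_pos (m j) hkz
    have := Int.emod_nonneg (m j) hkz.ne'
    omega
  · simp only [f]
    rw [QuotientGroup.eq]
    refine ⟨fun j => m j / k, ?_⟩
    rw [h]
    simp only
    rw [mul_inv, mul_mul_mul_comm, inv_mul_cancel, one_mul, ← Finset.prod_inv_distrib,
      ← Finset.prod_mul_distrib]
    refine Finset.prod_congr rfl fun j _ => ?_
    rw [← zpow_neg, ← zpow_add]
    congr 1
    have h1 := Int.emod_nonneg (m j) hkz.ne'
    have h2 := Int.emod_add_mul_ediv (m j) k
    rw [Int.toNat_of_nonneg h1]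
    linarith

lemma hasSum_Wk {k : ℕ} (hk : k ≠ 0) {b : 𝓞 K} (hb : b ≠ 0) :
    HasSum (fun u : Wk K k => vk k (b * ((u : (𝓞 K)ˣ) : 𝓞 K))) 1 := by
  let g : (Fin (rank K) → ℤ) → Wk K k := fun m => ⟨∏ j, fundSystem K j ^ ((k : ℤ) * m j), m, rfl⟩
  have hg : Function.Bijective g := by
    constructor
    · intro m m' h
      have h1 := congrArg Subtype.val h
      ext i
      have h2 := crd_unit (K := K) one_ne_zero (fun j => (k : ℤ) * m j) i
      have h3 := crd_unit (K := K) one_ne_zero (fun j => (k : ℤ) * m' j) i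
      simp only [g] at h1
      rw [h1, h3] at h2
      have h4 : ((k * m' i : ℤ) : ℝ) = (k * m i : ℤ) := by linarith
      have h5 : (k * m' i : ℤ) = k * m i := by exact_mod_cast h4
      exact (mul_left_cancel₀ (by exact_mod_cast hk) h5).symm
    · rintro ⟨_, m, rfl⟩; exact ⟨m, rfl⟩
  rw [← (Equiv.ofBijective g hg).hasSum_iff]
  convert tent_prod_sum fun i => crd b i / k using 2 with m
  simp only [Function.comp, vk, Equiv.ofBijective_apply, g]
  refine Finset.prod_congr rfl fun i _ => ?_
  rw [crd_unit hb, add_div]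
  have : (k:ℝ) ≠ 0 := by exact_mod_cast hk
  congr 2
  push_cast
  field_simp

/-- A weight whose sum over the associates of `b` by units congruent to `1` modulo `m` is a
constant `ι`. With `k` the order of `(𝓞 K / m)ˣ`, the `k`-th powers of the fundamental units lie in this
group of units with finite index. -/
lemma exists_weight (m : Ideal (𝓞 K)) (hm : m ≠ ⊥) : ∃ (v : 𝓞 K → ℝ) (ι : ℝ), IsWeight v ∧ 0 < ι ∧
    ∀ b : 𝓞 K, b ≠ 0 → HasSum (fun u : Um m => v (b * ((u : (𝓞 K)ˣ) : 𝓞 K))) ι := by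
  have : Finite (𝓞 K ⧸ m) := Ideal.finiteQuotientOfFreeOfNeBot m hm
  set k := Nat.card (𝓞 K ⧸ m)ˣ with hkdef
  have hk : k ≠ 0 := Nat.card_pos.ne'
  have hle : Wk K k ≤ Um m := by
    rintro _ ⟨f, rfl⟩
    refine Subgroup.prod_mem _ fun j _ => ?_
    rw [zpow_mul]
    refine Subgroup.zpow_mem _ ?_ _
    rw [zpow_natCast, Um, MonoidHom.mem_ker, map_pow, hkdef, pow_card_eq_one']
  have := Wk_finite (K := K) hk
  have : (Wk K k).FiniteIndex := Subgroup.finiteIndex_of_finite_quotient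
  have : Finite (Um m ⧸ (Wk K k).subgroupOf (Um m)) := inferInstance
  have := Fintype.ofFinite (Um m ⧸ (Wk K k).subgroupOf (Um m))
  refine ⟨vk k, Nat.card (Um m ⧸ (Wk K k).subgroupOf (Um m)), isWeight_vk hk, ?_, ?_⟩
  · exact_mod_cast Nat.card_pos
  intro b hb
  set W' := (Wk K k).subgroupOf (Um m)
  have key : ∀ g : Um m, HasSum (fun w : W' => vk k (b * (((g * w : Um m) : (𝓞 K)ˣ) : 𝓞 K))) 1 := by
    intro g
    have h1 := hasSum_Wk hk (b := b * ((g : (𝓞 K)ˣ) : 𝓞 K)) (mul_ne_zero hb (Units.ne_zero _))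
    rw [← (Subgroup.subgroupOfEquivOfLe hle).toEquiv.hasSum_iff] at h1
    convert h1 using 2 with w
    simp [mul_assoc]
  let g : (Um m ⧸ W') × W' → Um m := fun p => p.1.out * p.2
  have hg : Function.Bijective g := by
    constructor
    · rintro ⟨q, w⟩ ⟨q', w'⟩ h
      simp only [g] at h
      have hq : q = q' := by
        have h1 : (QuotientGroup.mk (q.out * (w : Um m)) : Um m ⧸ W') = QuotientGroup.mk (q'.out * (w' : Um m)) := by
          rw [h]
        rw [QuotientGroup.mk_mul_of_mem _ w.2, QuotientGroup.mk_mul_of_mem _ w'.2] at h1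
        rwa [QuotientGroup.out_eq', QuotientGroup.out_eq'] at h1
      subst hq
      simpa using h
    · intro u
      have h1 : (QuotientGroup.mk u : Um m ⧸ W').out⁻¹ * u ∈ W' := by
        rw [← QuotientGroup.eq, QuotientGroup.out_eq']
      exact ⟨⟨QuotientGroup.mk u, ⟨_, h1⟩⟩, by simp [g]⟩
  rw [← (Equiv.ofBijective g hg).hasSum_iff]
  have hs := (summable_prod_of_nonneg (f := ((fun u : Um m => vk k (b * ((u : (𝓞 K)ˣ) : 𝓞 K))) ∘
      (Equiv.ofBijective g hg))) (fun x => (isWeight_vk hk).nonneg _)).2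
      ⟨fun q => (key q.out).summable, (hasSum_fintype _).summable⟩
  refine hsum_eq hs.hasSum ?_
  rw [hs.tsum_prod' fun q => (key q.out).summable]
  have h3 : ∀ q : Um m ⧸ W', ∑' w : W', ((fun u : Um m => vk k (b * ((u : (𝓞 K)ˣ) : 𝓞 K))) ∘
      (Equiv.ofBijective g hg)) (q, w) = 1 := fun q => (key q.out).tsum_eq
  simp_rw [h3]
  rw [tsum_fintype, Finset.sum_const, nsmul_eq_mul, mul_one, Nat.card_eq_fintype_card]
  rfl

end

end KD

namespace KD

section
open NumberField NumberField.InfinitePlace Module Filter Topology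
open scoped Classical
variable {K : Type*} [Field K] [NumberField K]

/-! ### Ray classes -/

/-- Ideals coprime to `m`. -/
def Xm (m : Ideal (𝓞 K)) : Submonoid (Ideal (𝓞 K)) where
  carrier := {I | I ⊔ m = ⊤}
  mul_mem' := by
    intro I J hI hJ
    have h1 : IsCoprime I m := Ideal.isCoprime_iff_sup_eq.2 hI
    have h2 : IsCoprime J m := Ideal.isCoprime_iff_sup_eq.2 hJ
    exact Ideal.isCoprime_iff_sup_eq.1 (h1.mul_left h2)
  one_mem' := by simp

lemma mem_Xm {m I : Ideal (𝓞 K)} : I ∈ Xm m ↔ I ⊔ m = ⊤ := Iff.rfl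

lemma mul_mem_Xm {m I J : Ideal (𝓞 K)} : I * J ∈ Xm m ↔ I ∈ Xm m ∧ J ∈ Xm m := by
  refine ⟨fun h => ?_, fun h => mul_mem h.1 h.2⟩
  rw [mem_Xm, ← Ideal.isCoprime_iff_sup_eq] at h
  simp only [mem_Xm, ← Ideal.isCoprime_iff_sup_eq]
  exact ⟨h.of_mul_left_left, h.of_mul_left_right⟩

lemma Xm_ne_bot {m I : Ideal (𝓞 K)} (hm : m ≠ ⊤) (h : I ∈ Xm m) : I ≠ ⊥ := by
  rintro rfl
  rw [mem_Xm, bot_sup_eq] at h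
  exact hm h

lemma span_mem_Xm {m : Ideal (𝓞 K)} {a b : 𝓞 K} (ha : Ideal.span {a} ∈ Xm m) (h : a - b ∈ m) :
    Ideal.span {b} ∈ Xm m := by
  rw [mem_Xm, Ideal.eq_top_iff_one] at *
  obtain ⟨x, hx, y, hy, hxy⟩ := Submodule.mem_sup.1 ha
  obtain ⟨c, rfl⟩ := Ideal.mem_span_singleton'.1 hx
  refine Submodule.mem_sup.2 ⟨c * b, Ideal.mem_span_singleton'.2 ⟨c, rfl⟩, c * (a - b) + y,
    m.add_mem (m.mul_mem_left _ h) hy, ?_⟩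
  rw [← hxy]; ring

lemma cancel_mod {m : Ideal (𝓞 K)} {a x : 𝓞 K} (ha : Ideal.span {a} ∈ Xm m) (h : a * x ∈ m) : x ∈ m := by
  rw [mem_Xm, Ideal.eq_top_iff_one] at ha
  obtain ⟨y, hy, z, hz, hyz⟩ := Submodule.mem_sup.1 ha
  obtain ⟨c, rfl⟩ := Ideal.mem_span_singleton'.1 hy
  have : x = c * (a * x) + x * z := by
    calc x = (c * a + z) * x := by rw [hyz, one_mul]
      _ = _ := by ring
  rw [this]
  exact m.add_mem (m.mul_mem_left _ h) (m.mul_mem_left _ hz)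

lemma one_span_mem {m : Ideal (𝓞 K)} {a : 𝓞 K} (h : a - 1 ∈ m) : Ideal.span {a} ∈ Xm m :=
  span_mem_Xm (a := 1) (by simp [mem_Xm, Ideal.one_eq_top]) (by rw [← neg_sub]; exact m.neg_mem h)

/-- Ray equivalence of ideals coprime to `m`, without conditions at the infinite places: `(a) I = (b) J`
with `a ≡ b mod m`, both coprime to `m`. -/
def rayCon (m : Ideal (𝓞 K)) : Con (Xm m) where
  r I J := ∃ a b : 𝓞 K, Ideal.span {a} ∈ Xm m ∧ a - b ∈ m ∧
    Ideal.span {a} * (I : Ideal (𝓞 K)) = Ideal.span {b} * J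
  iseqv := by
    refine ⟨fun I => ⟨1, 1, by simp [mem_Xm, Ideal.one_eq_top], by simp, rfl⟩, ?_, ?_⟩
    · rintro I J ⟨a, b, ha, hab, h⟩
      exact ⟨b, a, span_mem_Xm ha hab, by rw [← neg_sub]; exact m.neg_mem hab, h.symm⟩
    · rintro I J L ⟨a, b, ha, hab, h⟩ ⟨c, d, hc, hcd, h'⟩
      refine ⟨a * c, b * d, ?_, ?_, ?_⟩
      · rw [← Ideal.span_singleton_mul_span_singleton]; exact mul_mem ha hc
      · rw [show a * c - b * d = (a - b) * c + b * (c - d) by ring]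
        exact m.add_mem (m.mul_mem_right _ hab) (m.mul_mem_left _ hcd)
      · rw [← Ideal.span_singleton_mul_span_singleton, ← Ideal.span_singleton_mul_span_singleton,
          mul_right_comm, h, mul_right_comm, mul_assoc, h', mul_assoc]
  mul' := by
    rintro I J I' J' ⟨a, b, ha, hab, h⟩ ⟨c, d, hc, hcd, h'⟩
    refine ⟨a * c, b * d, ?_, ?_, ?_⟩
    · rw [← Ideal.span_singleton_mul_span_singleton]; exact mul_mem ha hc
    · rw [show a * c - b * d = (a - b) * c + b * (c - d) by ring]
      exact m.add_mem (m.mul_mem_right _ hab) (m.mul_mem_left _ hcd)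
    · rw [← Ideal.span_singleton_mul_span_singleton, ← Ideal.span_singleton_mul_span_singleton,
        Submonoid.coe_mul, Submonoid.coe_mul, mul_mul_mul_comm, h, h', mul_mul_mul_comm]

/-- The ray class group modulo `m`. -/
def Gm (m : Ideal (𝓞 K)) : Type _ := (rayCon m).Quotient

noncomputable instance (m : Ideal (𝓞 K)) : CommMonoid (Gm m) := inferInstanceAs (CommMonoid (rayCon m).Quotient)

/-- The ray class of an ideal coprime to `m`. -/
def cl (m : Ideal (𝓞 K)) : Xm m →* Gm m := (rayCon m).mk'

lemma cl_eq_iff {m : Ideal (𝓞 K)} {I J : Xm m} : cl m I = cl m J ↔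
    ∃ a b : 𝓞 K, Ideal.span {a} ∈ Xm m ∧ a - b ∈ m ∧
    Ideal.span {a} * (I : Ideal (𝓞 K)) = Ideal.span {b} * J := (rayCon m).eq

lemma cl_surj (m : Ideal (𝓞 K)) : Function.Surjective (cl m) := Con.mk'_surjective

lemma cl_span_eq {m : Ideal (𝓞 K)} {a b : 𝓞 K} (ha : Ideal.span {a} ∈ Xm m) (h : a - b ∈ m)
    (hb : Ideal.span {b} ∈ Xm m) : cl m ⟨_, ha⟩ = cl m ⟨_, hb⟩ := by
  rw [cl_eq_iff]
  exact ⟨b, a, hb, by rw [← neg_sub]; exact m.neg_mem h, mul_comm _ _⟩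

lemma cl_span_one {m : Ideal (𝓞 K)} {a : 𝓞 K} (h : a - 1 ∈ m) (ha : Ideal.span {a} ∈ Xm m) :
    cl m ⟨_, ha⟩ = 1 := by
  have h1 : Ideal.span {(1 : 𝓞 K)} ∈ Xm m := by simp [mem_Xm, Ideal.one_eq_top]
  rw [cl_span_eq ha h h1, ← map_one (cl m)]
  congr 1
  ext1
  simp [Ideal.one_eq_top]

lemma exists_cofactor {m : Ideal (𝓞 K)} {I : Ideal (𝓞 K)} (hI : I ∈ Xm m) :
    ∃ (a : 𝓞 K) (J : Ideal (𝓞 K)), a ∈ I ∧ a - 1 ∈ m ∧ J ∈ Xm m ∧ I * J = Ideal.span {a} := by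
  rw [mem_Xm, Ideal.eq_top_iff_one] at hI
  obtain ⟨a, ha, y, hy, hay⟩ := Submodule.mem_sup.1 hI
  have h1 : a - 1 ∈ m := by rw [← hay]; simpa using m.neg_mem hy
  obtain ⟨J, hJ⟩ := Ideal.dvd_iff_le.2 ((Ideal.span_singleton_le_iff_mem _).2 ha)
  refine ⟨a, J, ha, h1, ?_, hJ.symm⟩
  have := one_span_mem h1
  rw [hJ] at this
  exact (mul_mem_Xm.1 this).2

lemma exists_inv (m : Ideal (𝓞 K)) (g : Gm m) : ∃ (J : Xm m) (x : 𝓞 K), cl m J * g = 1 ∧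
    x ∈ (J : Ideal (𝓞 K)) ∧ x - 1 ∈ m := by
  obtain ⟨I, rfl⟩ := cl_surj m g
  obtain ⟨a, J, ha, h1, hJ, h⟩ := exists_cofactor I.2
  obtain ⟨x, hx, y, hy, hay⟩ := Submodule.mem_sup.1 ((Ideal.eq_top_iff_one _).1 (mem_Xm.1 hJ))
  refine ⟨⟨J, hJ⟩, x, ?_, hx, by rw [← hay]; simpa using m.neg_mem hy⟩
  rw [← map_mul]
  have : (⟨J, hJ⟩ * I : Xm m) = ⟨Ideal.span {a}, one_span_mem h1⟩ := by
    ext1; simp [← h, mul_comm]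
  rw [this]
  exact cl_span_one h1 _

noncomputable instance (m : Ideal (𝓞 K)) : CommGroup (Gm m) :=
  commGroupOfIsUnit fun g => by
    obtain ⟨J, _, h, _⟩ := exists_inv m g
    exact IsUnit.of_mul_eq_one_right _ h

/-- A ray class is determined by an ideal class and a residue class modulo `m`. -/
lemma Gm_finite {m : Ideal (𝓞 K)} (hm : m ≠ ⊥) (hm' : m ≠ ⊤) : Finite (Gm m) := by
  have : Finite (𝓞 K ⧸ m) := Ideal.finiteQuotientOfFreeOfNeBot m hm
  let mk0 : Xm m → ClassGroup (𝓞 K) := fun I =>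
    ClassGroup.mk0 ⟨I, mem_nonZeroDivisors_of_ne_zero (Xm_ne_bot hm' I.2)⟩
  have mk0_mul : ∀ I J, mk0 (I * J) = mk0 I * mk0 J := fun I J => by
    simp only [mk0]; rw [← map_mul]; rfl
  let f : ClassGroup (𝓞 K) × (𝓞 K ⧸ m) → Gm m := fun p =>
    (if h : ∃ I : Xm m, mk0 I = p.1 then cl m h.choose else 1) *
    (if h : ∃ x : 𝓞 K, ∃ hx : Ideal.span {x} ∈ Xm m, Ideal.Quotient.mk m x = p.2 then
      cl m ⟨_, h.choose_spec.choose⟩ else 1)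
  refine Finite.of_surjective f ?_
  intro g
  obtain ⟨I, rfl⟩ := cl_surj m g
  have hex : ∃ I' : Xm m, mk0 I' = mk0 I := ⟨I, rfl⟩
  set I' := hex.choose with hI'
  have hII' : mk0 I' = mk0 I := hex.choose_spec
  obtain ⟨a, J, ha, h1, hJ, h⟩ := exists_cofactor I'.2
  have hp : mk0 (I * ⟨J, hJ⟩) = 1 := by
    rw [mk0_mul, ← hII', ← mk0_mul]
    simp only [mk0]
    rw [ClassGroup.mk0_eq_one_iff]
    simp only [Submonoid.coe_mul, h]
    exact ⟨a, rfl⟩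
  simp only [mk0] at hp
  rw [ClassGroup.mk0_eq_one_iff] at hp
  obtain ⟨x, hx⟩ := hp.principal
  have hx' : (I : Ideal (𝓞 K)) * J = Ideal.span {x} := hx
  have hxm : Ideal.span {x} ∈ Xm m := by rw [← hx']; exact mul_mem I.2 hJ
  have hex2 : ∃ y : 𝓞 K, ∃ hy : Ideal.span {y} ∈ Xm m, Ideal.Quotient.mk m y = Ideal.Quotient.mk m x :=
    ⟨x, hxm, rfl⟩
  refine ⟨(mk0 I, Ideal.Quotient.mk m x), ?_⟩
  simp only [f]
  rw [dif_pos hex, dif_pos hex2]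
  have h2 : cl m ⟨_, hex2.choose_spec.choose⟩ = cl m ⟨_, hxm⟩ :=
    cl_span_eq _ (Ideal.Quotient.eq.1 hex2.choose_spec.choose_spec) _
  rw [h2]
  have h3 : cl m I' * cl m ⟨J, hJ⟩ = 1 := by
    rw [← map_mul]
    have : (I' * ⟨J, hJ⟩ : Xm m) = ⟨Ideal.span {a}, one_span_mem h1⟩ := by
      ext1; simp [← h]
    rw [this]
    exact cl_span_one h1 _
  have h4 : cl m I * cl m ⟨J, hJ⟩ = cl m ⟨_, hxm⟩ := by
    rw [← map_mul]; congr 1; ext1; exact hx'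
  rw [← h4, mul_comm (cl m I), ← mul_assoc, ← hI', h3, one_mul]

/-! ### Partial zeta functions -/

/-- The Dirichlet series over ideals with coefficients `f`. -/
noncomputable def DS (f : Ideal (𝓞 K) → ℂ) (s : ℂ) : ℂ :=
  ∑' I : Ideal (𝓞 K), f I * (Ideal.absNorm I : ℂ) ^ (-s)

/-- The indicator function of a ray class. -/
noncomputable def ind (m : Ideal (𝓞 K)) (g : Gm m) (I : Ideal (𝓞 K)) : ℂ :=
  if h : I ∈ Xm m then (if cl m ⟨I, h⟩ = g then 1 else 0) else 0

/-- If `J` represents the inverse of the class `g`, every ideal `I` of class `g` has `I J` generated by an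
element congruent to `1` modulo `m`. -/
lemma ray_gen {m : Ideal (𝓞 K)} {J : Xm m} {g : Gm m} (hJ : cl m J * g = 1) {I : Xm m}
    (hI : cl m I = g) (hm' : m ≠ ⊤) :
    ∃ b : 𝓞 K, b - 1 ∈ m ∧ Ideal.span {b} = (I : Ideal (𝓞 K)) * J := by
  rw [← hI, ← map_mul, ← map_one (cl m), cl_eq_iff] at hJ
  obtain ⟨a, b, ha, hab, h⟩ := hJ
  rw [Submonoid.coe_one, mul_one] at h
  have hb : b ∈ Ideal.span {a} * (((J * I : Xm m) : Ideal (𝓞 K))) := by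
    rw [h]; exact Ideal.mem_span_singleton_self b
  obtain ⟨c, hc, rfl⟩ := Ideal.mem_span_singleton_mul.1 hb
  refine ⟨c, ?_, ?_⟩
  · refine cancel_mod ha ?_
    rw [mul_sub, mul_one, ← neg_sub]
    exact m.neg_mem hab
  · rw [← Ideal.span_singleton_mul_span_singleton] at h
    have ha0 : Ideal.span {a} ≠ 0 := Xm_ne_bot hm' ha
    have := mul_left_cancel₀ ha0 h
    rw [← this, Submonoid.coe_mul, mul_comm]

end

end KD

/-! ### Partial zeta functions as weighted sums -/

namespace KD

section
open NumberField NumberField.InfinitePlace Module Filter Topology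
open scoped Classical
variable {K : Type*} [Field K] [NumberField K]

lemma hasSum_cgr {α : Type*} {f g : α → ℂ} {a : ℂ} (h : ∀ x, f x = g x) (hg : HasSum g a) : HasSum f a := by
  rwa [funext h]

/-- The partial zeta function of the class `g` as a weighted sum: the ideals `I` of class `g`
correspond to the generators `b ∈ x + J m` of `I J`, taken up to units congruent to `1` modulo `m`, and
each such orbit has total weight `ι`. -/
lemma partial_zeta {m : Ideal (𝓞 K)} (hm' : m ≠ ⊤) {v : 𝓞 K → ℝ} {ι : ℝ} (hv : IsWeight v)
    (hsum : ∀ b : 𝓞 K, b ≠ 0 → HasSum (fun u : Um m => v (b * ((u : (𝓞 K)ˣ) : 𝓞 K))) ι)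
    {J : Xm m} {g : Gm m} (hJ : cl m J * g = 1) {x : 𝓞 K} (hxJ : x ∈ (J : Ideal (𝓞 K)))
    (hx1 : x - 1 ∈ m) {s : ℂ} (hs : 1 < s.re) :
    HasSum (fun I : Ideal (𝓞 K) => ((ι : ℂ) * (Ideal.absNorm (J : Ideal (𝓞 K)) : ℂ) ^ (-s)) *
      (ind m g I * (Ideal.absNorm I : ℂ) ^ (-s))) (S v (J * m) x s) := by
  let Ig := {I : Ideal (𝓞 K) | ∃ h : I ∈ Xm m, cl m ⟨I, h⟩ = g}
  have hgen : ∀ I : Ig, ∃ b : 𝓞 K, b - 1 ∈ m ∧ Ideal.span {b} = (I : Ideal (𝓞 K)) * J := by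
    intro I
    obtain ⟨h, hI⟩ := I.2
    obtain ⟨b, hb, hb'⟩ := ray_gen (I := ⟨I.1, h⟩) hJ hI hm'
    exact ⟨b, hb, hb'⟩
  choose b hb1 hbI using hgen
  have hb0 : ∀ I, b I ≠ 0 := by
    intro I h
    refine Xm_ne_bot hm' (one_span_mem (hb1 I)) ?_
    rw [h]; simp
  have hinf : (J : Ideal (𝓞 K)) * m = (J : Ideal (𝓞 K)) ⊓ m :=
    Ideal.mul_eq_inf_of_coprime J.2
  have hmem : ∀ (I : Ig) (u : Um m), b I * ((u : (𝓞 K)ˣ) : 𝓞 K) - x ∈ (J : Ideal (𝓞 K)) * m := by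
    intro I u
    rw [hinf]
    refine ⟨?_, ?_⟩
    · refine Ideal.sub_mem _ (Ideal.mul_mem_right _ _ ?_) hxJ
      have : b I ∈ Ideal.span {b I} := Ideal.mem_span_singleton_self _
      rw [hbI] at this
      exact Ideal.mul_le_right (I := (I : Ideal (𝓞 K))) (J := (J : Ideal (𝓞 K))) this
    · have := mem_Um.1 u.2
      rw [show b I * ((u : (𝓞 K)ˣ) : 𝓞 K) - x = b I * (((u : (𝓞 K)ˣ) : 𝓞 K) - 1) + (b I - 1) - (x - 1) by ring]
      exact m.sub_mem (m.add_mem (m.mul_mem_left _ this) (hb1 I)) hx1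
  let F : Ig × Um m → ((J : Ideal (𝓞 K)) * m : Ideal (𝓞 K)) := fun p => ⟨_, hmem p.1 p.2⟩
  have hJ0 : (J : Ideal (𝓞 K)) ≠ 0 := Xm_ne_bot hm' J.2
  have hF : Function.Bijective F := by
    constructor
    · rintro ⟨I, u⟩ ⟨I', u'⟩ h
      have h1 : b I * ((u : (𝓞 K)ˣ) : 𝓞 K) = b I' * ((u' : (𝓞 K)ˣ) : 𝓞 K) :=
        sub_left_injective (congrArg Subtype.val h)
      have h2 : Ideal.span {b I} = Ideal.span {b I'} := by
        have := congrArg (fun z => Ideal.span {z}) h1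
        simp only [Ideal.span_singleton_mul_right_unit (Units.isUnit _)] at this
        exact this
      rw [hbI, hbI] at h2
      have h3 : I = I' := Subtype.ext (mul_right_cancel₀ hJ0 h2)
      subst h3
      have h4 := mul_left_cancel₀ (hb0 I) h1
      have h5 : u = u' := Subtype.ext (Units.ext h4)
      rw [h5]
    · rintro ⟨c, hc⟩
      rw [hinf] at hc
      have hd1 : (x + c) - 1 ∈ m := by
        rw [show x + c - 1 = (x - 1) + c by ring]; exact m.add_mem hx1 hc.2
      obtain ⟨I, hI⟩ := Ideal.dvd_iff_le.2 ((Ideal.span_singleton_le_iff_mem _).2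
        ((J : Ideal (𝓞 K)).add_mem hxJ hc.1))
      have hX := one_span_mem hd1
      have hIX : I ∈ Xm m := by
        rw [hI] at hX; exact (mul_mem_Xm.1 hX).2
      have hIg : cl m ⟨I, hIX⟩ = g := by
        have h1 : cl m J * cl m ⟨I, hIX⟩ = 1 := by
          rw [← map_mul, ← cl_span_one hd1 hX]
          congr 1; ext1; exact hI.symm
        exact mul_left_cancel (h1.trans hJ.symm)
      let I' : Ig := ⟨I, hIX, hIg⟩
      have h2 : Associated (b I') (x + c) := by
        rw [← Ideal.span_singleton_eq_span_singleton, hbI, hI, mul_comm]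
      obtain ⟨u, hu⟩ := h2
      have hu' : u ∈ Um m := by
        rw [mem_Um]
        refine cancel_mod (one_span_mem (hb1 I')) ?_
        rw [mul_sub, hu, mul_one, show x + c - b I' = (x + c - 1) - (b I' - 1) by ring]
        exact m.sub_mem hd1 (hb1 I')
      refine ⟨⟨I', ⟨u, hu'⟩⟩, ?_⟩
      ext1
      simp only [F, hu]; ring
  have hS : HasSum (fun c : ((J : Ideal (𝓞 K)) * m : Ideal (𝓞 K)) => H v s (x + c)) (S v (J * m) x s) :=
    (summable_S hv hs _ x).of_norm.hasSum
  rw [← (Equiv.ofBijective F hF).hasSum_iff] at hS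
  have hfib := hS.prod_fiberwise (g := fun I : Ig => (ι : ℂ) * (nrm (b I) : ℂ) ^ (-s)) (by
    intro I
    have h1 := hsum (b I) (hb0 I)
    have h2 : HasSum (fun u : Um m => ((v (b I * ((u : (𝓞 K)ˣ) : 𝓞 K)) : ℝ) : ℂ)) ι := by
      exact_mod_cast h1
    have h3 := h2.mul_right ((nrm (b I) : ℂ) ^ (-s))
    refine hasSum_cgr (fun u => ?_) h3
    change H v s (x + (b I * ((u : (𝓞 K)ˣ) : 𝓞 K) - x)) = _
    rw [H]
    rw [show x + (b I * ((u : (𝓞 K)ˣ) : 𝓞 K) - x) = b I * ((u : (𝓞 K)ˣ) : 𝓞 K) by ring, nrm_mul]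
    have : nrm ((u : (𝓞 K)ˣ) : 𝓞 K) = 1 := by
      rw [nrm, Ideal.span_singleton_eq_top.2 (Units.isUnit _), Ideal.absNorm_top]
    rw [this, mul_one])
  have h4 : (fun I : Ideal (𝓞 K) => ((ι : ℂ) * (Ideal.absNorm (J : Ideal (𝓞 K)) : ℂ) ^ (-s)) *
      (ind m g I * (Ideal.absNorm I : ℂ) ^ (-s))) = Ig.indicator (fun I : Ideal (𝓞 K) =>
        ((ι : ℂ) * (Ideal.absNorm (J : Ideal (𝓞 K)) : ℂ) ^ (-s)) * (Ideal.absNorm I : ℂ) ^ (-s)) := by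
    ext I
    by_cases hI : I ∈ Ig
    · rw [Set.indicator_of_mem hI]
      obtain ⟨h, hI⟩ := hI
      rw [ind, dif_pos h, if_pos hI, one_mul]
    · rw [Set.indicator_of_notMem hI]
      have : ind m g I = 0 := by
        rw [ind]; split_ifs with h h' <;> simp
        exact hI ⟨h, h'⟩
      rw [this]; simp
  rw [h4, ← hasSum_subtype_iff_indicator]
  refine hasSum_cgr (fun I => ?_) hfib
  simp only [Function.comp]
  rw [nrm, hbI, map_mul, Nat.cast_mul, Complex.natCast_mul_natCast_cpow]
  ring

lemma summable_ind {m : Ideal (𝓞 K)} (hm : m ≠ ⊥) (hm' : m ≠ ⊤) (g : Gm m) {s : ℂ} (hs : 1 < s.re) :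
    Summable fun I : Ideal (𝓞 K) => ind m g I * (Ideal.absNorm I : ℂ) ^ (-s) := by
  obtain ⟨v, ι, hv, hι, hsum⟩ := exists_weight m hm
  obtain ⟨J, x, hJ, hxJ, hx1⟩ := exists_inv m g
  have h := partial_zeta hm' hv hsum hJ hxJ hx1 hs
  refine (summable_mul_left_iff ?_).1 h.summable
  have hJ0 : Ideal.absNorm (J : Ideal (𝓞 K)) ≠ 0 := by
    rw [Ne, Ideal.absNorm_eq_zero_iff]; exact Xm_ne_bot hm' J.2
  refine mul_ne_zero (by exact_mod_cast hι.ne') ?_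
  rw [Complex.cpow_ne_zero_iff]; left; exact_mod_cast hJ0

/-- All ray classes have the same polar part `f`, which has at most a simple pole. -/
lemma ind_eqA {m : Ideal (𝓞 K)} (hm : m ≠ ⊥) (hm' : m ≠ ⊤) : ∃ f : ℂ → ℂ,
    EqA (fun s => (s - 1) * f s) 0 ∧ ∀ g : Gm m, EqA (DS (ind m g)) f := by
  obtain ⟨v, ι, hv, hι, hsum⟩ := exists_weight m hm
  have hιc : (ι : ℂ) ≠ 0 := by exact_mod_cast hι.ne'
  refine ⟨fun s => ((ι : ℂ)⁻¹ * (Ideal.absNorm m : ℂ)⁻¹) * SA v s, ?_, ?_⟩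
  · have := (SA_pole hv).mul_left (c := fun _ => ((ι : ℂ)⁻¹ * (Ideal.absNorm m : ℂ)⁻¹)) analyticAt_const
    refine this.congr (fun s _ => by ring) (fun s _ => by simp)
  intro g
  obtain ⟨J, x, hJ, hxJ, hx1⟩ := exists_inv m g
  have hJb : (J : Ideal (𝓞 K)) ≠ ⊥ := Xm_ne_bot hm' J.2
  have hJ0 : Ideal.absNorm (J : Ideal (𝓞 K)) ≠ 0 := by
    rw [Ne, Ideal.absNorm_eq_zero_iff]; exact hJb
  have hJc : (Ideal.absNorm (J : Ideal (𝓞 K)) : ℂ) ≠ 0 := by exact_mod_cast hJ0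
  have hmul : (J : Ideal (𝓞 K)) * m ≠ ⊥ := mul_ne_zero hJb hm
  have h := (tS_eqA hv hmul x hJ0).mul_left (c := fun _ => (ι : ℂ)⁻¹) analyticAt_const
  refine h.congr (fun s hs => ?_) (fun s hs => ?_)
  · have h1 := (partial_zeta hm' hv hsum hJ hxJ hx1 hs).tsum_eq
    rw [tsum_mul_left] at h1
    rw [← h1, DS, Complex.cpow_neg]
    have : (Ideal.absNorm (J : Ideal (𝓞 K)) : ℂ) ^ s ≠ 0 := by
      rw [Complex.cpow_ne_zero_iff]; left; exact hJc
    field_simp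
  · rw [map_mul]; push_cast; field_simp

end

end KD

namespace KD

section
open NumberField NumberField.InfinitePlace Module Filter Topology
open scoped Classical
variable {K : Type*} [Field K] [NumberField K]

/-! ### The logarithmic derivative of an abstract `L`-function -/

/-- Prime ideals of the ring of integers. -/
abbrev PI (K : Type*) [Field K] [NumberField K] := IsDedekindDomain.HeightOneSpectrum (𝓞 K)

/-- The absolute norm of an ideal, as a real number. -/
noncomputable def N (I : Ideal (𝓞 K)) : ℝ := (Ideal.absNorm I : ℝ)

lemma N_mul (I J : Ideal (𝓞 K)) : N (I * J) = N I * N J := by simp [N]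
lemma N_pow (I : Ideal (𝓞 K)) (k : ℕ) : N (I ^ k) = N I ^ k := by simp [N]
lemma N_nonneg (I : Ideal (𝓞 K)) : 0 ≤ N I := Nat.cast_nonneg _
lemma N_ge_one {I : Ideal (𝓞 K)} (h : I ≠ ⊥) : 1 ≤ N I := by
  rw [N]; exact_mod_cast Nat.one_le_iff_ne_zero.2 (Ideal.absNorm_eq_zero_iff.not.2 h)
lemma N_pos {I : Ideal (𝓞 K)} (h : I ≠ ⊥) : 0 < N I := lt_of_lt_of_le one_pos (N_ge_one h)
lemma N_bot : N (⊥ : Ideal (𝓞 K)) = 0 := by simp [N]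
lemma N_prime (q : PI K) : 2 ≤ N q.asIdeal := by
  have h1 : Ideal.absNorm q.asIdeal ≠ 1 := by
    rw [Ne, Ideal.absNorm_eq_one_iff]; exact q.isPrime.ne_top
  have h2 : Ideal.absNorm q.asIdeal ≠ 0 := Ideal.absNorm_eq_zero_iff.not.2 q.ne_bot
  rw [N]; exact_mod_cast (by omega : 2 ≤ Ideal.absNorm q.asIdeal)

lemma norm_Ncpow (I : Ideal (𝓞 K)) {s : ℂ} (hs : s.re ≠ 0) :
    ‖(Ideal.absNorm I : ℂ) ^ (-s)‖ = N I ^ (-s.re) := by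
  rw [Complex.norm_natCast_cpow_of_re_ne_zero _ (by simpa using hs), N, Complex.neg_re]

lemma N_cpow_mul (I J : Ideal (𝓞 K)) (s : ℂ) : (Ideal.absNorm (I * J) : ℂ) ^ (-s) =
    (Ideal.absNorm I : ℂ) ^ (-s) * (Ideal.absNorm J : ℂ) ^ (-s) := by
  rw [map_mul, Nat.cast_mul, Complex.natCast_mul_natCast_cpow]

lemma hasSum_cgrR {α : Type*} {f g : α → ℝ} {a : ℝ} (h : ∀ x, f x = g x) (hg : HasSum g a) : HasSum f a := by
  rwa [show f = g from funext h]

/-- The identity `log N(J) = ∑ Λ` over the prime powers dividing `J`. -/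
lemma log_identity {J : Ideal (𝓞 K)} (hJ : J ≠ 0) :
    HasSum (fun p : PI K × ℕ => if p.1.asIdeal ^ (p.2 + 1) ∣ J then Real.log (N p.1.asIdeal) else 0)
      (Real.log (N J)) := by
  revert hJ
  refine UniqueFactorizationMonoid.induction_on_prime
    (P := fun J : Ideal (𝓞 K) => J ≠ 0 → HasSum (fun p : PI K × ℕ =>
      if p.1.asIdeal ^ (p.2 + 1) ∣ J then Real.log (N p.1.asIdeal) else 0)
      (Real.log (N J))) J ?_ ?_ ?_
  · intro h; exact absurd rfl h
  · intro u hu _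
    rw [Ideal.isUnit_iff] at hu
    subst hu
    have : (fun p : PI K × ℕ => if p.1.asIdeal ^ (p.2 + 1) ∣ (⊤ : Ideal (𝓞 K)) then
        Real.log (N p.1.asIdeal) else 0) = fun _ => 0 := by
      ext p
      rw [if_neg]
      intro h
      have h2 : IsUnit (p.1.asIdeal) :=
        isUnit_of_dvd_unit ((dvd_pow_self _ (by omega)).trans h) (by rw [← Ideal.one_eq_top]; exact isUnit_one)
      exact p.1.prime.not_unit h2
    rw [this]
    simp [N, hasSum_zero]
  · intro a p ha hp ih _
    have hp0 : p ≠ ⊥ := hp.ne_zero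
    let q0 : PI K := ⟨p, (Ideal.prime_iff_isPrime hp0).1 hp, hp0⟩
    have hfin : FiniteMultiplicity p a := FiniteMultiplicity.of_not_isUnit hp.not_unit ha
    have h1 := (ih ha).add (hasSum_ite_eq (q0, multiplicity p a) (Real.log (N p)))
    rw [N_mul, Real.log_mul (N_pos hp0).ne' (N_pos ha).ne', add_comm]
    refine hasSum_cgrR ?_ h1
    rintro ⟨q, k⟩
    by_cases hq : q = q0
    · subst hq
      have e1 : (p ^ (k + 1) ∣ p * a) ↔ k ≤ multiplicity p a := by
        rw [pow_succ', mul_dvd_mul_iff_left hp0, hfin.pow_dvd_iff_le_multiplicity]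
      have e2 : (p ^ (k + 1) ∣ a) ↔ k + 1 ≤ multiplicity p a := by
        rw [hfin.pow_dvd_iff_le_multiplicity]
      simp only [q0, e1, e2, Prod.mk.injEq, true_and]
      split_ifs <;> first | omega | simp
    · have e1 : (q.asIdeal ^ (k + 1) ∣ p * a) ↔ (q.asIdeal ^ (k + 1) ∣ a) := by
        refine ⟨fun h => q.prime.pow_dvd_of_dvd_mul_left _ ?_ h, fun h => h.mul_left _⟩
        intro hd
        apply hq
        ext1
        have := (Prime.dvd_prime_iff_associated q.prime hp).1 hd
        exact associated_iff_eq.1 this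
      have e2 : ¬ ((q, k) = (q0, multiplicity p a)) := fun h => hq (Prod.ext_iff.1 h).1
      simp only [e1, if_neg e2, add_zero]

/-- A completely multiplicative function on ideals bounded by one, with an absolutely convergent
Dirichlet series on `Re s > 1`. -/
structure IsCh (χ : Ideal (𝓞 K) →* ℂ) : Prop where
  le : ∀ I, ‖χ I‖ ≤ 1
  sm : ∀ σ : ℝ, 1 < σ → Summable fun I => ‖χ I‖ * N I ^ (-σ)
  bot : χ ⊥ = 0

variable {χ : Ideal (𝓞 K) →* ℂ}

lemma IsCh.summable (h : IsCh χ) {s : ℂ} (hs : 1 < s.re) :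
    Summable fun I => ‖χ I * (Ideal.absNorm I : ℂ) ^ (-s)‖ := by
  refine (h.sm _ hs).congr fun I => ?_
  rw [norm_mul, norm_Ncpow _ (by linarith)]

lemma log_N_le (I : Ideal (𝓞 K)) {ε : ℝ} (hε : 0 < ε) : Real.log (N I) ≤ N I ^ ε / ε :=
  Real.log_le_rpow_div (N_nonneg I) hε

lemma log_N_nonneg (I : Ideal (𝓞 K)) : 0 ≤ Real.log (N I) := Real.log_natCast_nonneg _

lemma IsCh.sm_log (h : IsCh χ) {σ : ℝ} (hσ : 1 < σ) :
    Summable fun I => ‖χ I‖ * Real.log (N I) * N I ^ (-σ) := by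
  obtain ⟨σ', h1, h2⟩ := exists_between hσ
  have hε : 0 < σ - σ' := by linarith
  refine Summable.of_nonneg_of_le (fun I => ?_) (fun I => ?_) ((h.sm _ h1).mul_left (1 / (σ - σ')))
  · exact mul_nonneg (mul_nonneg (norm_nonneg _) (log_N_nonneg I)) (Real.rpow_nonneg (N_nonneg I) _)
  · by_cases hI : I = ⊥
    · subst hI; simp [h.bot]
    have e : N I ^ (-σ') = N I ^ (σ - σ') * N I ^ (-σ) := by
      rw [← Real.rpow_add (N_pos hI)]; congr 1; ring
    rw [e]
    have := log_N_le I hε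
    calc ‖χ I‖ * Real.log (N I) * N I ^ (-σ) ≤ ‖χ I‖ * (N I ^ (σ - σ') / (σ - σ')) * N I ^ (-σ) := by
          gcongr
          exact Real.rpow_nonneg (N_nonneg I) _
      _ = _ := by ring

lemma pow_inj : Function.Injective (fun p : PI K × ℕ => p.1.asIdeal ^ (p.2 + 1)) := by
  rintro ⟨q, k⟩ ⟨q', k'⟩ h
  simp only at h
  have hq : q.asIdeal ∣ q'.asIdeal ^ (k' + 1) := by rw [← h]; exact dvd_pow_self _ (by omega)
  have h1 := associated_iff_eq.1 ((Prime.dvd_prime_iff_associated q.prime q'.prime).1 (q.prime.dvd_of_dvd_pow hq))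
  have h2 : q = q' := by ext1; exact h1
  subst h2
  have h3 := congrArg N h
  rw [N_pow, N_pow] at h3
  have h4 := pow_right_injective₀ (by linarith [N_prime q]) (by linarith [N_prime q]) h3
  simp at h4
  rw [h4]

/-- Terms of the von Mangoldt series attached to `χ`. -/
noncomputable def lt (χ : Ideal (𝓞 K) →* ℂ) (s : ℂ) (p : PI K × ℕ) : ℂ :=
  χ (p.1.asIdeal ^ (p.2 + 1)) * Real.log (N p.1.asIdeal) *
    (Ideal.absNorm (p.1.asIdeal ^ (p.2 + 1)) : ℂ) ^ (-s)

lemma IsCh.summable_lt (h : IsCh χ) {s : ℂ} (hs : 1 < s.re) : Summable fun p => ‖lt χ s p‖ := by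
  have h1 := (h.sm_log hs).comp_injective pow_inj
  refine Summable.of_nonneg_of_le (fun I => norm_nonneg _) (fun p => ?_) h1
  simp only [Function.comp, lt, norm_mul]
  rw [norm_Ncpow _ (by linarith), Complex.norm_real, Real.norm_of_nonneg (log_N_nonneg _)]
  have h2 : Real.log (N p.1.asIdeal) ≤ Real.log (N (p.1.asIdeal ^ (p.2 + 1))) := by
    rw [N_pow, Real.log_pow]
    push_cast
    nlinarith [log_N_nonneg p.1.asIdeal, (Nat.cast_nonneg p.2 : (0:ℝ) ≤ p.2)]
  gcongr
  exact Real.rpow_nonneg (N_nonneg _) _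

/-- `∑ χ(I) log N(I) N(I)^{-s} = L(χ, s) Λ(χ, s)`. -/
lemma IsCh.LL_eq (h : IsCh χ) {s : ℂ} (hs : 1 < s.re) :
    ∑' I : Ideal (𝓞 K), χ I * Real.log (N I) * (Ideal.absNorm I : ℂ) ^ (-s) =
      DS χ s * ∑' p, lt χ s p := by
  rw [DS, mul_comm, tsum_mul_tsum_of_summable_norm (h.summable_lt hs) (h.summable hs)]
  have hsum := (summable_mul_of_summable_norm (h.summable_lt hs) (h.summable hs)).hasSum
  let T : (PI K × ℕ) × Ideal (𝓞 K) → ℂ := fun x =>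
    if x.1.1.asIdeal ^ (x.1.2 + 1) ∣ x.2 then
      χ x.2 * Real.log (N x.1.1.asIdeal) * (Ideal.absNorm x.2 : ℂ) ^ (-s) else 0
  let r : (PI K × ℕ) × Ideal (𝓞 K) → (PI K × ℕ) × Ideal (𝓞 K) := fun x =>
    (x.1, x.1.1.asIdeal ^ (x.1.2 + 1) * x.2)
  have hr : Function.Injective r := by
    rintro ⟨x, I⟩ ⟨y, J⟩ hxy
    simp only [r, Prod.mk.injEq] at hxy
    obtain ⟨rfl, h2⟩ := hxy
    rw [mul_left_cancel₀ (pow_ne_zero _ x.1.prime.ne_zero) h2]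
  have hTr : ∀ x, T (r x) = lt χ s x.1 * (χ x.2 * (Ideal.absNorm x.2 : ℂ) ^ (-s)) := by
    rintro ⟨x, I⟩
    simp only [T, r, dvd_mul_right, if_true, lt]
    rw [N_cpow_mul, map_mul]; ring
  have hT : HasSum T (∑' x : (PI K × ℕ) × Ideal (𝓞 K), lt χ s x.1 * (χ x.2 * (Ideal.absNorm x.2 : ℂ) ^ (-s))) := by
    rw [← hr.hasSum_iff]
    · exact hasSum_cgr hTr hsum
    · rintro ⟨x, I⟩ hx
      simp only [T]
      rw [if_neg]
      rintro ⟨J, rfl⟩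
      exact hx ⟨(x, J), rfl⟩
  have hT' := ((Equiv.prodComm (Ideal (𝓞 K)) (PI K × ℕ)).hasSum_iff.2 hT)
  refine (hT'.prod_fiberwise fun J => ?_).tsum_eq
  simp only [Function.comp, Equiv.prodComm_apply, Prod.swap, T]
  by_cases hJ : J = ⊥
  · subst hJ
    simp [h.bot, hasSum_zero]
  have h1 := log_identity hJ
  have h2 : HasSum (fun p : PI K × ℕ => (((if p.1.asIdeal ^ (p.2 + 1) ∣ J then Real.log (N p.1.asIdeal) else 0 : ℝ)) : ℂ))
      ((Real.log (N J) : ℝ) : ℂ) := by exact_mod_cast h1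
  have h3 := (h2.mul_left (χ J)).mul_right ((Ideal.absNorm J : ℂ) ^ (-s))
  refine hasSum_cgr (fun p => ?_) h3
  split_ifs <;> simp

end

end KD

/-! ### The prime sum of an abstract `L`-function -/

namespace KD

section
open NumberField NumberField.InfinitePlace Module Filter Topology
open scoped Classical
variable {K : Type*} [Field K] [NumberField K]

variable {χ : Ideal (𝓞 K) →* ℂ}

lemma term_hasDeriv (I : Ideal (𝓞 K)) {s : ℂ} (hs : s ≠ 0) :
    HasDerivAt (fun s : ℂ => χ I * (Ideal.absNorm I : ℂ) ^ (-s))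
      (-(χ I * Real.log (N I) * (Ideal.absNorm I : ℂ) ^ (-s))) s := by
  have h1 := ((hasDerivAt_id s).neg.const_cpow (c := (Ideal.absNorm I : ℂ)) (Or.inr (by simpa using hs))).const_mul (χ I)
  have h2 : Complex.log (Ideal.absNorm I : ℂ) = (Real.log (N I) : ℂ) := by
    rw [N, ← Complex.natCast_log]
  refine h1.congr_deriv ?_
  rw [h2]; simp; ring

lemma isOpen_re (σ : ℝ) : IsOpen {s : ℂ | σ < s.re} := isOpen_lt continuous_const Complex.continuous_re

lemma IsCh.term_bound (h : IsCh χ) {σ : ℝ} (hσ : 1 < σ) (I : Ideal (𝓞 K)) {s : ℂ} (hs : σ < s.re) :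
    ‖χ I * (Ideal.absNorm I : ℂ) ^ (-s)‖ ≤ ‖χ I‖ * N I ^ (-σ) := by
  by_cases hI : I = ⊥
  · subst hI; simp [h.bot]
  rw [norm_mul, norm_Ncpow _ (by linarith)]
  gcongr
  exact N_ge_one hI

lemma IsCh.diffOn (h : IsCh χ) : DifferentiableOn ℂ (DS χ) {s : ℂ | 1 < s.re} := by
  intro s hs
  obtain ⟨σ, h1, h2⟩ := exists_between (show 1 < s.re from hs)
  have := Complex.differentiableOn_tsum_of_summable_norm (F := fun I s => χ I * (Ideal.absNorm I : ℂ) ^ (-s))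
    (h.sm σ h1)
    (U := {s : ℂ | σ < s.re}) (fun I s hs => (term_hasDeriv I (by
      rintro rfl; simp only [Set.mem_ofPred_eq, Complex.zero_re] at hs; linarith)).differentiableAt.differentiableWithinAt)
    (isOpen_re σ) (fun I s hs => h.term_bound h1 I hs)
  exact ((this s h2).differentiableAt ((isOpen_re σ).mem_nhds h2)).differentiableWithinAt

lemma IsCh.deriv_eq (h : IsCh χ) {s : ℂ} (hs : 1 < s.re) :
    deriv (DS χ) s = - (DS χ s * ∑' p, lt χ s p) := by
  obtain ⟨σ, h1, h2⟩ := exists_between hs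
  have := Complex.hasSum_deriv_of_summable_norm (F := fun I s => χ I * (Ideal.absNorm I : ℂ) ^ (-s))
    (h.sm σ h1)
    (U := {s : ℂ | σ < s.re}) (fun I s hs => (term_hasDeriv I (by
      rintro rfl; simp only [Set.mem_ofPred_eq, Complex.zero_re] at hs; linarith)).differentiableAt.differentiableWithinAt)
    (isOpen_re σ) (fun I s hs => h.term_bound h1 I hs) h2
  rw [← h.LL_eq hs, ← tsum_neg]
  have h3 := this.tsum_eq
  rw [show deriv (DS χ) s = _ from h3.symm]
  refine tsum_congr fun I => ?_
  exact (term_hasDeriv I (by rintro rfl; simp at hs; linarith)).deriv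

lemma IsCh.tendsto (h : IsCh χ) : Tendsto (fun x : ℝ => DS χ x) atTop (𝓝 1) := by
  have key : Tendsto (fun x : ℝ => ∑' I : Ideal (𝓞 K), χ I * (Ideal.absNorm I : ℂ) ^ (-(x : ℂ))) atTop
      (𝓝 (∑' I : Ideal (𝓞 K), if I = ⊤ then 1 else 0)) := by
    refine tendsto_tsum_of_dominated_convergence (h.sm 2 (by norm_num)) ?_ ?_
    · intro I
      by_cases hI : I = ⊤
      · subst hI
        have : χ ⊤ = 1 := by rw [← Ideal.one_eq_top, map_one]
        simp [this]
      rw [if_neg hI]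
      by_cases hb : I = ⊥
      · subst hb; simp [h.bot]
      have h2 : 1 < N I := by
        refine lt_of_le_of_ne (N_ge_one hb) ?_
        intro h; apply hI; rw [← Ideal.absNorm_eq_one_iff]; rw [N] at h; exact_mod_cast h.symm
      rw [tendsto_zero_iff_norm_tendsto_zero]
      have h3 : Tendsto (fun x : ℝ => ‖χ I‖ * N I ^ (-x)) atTop (𝓝 (‖χ I‖ * 0)) := by
        refine Tendsto.const_mul _ ?_
        have := tendsto_rpow_atTop_of_base_lt_one (N I)⁻¹ (by
          have := inv_pos.2 (zero_lt_one.trans h2); linarith) (inv_lt_one_of_one_lt₀ h2)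
        refine this.congr fun x => ?_
        rw [Real.inv_rpow (N_nonneg I), Real.rpow_neg (N_nonneg I)]
      rw [mul_zero] at h3
      refine h3.congr' ?_
      filter_upwards [eventually_gt_atTop 0] with x hx
      rw [norm_mul, norm_Ncpow _ (by simpa using hx.ne')]; simp
    · filter_upwards [eventually_gt_atTop 2] with x hx I
      exact h.term_bound (by norm_num) I (by simpa using hx)
  simpa [DS, tsum_ite_eq] using key

lemma IsCh.not_zero (h : IsCh χ) {z : ℂ} (hz : 1 < z.re) : ¬ (DS χ =ᶠ[𝓝 z] 0) := by
  intro h0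
  have hU : IsPreconnected {s : ℂ | 1 < s.re} := (convex_halfSpace_re_gt 1).isPreconnected
  have := (h.diffOn.analyticOnNhd (isOpen_re 1)).eqOn_zero_of_preconnected_of_eventuallyEq_zero hU hz h0
  have h2 : Tendsto (fun x : ℝ => DS χ x) atTop (𝓝 0) := by
    refine tendsto_const_nhds.congr' ?_
    filter_upwards [eventually_gt_atTop 1] with x hx
    exact (this (show (1:ℝ) < ((x : ℂ)).re by simpa using hx)).symm
  exact one_ne_zero (tendsto_nhds_unique h.tendsto h2)

/-- The weight `log N(q) N(q)^{-s}` of a prime ideal. -/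
noncomputable def wt (s : ℝ) (q : PI K) : ℝ := Real.log (N q.asIdeal) * N q.asIdeal ^ (-s)

lemma wt_nonneg (s : ℝ) (q : PI K) : 0 ≤ wt s q :=
  mul_nonneg (log_N_nonneg _) (Real.rpow_nonneg (N_nonneg _) _)

lemma lt_zero (s : ℝ) (q : PI K) : lt χ s (q, 0) = χ q.asIdeal * wt s q := by
  rw [lt, wt, N]
  push_cast
  rw [Complex.ofReal_cpow (Nat.cast_nonneg _)]
  simp; ring

lemma IsCh.summable_wt (h : IsCh χ) {s : ℝ} (hs : 1 < s) :
    Summable fun q : PI K => ‖χ q.asIdeal * wt s q‖ := by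
  have h1 := (h.summable_lt (s := s) (by simpa using hs)).comp_injective
    (show Function.Injective (fun q : PI K => (q, 0)) from fun a b hab => (Prod.ext_iff.1 hab).1)
  refine h1.congr fun q => ?_
  simp only [Function.comp, lt_zero]

lemma IsCh.lt_bound (h : IsCh χ) {s : ℝ} (hs : 1 < s) (q : PI K) (k : ℕ) :
    ‖lt χ s (q, k + 1)‖ ≤ 2 * (‖χ q.asIdeal‖ * N q.asIdeal ^ (-(3/2 : ℝ))) * (1 / 2) ^ k := by
  have hN := N_prime q
  have hN0 : 0 < N q.asIdeal := by linarith
  simp only [lt, norm_mul, map_pow, norm_pow]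
  have h1 : ‖(((Ideal.absNorm q.asIdeal ^ (k + 1 + 1) : ℕ)) : ℂ) ^ (-(s : ℂ))‖ = N (q.asIdeal ^ (k + 1 + 1)) ^ (-s) := by
    rw [← map_pow, norm_Ncpow _ (by simp; linarith)]; simp
  rw [h1, Complex.norm_real, Real.norm_of_nonneg (log_N_nonneg _)]
  have h2 : N (q.asIdeal ^ (k + 1 + 1)) ^ (-s) ≤ N q.asIdeal ^ (-2 : ℝ) * (1 / 2) ^ k := by
    calc N (q.asIdeal ^ (k + 1 + 1)) ^ (-s) ≤ N (q.asIdeal ^ (k + 1 + 1)) ^ (-1 : ℝ) := by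
          apply Real.rpow_le_rpow_of_exponent_le _ (by linarith)
          rw [N_pow]; exact one_le_pow₀ (by linarith)
      _ = N q.asIdeal ^ (-2 : ℝ) * (N q.asIdeal)⁻¹ ^ k := by
          rw [N_pow, Real.rpow_neg_one, Real.rpow_neg hN0.le,
            show (2 : ℝ) = ((2 : ℕ) : ℝ) by norm_num, Real.rpow_natCast, inv_pow, ← mul_inv]
          congr 1; ring
      _ ≤ _ := by
          gcongr
          rw [one_div]
          exact inv_anti₀ (by norm_num) hN
  have h3 := log_N_le q.asIdeal (show (0 : ℝ) < 1 / 2 by norm_num)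
  have h4 : ‖χ q.asIdeal‖ ^ (k + 1 + 1) ≤ ‖χ q.asIdeal‖ := pow_le_of_le_one (norm_nonneg _) (h.le _) (by omega)
  have h5 : N q.asIdeal ^ (-(3/2) : ℝ) = N q.asIdeal ^ (1/2 : ℝ) * N q.asIdeal ^ (-2 : ℝ) := by
    rw [← Real.rpow_add hN0]; norm_num
  calc _ ≤ ‖χ q.asIdeal‖ * (N q.asIdeal ^ (1/2 : ℝ) / (1/2)) * (N q.asIdeal ^ (-2 : ℝ) * (1 / 2) ^ k) := by
        gcongr
        · exact Real.rpow_nonneg (N_nonneg _) _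
        · exact log_N_nonneg _
    _ = _ := by rw [h5]; ring

/-- The prime sum attached to `χ`. -/
noncomputable def V (χ : Ideal (𝓞 K) → ℂ) (s : ℝ) : ℂ := ∑' q : PI K, χ q.asIdeal * wt s q

lemma prime_inj : Function.Injective (fun q : PI K => q.asIdeal) := fun a b h => by ext1; exact h

lemma IsCh.lt_sub_V (h : IsCh χ) : ∃ C : ℝ, ∀ s : ℝ, 1 < s → ‖∑' p, lt χ s p - V χ s‖ ≤ C := by
  have hb : Summable (fun p : PI K × ℕ => 2 * (‖χ p.1.asIdeal‖ * N p.1.asIdeal ^ (-(3/2 : ℝ))) * (1 / 2 : ℝ) ^ p.2) := by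
    have h1 := ((h.sm (3/2) (by norm_num)).comp_injective prime_inj).mul_left 2
    exact h1.mul_of_nonneg summable_geometric_two
      (fun q => mul_nonneg zero_le_two (mul_nonneg (norm_nonneg _) (Real.rpow_nonneg (N_nonneg _) _)))
      (fun k => by positivity)
  refine ⟨∑' p : PI K × ℕ, 2 * (‖χ p.1.asIdeal‖ * N p.1.asIdeal ^ (-(3/2 : ℝ))) * (1 / 2 : ℝ) ^ p.2, fun s hs => ?_⟩
  have hsum : Summable (lt χ s) := (h.summable_lt (by simpa using hs)).of_norm
  have hsum1 : Summable (fun p : PI K × ℕ => lt χ s (p.1, p.2 + 1)) :=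
    Summable.of_norm_bounded hb fun p => h.lt_bound hs p.1 p.2
  have e : ∑' p, lt χ s p - V χ s = ∑' p : PI K × ℕ, lt χ s (p.1, p.2 + 1) := by
    rw [hsum.tsum_prod, hsum1.tsum_prod, sub_eq_iff_eq_add, V, add_comm,
      ← Summable.tsum_add (h.summable_wt hs).of_norm hsum1.prod]
    refine tsum_congr fun q => ?_
    rw [(hsum.prod_factor q).tsum_eq_zero_add, lt_zero]
  rw [e]
  exact tsum_of_norm_bounded hb.hasSum fun p => h.lt_bound hs p.1 p.2

/-- If the pole of `L(s, χ)` at `1` has order at most `j`, the prime sum is `(j - k) / (s - 1) + O(1)`, where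
`k` is the order of vanishing of `(s - 1)^j L(s, χ)`. -/
lemma IsCh.order (h : IsCh χ) {j : ℕ} (hj : EqA (fun s => (s - 1) ^ j * DS χ s) 0) :
    ∃ (k : ℕ) (C : ℝ), ∀ᶠ s : ℝ in 𝓝[>] 1, ‖V χ s + ((k : ℝ) - j) / (s - 1)‖ ≤ C := by
  obtain ⟨g0, hg0, he⟩ := hj
  simp only [Pi.zero_apply, sub_zero] at he
  have hne : ¬ ∀ᶠ z in 𝓝 (1 : ℂ), g0 z = 0 := by
    intro h0
    obtain ⟨W, hW, hWo, hW1⟩ := eventually_nhds_iff.1 (he.and h0)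
    have hcont : Tendsto (fun x : ℝ => (x : ℂ)) (𝓝[>] (1 : ℝ)) (𝓝 (1 : ℂ)) := by
      have := Complex.continuous_ofReal.tendsto (1 : ℝ)
      simp only [Complex.ofReal_one] at this
      exact this.mono_left nhdsWithin_le_nhds
    obtain ⟨x, hx, hx1⟩ := ((hcont.eventually (hWo.mem_nhds hW1)).and self_mem_nhdsWithin).exists
    refine h.not_zero (z := x) (by simpa using hx1) ?_
    filter_upwards [hWo.mem_nhds hx, (isOpen_re 1).mem_nhds (show (1:ℝ) < ((x : ℂ)).re by simpa using hx1)] with z hz hz1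
    have h1 := (hW z hz).1 hz1
    rw [(hW z hz).2] at h1
    refine (mul_eq_zero.1 h1).resolve_left (pow_ne_zero _ ?_)
    rw [sub_ne_zero]; rintro rfl; simp at hz1
  obtain ⟨k, g, hg, hg1, hgk⟩ := hg0.exists_eventuallyEq_pow_smul_nonzero_iff.2 hne
  obtain ⟨B, hB⟩ := h.lt_sub_V
  have hlog : ContinuousAt (logDeriv g) 1 := (hg.deriv.continuousAt).div hg.continuousAt hg1
  have hbd : ∀ᶠ z in 𝓝 (1 : ℂ), ‖logDeriv g z‖ ≤ ‖logDeriv g 1‖ + 1 := by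
    have := hlog.norm.eventually_lt (continuousAt_const (y := ‖logDeriv g 1‖ + 1)) (by linarith)
    exact this.mono fun z hz => hz.le
  have hev : ∀ᶠ z in 𝓝 (1 : ℂ), ∀ᶠ w in 𝓝 z, (1 < w.re → (w - 1) ^ j * DS χ w = g0 w) ∧ g0 w = (w - 1) ^ k • g w :=
    (he.and hgk).eventually_nhds
  refine ⟨k, B + (‖logDeriv g 1‖ + 1), ?_⟩
  have hcont : Tendsto (fun x : ℝ => (x : ℂ)) (𝓝[>] (1 : ℝ)) (𝓝 (1 : ℂ)) := by
    have := Complex.continuous_ofReal.tendsto (1 : ℝ)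
    simp only [Complex.ofReal_one] at this
    exact this.mono_left nhdsWithin_le_nhds
  filter_upwards [hcont.eventually hev, hcont.eventually hbd, hcont.eventually (hg.continuousAt.eventually_ne hg1),
    hcont.eventually hg.eventually_analyticAt, self_mem_nhdsWithin] with s hs1 hs2 hs3 hs4 hs5
  have hs5' : 1 < ((s : ℂ)).re := by simpa using hs5
  have hsn : (s : ℂ) - 1 ≠ 0 := by rw [sub_ne_zero]; intro h; rw [h] at hs5'; simp at hs5'
  have hfe : (fun w => (w - 1) ^ j * DS χ w) =ᶠ[𝓝 (s : ℂ)] fun w => (w - 1) ^ k * g w := by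
    filter_upwards [hs1, (isOpen_re 1).mem_nhds hs5'] with w hw hw1
    rw [hw.1 hw1, hw.2, smul_eq_mul]
  have hD0 : DS χ s ≠ 0 := by
    intro h0
    have := hfe.eq_of_nhds
    simp only [h0, mul_zero] at this
    exact mul_ne_zero (pow_ne_zero _ hsn) hs3 this.symm
  have hdD : DifferentiableAt ℂ (DS χ) s := (h.diffOn s hs5').differentiableAt ((isOpen_re 1).mem_nhds hs5')
  have hlin : ∀ i : ℕ, DifferentiableAt ℂ (fun w : ℂ => (w - 1) ^ i) s := fun i => by fun_prop
  have hld : ∀ i : ℕ, logDeriv (fun w : ℂ => (w - 1) ^ i) s = i / (s - 1) := fun i => by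
    rw [logDeriv_fun_pow (by fun_prop)]
    simp [logDeriv_apply, div_eq_mul_inv]
  have e1 : logDeriv (fun w => (w - 1) ^ j * DS χ w) s = logDeriv (fun w => (w - 1) ^ k * g w) s := by
    simp only [logDeriv_apply]
    rw [hfe.deriv_eq, hfe.eq_of_nhds]
  rw [logDeriv_mul (s : ℂ) (f := fun w : ℂ => (w - 1) ^ j) (g := DS χ) (pow_ne_zero _ hsn) hD0 (hlin j) hdD, logDeriv_mul (s : ℂ) (f := fun w : ℂ => (w - 1) ^ k) (g := g) (pow_ne_zero _ hsn) hs3 (hlin k)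
    hs4.differentiableAt, hld, hld, logDeriv_apply (DS χ), h.deriv_eq hs5'] at e1
  have e2 : -(DS χ s * ∑' p, lt χ s p) / DS χ s = - ∑' p, lt χ s p := by field_simp
  rw [e2] at e1
  have e3 : V χ s + ((k : ℝ) - j) / (s - 1) = -(∑' p, lt χ s p - V χ s) - logDeriv g s := by
    have : ((k : ℂ) - j) / (s - 1) = - ∑' p, lt χ s p - logDeriv g s := by
      rw [sub_div]; linear_combination -e1
    push_cast
    rw [this]; ring
  rw [e3]
  calc _ ≤ ‖-(∑' p, lt χ s p - V χ s)‖ + ‖logDeriv g s‖ := norm_sub_le _ _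
    _ ≤ _ := by rw [norm_neg]; exact add_le_add (hB s hs5) hs2

end

end KD

namespace KD

section
open NumberField NumberField.InfinitePlace Module Filter Topology
open scoped Classical
variable {K : Type*} [Field K] [NumberField K]

/-! ### Residues of prime sums -/

/-- The prime sum `∑ a(q) log N(q) N(q)^{-s}` converges for `s > 1` and equals `c / (s - 1) + O(1)`. -/
def Res (a : PI K → ℂ) (c : ℂ) : Prop :=
  (∀ s : ℝ, 1 < s → Summable fun q => ‖a q * wt s q‖) ∧
  ∃ C : ℝ, ∀ᶠ s : ℝ in 𝓝[>] 1, ‖∑' q, a q * wt s q - c / (s - 1)‖ ≤ C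

lemma Res.add {a b : PI K → ℂ} {c d : ℂ} (h : Res a c) (h' : Res b d) :
    Res (fun q => a q + b q) (c + d) := by
  obtain ⟨h1, C, hC⟩ := h
  obtain ⟨h1', C', hC'⟩ := h'
  refine ⟨fun s hs => ?_, C + C', ?_⟩
  · refine Summable.of_nonneg_of_le (fun _ => norm_nonneg _) (fun q => ?_) ((h1 s hs).add (h1' s hs))
    rw [add_mul]; exact norm_add_le _ _
  · filter_upwards [hC, hC', self_mem_nhdsWithin] with s hs hs' h1s
    have : ∑' q, (a q + b q) * wt s q - (c + d) / (s - 1) =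
        (∑' q, a q * wt s q - c / (s - 1)) + (∑' q, b q * wt s q - d / (s - 1)) := by
      simp only [add_mul]
      rw [(h1 s h1s).of_norm.tsum_add (h1' s h1s).of_norm]; ring
    rw [this]
    exact (norm_add_le _ _).trans (add_le_add hs hs')

lemma Res.smul {a : PI K → ℂ} {c : ℂ} (t : ℂ) (h : Res a c) : Res (fun q => t * a q) (t * c) := by
  obtain ⟨h1, C, hC⟩ := h
  refine ⟨fun s hs => ?_, ‖t‖ * C, ?_⟩
  · refine ((h1 s hs).mul_left ‖t‖).congr fun q => ?_
    rw [mul_assoc, norm_mul t]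
  · filter_upwards [hC] with s hs
    have : ∑' q, (t * a q) * wt s q - (t * c) / (s - 1) =
        t * (∑' q, a q * wt s q - c / (s - 1)) := by
      simp only [mul_assoc]
      rw [tsum_mul_left]; ring
    rw [this, norm_mul]
    gcongr

lemma Res.sum {ι : Type*} (t : Finset ι) {a : ι → PI K → ℂ} {c : ι → ℂ} (h : ∀ i ∈ t, Res (a i) (c i)) :
    Res (fun q => ∑ i ∈ t, a i q) (∑ i ∈ t, c i) := by
  induction t using Finset.induction_on with
  | empty => exact ⟨fun s _ => by simp [summable_zero], 0, by simp⟩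
  | insert i t hi ih =>
    simp only [Finset.sum_insert hi]
    exact (h i (by simp)).add (ih fun j hj => h j (by simp [hj]))

lemma Res.congr {a b : PI K → ℂ} {c : ℂ} (h : Res a c) (hab : ∀ q, a q = b q) : Res b c := by
  rwa [← (funext hab : a = b)]

lemma tendsto_inv : Tendsto (fun s : ℝ => s - 1) (𝓝[>] 1) (𝓝 0) := by
  have : Tendsto (fun s : ℝ => s - 1) (𝓝 1) (𝓝 (1 - 1)) := (continuous_id.sub continuous_const).tendsto 1
  rw [sub_self] at this
  exact this.mono_left nhdsWithin_le_nhds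

lemma Res.pos {a : PI K → ℂ} {c : ℂ} (h : Res a c) (ha : ∀ q, 0 ≤ (a q).re) : 0 ≤ c.re := by
  obtain ⟨h1, C, hC⟩ := h
  have h0 : Tendsto (fun s : ℝ => -(C * (s - 1))) (𝓝[>] 1) (𝓝 (-(C * 0))) := (tendsto_inv.const_mul C).neg
  rw [mul_zero, neg_zero] at h0
  refine le_of_tendsto h0 ?_
  filter_upwards [hC, self_mem_nhdsWithin] with s hs h1s
  have hs1 : 0 < s - 1 := sub_pos.2 h1s
  have h2 := (Complex.abs_re_le_norm _).trans hs
  rw [Complex.sub_re, Complex.re_tsum (h1 s h1s).of_norm] at h2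
  have h3 : 0 ≤ ∑' q, (a q * wt s q).re := tsum_nonneg fun q => by
    rw [Complex.re_mul_ofReal]; exact mul_nonneg (ha q) (wt_nonneg _ _)
  have h4 : (c / (s - 1)).re = c.re / (s - 1) := by
    rw [show (s : ℂ) - 1 = ((s - 1 : ℝ) : ℂ) by push_cast; ring, Complex.div_ofReal_re]
  rw [h4] at h2
  have h5 := (abs_le.1 h2).2
  have h6 : -C ≤ c.re / (s - 1) := by linarith
  have h7 := (le_div_iff₀ hs1).1 h6
  linarith

lemma wt_anti {s : ℝ} (hs : 1 < s) (q : PI K) : wt s q ≤ wt 1 q := by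
  unfold wt
  gcongr
  · exact log_N_nonneg _
  · exact N_ge_one q.ne_bot

lemma Res.of_summable {a : PI K → ℂ} (h : Summable fun q => ‖a q‖ * wt 1 q) : Res a 0 := by
  have hb : ∀ s : ℝ, 1 < s → ∀ q, ‖a q * wt s q‖ ≤ ‖a q‖ * wt 1 q := fun s hs q => by
    rw [norm_mul, Complex.norm_real, Real.norm_of_nonneg (wt_nonneg _ _)]
    exact mul_le_mul_of_nonneg_left (wt_anti hs q) (norm_nonneg _)
  refine ⟨fun s hs => Summable.of_nonneg_of_le (fun _ => norm_nonneg _) (hb s hs) h, ∑' q, ‖a q‖ * wt 1 q, ?_⟩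
  filter_upwards [self_mem_nhdsWithin] with s hs
  rw [zero_div, sub_zero]
  exact tsum_of_norm_bounded h.hasSum (hb s hs)

lemma Res.unique {a : PI K → ℂ} {c d : ℂ} (h : Res a c) (h' : Res a d) : c = d := by
  have h0 := h.add (h'.smul (-1))
  have h1 : Res (fun _ : PI K => 0) (c + -1 * d) := h0.congr fun q => by ring
  obtain ⟨_, C, hC⟩ := h1
  have h2 : Tendsto (fun s : ℝ => C * (s - 1)) (𝓝[>] 1) (𝓝 (C * 0)) := tendsto_inv.const_mul C
  rw [mul_zero] at h2
  have h3 : ‖c + -1 * d‖ ≤ 0 := by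
    refine ge_of_tendsto h2 ?_
    filter_upwards [hC, self_mem_nhdsWithin] with s hs h1s
    have hs1 : 0 < s - 1 := sub_pos.2 h1s
    simp only [zero_mul, tsum_zero, zero_sub, norm_neg, norm_div] at hs
    rw [show (s : ℂ) - 1 = ((s - 1 : ℝ) : ℂ) by push_cast; ring, Complex.norm_real,
      Real.norm_of_nonneg hs1.le] at hs
    exact (div_le_iff₀ hs1).1 hs
  have h4 := norm_le_zero_iff.1 h3
  linear_combination h4

/-- A sum with nonnegative coefficients and residue `0` still converges at `s = 1`. -/
lemma Res.summable {a : PI K → ℂ} (h : Res a 0) (ha : ∀ q, 0 ≤ (a q).re) :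
    Summable fun q => (a q).re * wt 1 q := by
  obtain ⟨h1, C, hC⟩ := h
  refine summable_of_sum_le (c := C) (fun q => mul_nonneg (ha q) (wt_nonneg _ _)) fun u => ?_
  have hcont : Tendsto (fun s : ℝ => ∑ q ∈ u, (a q).re * wt s q) (𝓝[>] 1) (𝓝 (∑ q ∈ u, (a q).re * wt 1 q)) := by
    refine tendsto_finsetSum _ fun q _ => Tendsto.const_mul _ ?_
    unfold wt
    refine Tendsto.const_mul _ ?_
    have : Continuous fun s : ℝ => N q.asIdeal ^ (-s) :=
      Real.continuous_const_rpow (N_pos q.ne_bot).ne' |>.comp continuous_neg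
    exact (this.tendsto 1).mono_left nhdsWithin_le_nhds
  refine le_of_tendsto hcont ?_
  filter_upwards [hC, self_mem_nhdsWithin] with s hs h1s
  rw [zero_div, sub_zero] at hs
  have h2 := (Complex.re_le_norm _).trans hs
  rw [Complex.re_tsum (h1 s h1s).of_norm] at h2
  refine le_trans ?_ h2
  simp only [Complex.re_mul_ofReal]
  refine Summable.sum_le_tsum u (fun q _ => mul_nonneg (ha q) (wt_nonneg _ _)) ?_
  have := Complex.reCLM.summable (h1 s h1s).of_norm
  simpa [Complex.re_mul_ofReal] using this

lemma IsCh.res {χ : Ideal (𝓞 K) →* ℂ} (h : IsCh χ) {j : ℕ} (hj : EqA (fun s => (s - 1) ^ j * DS χ s) 0) :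
    ∃ k : ℕ, Res (fun q => χ q.asIdeal) ((j : ℂ) - k) := by
  obtain ⟨k, C, hC⟩ := h.order hj
  refine ⟨k, fun s hs => h.summable_wt hs, C, ?_⟩
  filter_upwards [hC] with s hs
  have : ∑' q : PI K, χ q.asIdeal * wt s q - ((j : ℂ) - k) / (s - 1) = V χ s + ((k : ℝ) - j) / (s - 1) := by
    rw [V]; push_cast; ring
  rw [this]; exact hs

/-! ### Ray class characters -/

/-- Characters of the ray class group modulo `m`. -/
abbrev Ch (m : Ideal (𝓞 K)) := AddChar (Additive (Gm m)) ℂ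

/-- The function on ideals attached to a ray class character, zero off the ideals coprime to `m`. -/
noncomputable def lft {m : Ideal (𝓞 K)} (ψ : Ch m) : Ideal (𝓞 K) →* ℂ where
  toFun I := if h : I ∈ Xm m then ψ (Additive.ofMul (cl m ⟨I, h⟩)) else 0
  map_one' := by
    rw [dif_pos (one_mem _)]
    have : (⟨1, one_mem _⟩ : Xm m) = 1 := rfl
    rw [this, map_one, ofMul_one, AddChar.map_zero_eq_one]
  map_mul' I J := by
    by_cases hI : I ∈ Xm m
    · by_cases hJ : J ∈ Xm m
      · rw [dif_pos (mul_mem hI hJ), dif_pos hI, dif_pos hJ, ← AddChar.map_add_eq_mul, ← ofMul_mul, ← map_mul]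
        rfl
      · rw [dif_neg hJ, dif_neg (fun h => hJ (mul_mem_Xm.1 h).2), mul_zero]
    · rw [dif_neg hI, dif_neg (fun h => hI (mul_mem_Xm.1 h).1), zero_mul]

lemma lft_of_mem {m I : Ideal (𝓞 K)} (ψ : Ch m) (h : I ∈ Xm m) :
    lft ψ I = ψ (Additive.ofMul (cl m ⟨I, h⟩)) := dif_pos h
lemma lft_of_not_mem {m I : Ideal (𝓞 K)} (ψ : Ch m) (h : I ∉ Xm m) : lft ψ I = 0 := dif_neg h

lemma norm_lft_le {m : Ideal (𝓞 K)} (hm : m ≠ ⊥) (hm' : m ≠ ⊤) (ψ : Ch m) (I : Ideal (𝓞 K)) : ‖lft ψ I‖ ≤ 1 := by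
  have := Gm_finite hm hm'
  by_cases h : I ∈ Xm m
  · rw [lft_of_mem _ h, AddChar.norm_apply]
  · rw [lft_of_not_mem _ h]; simp

lemma lft_eq_sum {m : Ideal (𝓞 K)} [Fintype (Gm m)] (ψ : Ch m) (I : Ideal (𝓞 K)) :
    lft ψ I = ∑ g : Gm m, ψ (Additive.ofMul g) * ind m g I := by
  by_cases h : I ∈ Xm m
  · rw [lft_of_mem _ h]
    simp [ind, h]
  · rw [lft_of_not_mem _ h]
    simp [ind, h]

lemma isCh_lft {m : Ideal (𝓞 K)} (hm : m ≠ ⊥) (hm' : m ≠ ⊤) (ψ : Ch m) : IsCh (lft ψ) := by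
  have := Gm_finite hm hm'
  have : Fintype (Gm m) := Fintype.ofFinite _
  refine ⟨norm_lft_le hm hm' ψ, fun σ hσ => ?_, ?_⟩
  · have h1 : Summable fun I : Ideal (𝓞 K) => ∑ g : Gm m, ‖ind m g I * (Ideal.absNorm I : ℂ) ^ (-(σ : ℂ))‖ :=
      summable_sum fun g _ => (summable_ind hm hm' g (s := σ) (by simpa using hσ)).norm
    refine Summable.of_nonneg_of_le (fun I => mul_nonneg (norm_nonneg _) (Real.rpow_nonneg (N_nonneg _) _))
      (fun I => ?_) h1
    simp only [norm_mul]
    rw [norm_Ncpow _ (by simp; linarith), Complex.ofReal_re, ← Finset.sum_mul, lft_eq_sum]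
    refine mul_le_mul_of_nonneg_right ((norm_sum_le _ _).trans (Finset.sum_le_sum fun g _ => ?_))
      (Real.rpow_nonneg (N_nonneg _) _)
    rw [norm_mul, AddChar.norm_apply, one_mul]
  · exact lft_of_not_mem _ fun h => Xm_ne_bot hm' h rfl

lemma DS_lft {m : Ideal (𝓞 K)} (hm : m ≠ ⊥) (hm' : m ≠ ⊤) [Fintype (Gm m)] (ψ : Ch m) {s : ℂ} (hs : 1 < s.re) :
    DS (lft ψ) s = ∑ g : Gm m, ψ (Additive.ofMul g) * DS (ind m g) s := by
  simp only [DS]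
  have h1 : HasSum (fun I : Ideal (𝓞 K) => ∑ g : Gm m, ψ (Additive.ofMul g) * (ind m g I * (Ideal.absNorm I : ℂ) ^ (-s)))
      (∑ g : Gm m, ψ (Additive.ofMul g) * ∑' I : Ideal (𝓞 K), ind m g I * (Ideal.absNorm I : ℂ) ^ (-s)) :=
    hasSum_sum fun g _ => (summable_ind hm hm' g hs).hasSum.mul_left _
  rw [← h1.tsum_eq]
  refine tsum_congr fun I => ?_
  rw [lft_eq_sum, Finset.sum_mul]
  exact Finset.sum_congr rfl fun g _ => by ring

/-- The residue of the prime sum of a ray class character, up to the unknown order of vanishing `k`: the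
common polar part of the classes cancels unless the character is trivial. -/
lemma lft_res {m : Ideal (𝓞 K)} (hm : m ≠ ⊥) (hm' : m ≠ ⊤) (ψ : Ch m) :
    ∃ k : ℕ, Res (fun q => lft ψ q.asIdeal) ((if ψ = 1 then 1 else 0) - k) := by
  have := Gm_finite hm hm'
  have : Fintype (Gm m) := Fintype.ofFinite _
  obtain ⟨f, hf, hg⟩ := ind_eqA hm hm'
  have h1 : EqA (DS (lft ψ)) (fun s => (∑ g : Gm m, ψ (Additive.ofMul g)) * f s) := by
    have := EqA.sum (Finset.univ : Finset (Gm m)) (f := fun g s => ψ (Additive.ofMul g) * DS (ind m g) s)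
      (g := fun g s => ψ (Additive.ofMul g) * f s)
      fun g _ => (hg g).mul_left (c := fun _ => ψ (Additive.ofMul g)) analyticAt_const
    refine this.congr (fun s hs => ?_) (fun s hs => ?_)
    · rw [DS_lft hm hm' ψ hs]
    · rw [Finset.sum_mul]
  by_cases hψ : ψ = 1
  · have h2 : EqA (fun s => (s - 1) ^ 1 * DS (lft ψ) s) 0 := by
      have h3 := h1.mul_left (c := fun s => s - 1) (by fun_prop)
      have h4 := hf.mul_left (c := fun _ => (∑ g : Gm m, ψ (Additive.ofMul g))) analyticAt_const
      have h5 := h3.trans (h4.congr (fun s _ => by ring) (fun s _ => by simp [Pi.zero_apply]; rfl))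
      exact h5.congr (fun s _ => by simp) (fun s _ => by rfl)
    obtain ⟨k, hk⟩ := (isCh_lft hm hm' ψ).res h2
    exact ⟨k, by rw [if_pos hψ]; simpa using hk⟩
  · have h0 : ∑ g : Gm m, ψ (Additive.ofMul g) = 0 :=
      (Equiv.sum_comp Additive.ofMul (fun a => ψ a)).trans (AddChar.sum_eq_zero_of_ne_one hψ)
    have h2 : EqA (fun s => (s - 1) ^ 0 * DS (lft ψ) s) 0 :=
      h1.congr (fun s _ => by simp) (fun s _ => by rw [h0]; simp)
    obtain ⟨k, hk⟩ := (isCh_lft hm hm' ψ).res h2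
    exact ⟨k, by rw [if_neg hψ]; simpa using hk⟩

end

end KD

namespace KD

section
open NumberField NumberField.InfinitePlace Module Filter Topology
open scoped Classical
variable {K : Type*} [Field K] [NumberField K]

/-! ### Primes in ray classes, up to one exceptional character -/

lemma summable_ind_finite {F : Set (PI K)} (hF : F.Finite) (f : PI K → ℝ) : Summable (F.indicator f) :=
  summable_of_hasFiniteSupport (hF.subset Set.support_indicator_subset)

lemma ind_wt_le {A B : Set (PI K)} (h : A ⊆ B) (q : PI K) : A.indicator (wt 1) q ≤ B.indicator (wt 1) q :=
  Set.indicator_le_indicator_of_subset h (fun _ => wt_nonneg _ _) q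

lemma ind_wt_nonneg (A : Set (PI K)) (q : PI K) : 0 ≤ A.indicator (wt 1) q :=
  Set.indicator_nonneg (fun _ _ => wt_nonneg _ _) q

lemma summable_ind_union {A B : Set (PI K)} (hA : Summable (A.indicator (wt 1))) (hB : Summable (B.indicator (wt 1))) :
    Summable ((A ∪ B).indicator (wt 1)) := by
  refine Summable.of_nonneg_of_le (ind_wt_nonneg _) (fun q => ?_) (hA.add hB)
  by_cases h : q ∈ A
  · have := ind_wt_nonneg B q
    rw [Set.indicator_of_mem (show q ∈ A ∪ B from Or.inl h), Set.indicator_of_mem h]; linarith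
  · by_cases h' : q ∈ B
    · rw [Set.indicator_of_mem (show q ∈ A ∪ B from Or.inr h'), Set.indicator_of_mem h', Set.indicator_of_notMem h, zero_add]
    · rw [Set.indicator_of_notMem (by simp [h, h'])]
      exact add_nonneg (ind_wt_nonneg _ _) (ind_wt_nonneg _ _)

lemma summable_ind_mono {A B : Set (PI K)} (h : A ⊆ B) (hB : Summable (B.indicator (wt 1))) :
    Summable (A.indicator (wt 1)) :=
  Summable.of_nonneg_of_le (ind_wt_nonneg _) (ind_wt_le h) hB

lemma finite_not_Xm {m : Ideal (𝓞 K)} (hm : m ≠ ⊥) : {q : PI K | q.asIdeal ∉ Xm m}.Finite := by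
  refine (Ideal.finite_factors hm).subset fun q hq => ?_
  by_contra h
  apply hq
  rw [mem_Xm]
  have hmax : q.asIdeal.IsMaximal := q.isPrime.isMaximal q.ne_bot
  refine hmax.out.2 _ (lt_of_le_of_ne le_sup_left fun h2 => h ?_)
  simp only [Set.mem_ofPred_eq]
  rw [Ideal.dvd_iff_le, h2]
  exact le_sup_right

lemma lft_one {m I : Ideal (𝓞 K)} (h : I ∈ Xm m) : lft (1 : Ch m) I = 1 := by
  rw [lft_of_mem _ h]; rfl

lemma lft_mul {m I : Ideal (𝓞 K)} (ψ ψ' : Ch m) : lft (ψ * ψ') I = lft ψ I * lft ψ' I := by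
  by_cases h : I ∈ Xm m
  · rw [lft_of_mem _ h, lft_of_mem _ h, lft_of_mem _ h, AddChar.mul_apply]
  · simp [lft_of_not_mem _ h]

lemma norm_lft {m I : Ideal (𝓞 K)} (hm : m ≠ ⊥) (hm' : m ≠ ⊤) (ψ : Ch m) (h : I ∈ Xm m) : ‖lft ψ I‖ = 1 := by
  have := Gm_finite hm hm'
  rw [lft_of_mem _ h, AddChar.norm_apply]

/-- The trivial character has residue exactly `1`: the residue is `1 - k ≥ 0`, and the value `0` would make
the sum over all primes converge, contrary to the divergence over `W`. -/
lemma res_one {W : Set (PI K)} (hW : ¬ Summable (W.indicator (wt 1))) {m : Ideal (𝓞 K)} (hm : m ≠ ⊥) (hm' : m ≠ ⊤) :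
    Res (fun q => lft (1 : Ch m) q.asIdeal) 1 := by
  obtain ⟨k, hk⟩ := lft_res hm hm' 1
  rw [if_pos rfl] at hk
  have hpos : ∀ q : PI K, 0 ≤ (lft (1 : Ch m) q.asIdeal).re := fun q => by
    by_cases h : q.asIdeal ∈ Xm m
    · rw [lft_one h]; simp
    · rw [lft_of_not_mem _ h]; simp
  have h1 := hk.pos hpos
  simp only [Complex.sub_re, Complex.one_re, Complex.natCast_re, sub_nonneg] at h1
  have h2 : k ≤ 1 := by exact_mod_cast h1
  interval_cases k
  · simpa using hk
  · exfalso
    apply hW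
    simp only [Nat.cast_one, sub_self] at hk
    have h3 := hk.summable hpos
    refine summable_ind_mono (B := {q | q.asIdeal ∈ Xm m} ∪ {q | q.asIdeal ∉ Xm m}) (fun q _ => em _)
      (summable_ind_union ?_ (summable_ind_finite (finite_not_Xm hm) _))
    refine h3.congr fun q => ?_
    by_cases h : q.asIdeal ∈ Xm m
    · rw [lft_one h, Set.indicator_of_mem (by exact h)]; simp
    · rw [lft_of_not_mem _ h, Set.indicator_of_notMem (by exact h)]; simp

/-- `ψ` is exceptional: its prime sum has residue `-1`. -/
def Exc {m : Ideal (𝓞 K)} (ψ : Ch m) : Prop := Res (fun q => lft ψ q.asIdeal) (-1)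

/-- By positivity of `1 + Re ψ`, the residue of a nontrivial character is `0` or `-1`. -/
lemma res_cases {W : Set (PI K)} (hW : ¬ Summable (W.indicator (wt 1))) {m : Ideal (𝓞 K)} (hm : m ≠ ⊥) (hm' : m ≠ ⊤)
    {ψ : Ch m} (hψ : ψ ≠ 1) : Res (fun q => lft ψ q.asIdeal) 0 ∨ Exc ψ := by
  obtain ⟨k, hk⟩ := lft_res hm hm' ψ
  rw [if_neg hψ, zero_sub] at hk
  have h0 := ((res_one hW hm hm').add hk).pos fun q => by
    by_cases h : q.asIdeal ∈ Xm m
    · rw [lft_one h, Complex.add_re, Complex.one_re]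
      have := (Complex.abs_re_le_norm (lft ψ q.asIdeal)).trans (norm_lft_le hm hm' ψ _)
      linarith [(abs_le.1 this).1]
    · simp [lft_of_not_mem _ h]
  simp only [Complex.add_re, Complex.one_re, Complex.neg_re, Complex.natCast_re] at h0
  have h2 : k ≤ 1 := by
    have : (k : ℝ) ≤ 1 := by linarith
    exact_mod_cast this
  interval_cases k
  · left; simpa using hk
  · right; simpa [Exc] using hk

lemma exc_ineq {a b : ℂ} (ha : ‖a‖ = 1) (hb : ‖b‖ = 1) : 0 ≤ (4 + 2 * a + 2 * b - 1 + a * b).re := by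
  have h1 : ∀ z : ℂ, ‖z‖ = 1 → z.re * z.re + z.im * z.im = 1 := fun z hz => by
    have := Complex.normSq_eq_norm_sq z
    rw [hz, Complex.normSq_apply] at this
    simpa using this
  have h2 := h1 a ha
  have h3 := h1 b hb
  simp only [Complex.add_re, Complex.sub_re, Complex.mul_re, Complex.one_re, Complex.re_ofNat, Complex.im_ofNat]
  -- `|(1 + a) + a (1 + b)|² ≥ 0`, after expanding, gives the claim.
  have key : 0 ≤ ((1 + a.re) + (a.re * (1 + b.re) - a.im * b.im)) ^ 2
      + (a.im + (a.im * (1 + b.re) + a.re * b.im)) ^ 2 := by positivity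
  nlinarith [key, sq_nonneg (1 + a.re), sq_nonneg (1 + b.re)]

/-- Two exceptional characters are inverse to each other. Otherwise `3 + 2ψ + 2ψ' + ψψ'`, whose real part is
nonnegative by `exc_ineq`, would have residue at most `3 - 2 - 2`. In particular an exceptional character
is quadratic and unique. -/
lemma exc_mul {W : Set (PI K)} (hW : ¬ Summable (W.indicator (wt 1))) {m : Ideal (𝓞 K)} (hm : m ≠ ⊥) (hm' : m ≠ ⊤)
    {ψ ψ' : Ch m} (h : Exc ψ) (h' : Exc ψ') : ψ * ψ' = 1 := by
  by_contra hne
  obtain ⟨k, hk⟩ := lft_res hm hm' (ψ * ψ')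
  rw [if_neg hne, zero_sub] at hk
  have h1 := res_one hW hm hm'
  have h2 := ((((h1.smul 4).add (h.smul 2)).add (h'.smul 2)).add (h1.smul (-1))).add hk
  have h3 := h2.pos fun q => by
    by_cases hq : q.asIdeal ∈ Xm m
    · rw [lft_one hq, lft_mul]
      have := exc_ineq (norm_lft hm hm' ψ hq) (norm_lft hm hm' ψ' hq)
      convert this using 2
      ring
    · simp [lft_of_not_mem _ hq]
  norm_num at h3
  linarith [(Nat.cast_nonneg k : (0 : ℝ) ≤ k)]

lemma Xm_mono {m m' : Ideal (𝓞 K)} (h : m' ≤ m) {I : Ideal (𝓞 K)} (hI : I ∈ Xm m') : I ∈ Xm m := by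
  rw [mem_Xm] at *
  exact top_le_iff.1 (hI ▸ sup_le_sup_left h I)

/-- The projection of ray class groups for a change of modulus. -/
noncomputable def prj {m m' : Ideal (𝓞 K)} (h : m' ≤ m) : Gm m' →* Gm m :=
  (rayCon m').lift ((cl m).comp (Submonoid.inclusion fun _ => Xm_mono h)) (by
    rintro I J ⟨a, b, ha, hab, e⟩
    exact cl_eq_iff.2 ⟨a, b, Xm_mono h ha, h hab, e⟩)

lemma prj_cl {m m' : Ideal (𝓞 K)} (h : m' ≤ m) (I : Xm m') : prj h (cl m' I) = cl m ⟨I, Xm_mono h I.2⟩ := rfl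

/-- Inflation of a ray class character to a larger modulus. -/
noncomputable def infl {m m' : Ideal (𝓞 K)} (h : m' ≤ m) (ψ : Ch m) : Ch m' :=
  ψ.compAddMonoidHom (MonoidHom.toAdditive (prj h))

lemma lft_infl {m m' : Ideal (𝓞 K)} (h : m' ≤ m) (ψ : Ch m) {I : Ideal (𝓞 K)} (hI : I ∈ Xm m') :
    lft (infl h ψ) I = lft ψ I := by
  rw [lft_of_mem _ hI, lft_of_mem _ (Xm_mono h hI)]
  rfl

lemma exc_infl {m m' : Ideal (𝓞 K)} (h : m' ≤ m) (hm : m' ≠ ⊥) {ψ : Ch m} (hψ : Exc ψ) : Exc (infl h ψ) := by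
  have h1 : Res (fun q : PI K => lft (infl h ψ) q.asIdeal - lft ψ q.asIdeal) 0 := by
    refine Res.of_summable (summable_of_hasFiniteSupport ((finite_not_Xm hm).subset fun q hq => ?_))
    intro hX
    apply hq
    simp [lft_infl h ψ hX]
  have := h1.add hψ
  rw [zero_add] at this
  exact this.congr fun q => by ring

/-- A class on which every exceptional character takes the value `-1` contains primes outside any sparse set
`B`: by orthogonality the residue of its indicator function is positive. -/
lemma class_primes {W : Set (PI K)} (hW : ¬ Summable (W.indicator (wt 1))) {m : Ideal (𝓞 K)} (hm : m ≠ ⊥) (hm' : m ≠ ⊤)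
    (c : Gm m) (hc : ∀ ψ : Ch m, Exc ψ → ψ (Additive.ofMul c) = -1) {B : Set (PI K)}
    (hB : Summable (B.indicator (wt 1))) : ∃ (q : PI K) (hq : q.asIdeal ∈ Xm m), cl m ⟨_, hq⟩ = c ∧ q ∉ B := by
  by_contra! hcon
  have := Gm_finite hm hm'
  have : Fintype (Gm m) := Fintype.ofFinite _
  have hex : ∀ ψ : Ch m, ∃ r : ℂ, Res (fun q => ψ (-Additive.ofMul c) * lft ψ q.asIdeal) r ∧ 0 ≤ r.re ∧ (ψ = 1 → r = 1) := by
    intro ψ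
    by_cases h1 : ψ = 1
    · subst h1
      refine ⟨1, ?_, by simp, fun _ => rfl⟩
      have := (res_one hW hm hm').smul 1
      rw [one_mul] at this
      exact this
    · rcases res_cases hW hm hm' h1 with h | h
      · exact ⟨0, by simpa using h.smul (ψ (-Additive.ofMul c)), by simp, fun h => absurd h h1⟩
      · refine ⟨1, ?_, by simp, fun _ => rfl⟩
        have h2 := h.smul (ψ (-Additive.ofMul c))
        have h3 : ψ (-Additive.ofMul c) = -1 := by
          rw [AddChar.map_neg_eq_conj, hc ψ h]; simp
        rw [h3] at h2 ⊢
        simpa using h2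
  choose r hr hr0 hr1 using hex
  have hsum := Res.sum (Finset.univ : Finset (Ch m)) fun ψ _ => hr ψ
  have hval : ∀ q : PI K, ∑ ψ : Ch m, ψ (-Additive.ofMul c) * lft ψ q.asIdeal =
      if h : q.asIdeal ∈ Xm m then (if cl m ⟨_, h⟩ = c then (Fintype.card (Additive (Gm m)) : ℂ) else 0) else 0 := by
    intro q
    by_cases h : q.asIdeal ∈ Xm m
    · rw [dif_pos h]
      have h1 : ∀ ψ : Ch m, ψ (-Additive.ofMul c) * lft ψ q.asIdeal =
          ψ (-Additive.ofMul c + Additive.ofMul (cl m ⟨_, h⟩)) := fun ψ => by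
        rw [lft_of_mem _ h, AddChar.map_add_eq_mul]
      rw [Finset.sum_congr rfl fun ψ _ => h1 ψ, AddChar.sum_apply_eq_ite]
      congr 1
      rw [neg_add_eq_zero]
      exact propext ⟨fun h => (Additive.ofMul.injective h).symm, fun h => by rw [h]⟩
    · rw [dif_neg h]
      simp [lft_of_not_mem _ h]
  have h0 : Res (fun q : PI K => ∑ ψ : Ch m, ψ (-Additive.ofMul c) * lft ψ q.asIdeal) 0 := by
    refine Res.of_summable (Summable.of_nonneg_of_le (fun q => mul_nonneg (norm_nonneg _) (wt_nonneg _ _)) (fun q => ?_)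
      (hB.mul_left (Fintype.card (Additive (Gm m)) : ℝ)))
    rw [hval]
    split_ifs with h1 h2
    · rw [Set.indicator_of_mem (hcon q h1 h2)]
      simp
    all_goals
      simp only [norm_zero, zero_mul]
      exact mul_nonneg (Nat.cast_nonneg _) (ind_wt_nonneg _ _)
  have h1 := congrArg Complex.re (h0.unique hsum)
  rw [Complex.re_sum, Complex.zero_re, ← Finset.add_sum_erase _ _ (Finset.mem_univ (1 : Ch m)), hr1 1 rfl,
    Complex.one_re] at h1
  have h2 : 0 ≤ ∑ ψ ∈ Finset.univ.erase (1 : Ch m), (r ψ).re := Finset.sum_nonneg fun ψ _ => hr0 ψ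
  linarith

lemma gen_of_class {m : Ideal (𝓞 K)} (hm' : m ≠ ⊤) {y0 : 𝓞 K} (hy : Ideal.span {y0} ∈ Xm m) (I : Xm m)
    (h : cl m I = cl m ⟨_, hy⟩) : ∃ y : 𝓞 K, y - y0 ∈ m ∧ Ideal.span {y} = I := by
  obtain ⟨a, b, ha, hab, e⟩ := cl_eq_iff.1 h
  have ha0 : Ideal.span {a} ≠ ⊥ := Xm_ne_bot hm' ha
  simp only at e
  rw [Ideal.span_singleton_mul_span_singleton] at e
  have h1 : b * y0 ∈ Ideal.span {a} := by
    have : b * y0 ∈ Ideal.span {b * y0} := Ideal.mem_span_singleton_self _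
    rw [← e] at this
    exact Ideal.mul_le_left this
  obtain ⟨y, hy2⟩ := Ideal.mem_span_singleton'.1 h1
  refine ⟨y, ?_, ?_⟩
  · refine cancel_mod ha ?_
    rw [show a * (y - y0) = y * a - b * y0 - (a - b) * y0 by ring, hy2, sub_self, zero_sub]
    exact m.neg_mem (m.mul_mem_right _ hab)
  · rw [← hy2, mul_comm y, ← Ideal.span_singleton_mul_span_singleton] at e
    exact (mul_left_cancel₀ ha0 e).symm

/-- There is a prime `q2` in `W`, outside a finite set, on which every exceptional character of every modulus
prime to `q2` takes the value `-1`. Any two exceptional characters agree on a common modulus, and the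
primes where such a character is `1` are sparse because `1 + ψ` has residue `0`. -/
theorem exists_q2 {W : Set (PI K)} (hW : ¬ Summable (W.indicator (wt 1))) {F : Set (PI K)} (hF : F.Finite) :
    ∃ q2 ∈ W, q2 ∉ F ∧ ∀ m : Ideal (𝓞 K), m ≠ ⊥ → m ≠ ⊤ → q2.asIdeal ∈ Xm m → ∀ ψ : Ch m, Exc ψ → lft ψ q2.asIdeal = -1 := by
  by_cases hex : ∃ m : Ideal (𝓞 K), m ≠ ⊥ ∧ m ≠ ⊤ ∧ ∃ ψ : Ch m, Exc ψ
  · obtain ⟨m1, hm1, hm1', ψ1, hψ1⟩ := hex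
    have hsq := exc_mul hW hm1 hm1' hψ1 hψ1
    have hpm : ∀ q : PI K, q.asIdeal ∈ Xm m1 → lft ψ1 q.asIdeal = 1 ∨ lft ψ1 q.asIdeal = -1 := fun q hq => by
      have : lft ψ1 q.asIdeal * lft ψ1 q.asIdeal = 1 := by rw [← lft_mul, hsq, lft_one hq]
      exact mul_self_eq_one_iff.1 this
    have hq2 : ∃ q2 ∈ W, q2 ∉ F ∧ q2.asIdeal ∈ Xm m1 ∧ lft ψ1 q2.asIdeal = -1 := by
      by_contra! hcon
      apply hW
      have h0 := (res_one hW hm1 hm1').add hψ1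
      rw [add_neg_cancel] at h0
      have h1 := h0.summable fun q => by
        by_cases hq : q.asIdeal ∈ Xm m1
        · rw [lft_one hq]
          rcases hpm q hq with h | h <;> rw [h] <;> simp
        · simp [lft_of_not_mem _ hq]
      refine summable_ind_mono (B := {q | q.asIdeal ∈ Xm m1 ∧ lft ψ1 q.asIdeal = 1} ∪ (F ∪ {q | q.asIdeal ∉ Xm m1})) ?_
        (summable_ind_union ?_ (summable_ind_finite (hF.union (finite_not_Xm hm1)) _))
      · intro q hq
        by_cases h1 : q ∈ F
        · exact Or.inr (Or.inl h1)
        by_cases h2 : q.asIdeal ∈ Xm m1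
        · exact Or.inl ⟨h2, (hpm q h2).resolve_right (hcon q hq h1 h2)⟩
        · exact Or.inr (Or.inr h2)
      · refine (h1.mul_left (1/2)).congr fun q => ?_
        by_cases hq : q.asIdeal ∈ Xm m1
        · rcases hpm q hq with h | h
          · rw [Set.indicator_of_mem (by exact ⟨hq, h⟩), lft_one hq, h, Complex.add_re, Complex.one_re]; ring
          · rw [Set.indicator_of_notMem, lft_one hq, h]
            · simp
            · rintro ⟨_, h2⟩
              rw [h2] at h; norm_num at h
        · rw [Set.indicator_of_notMem (fun h => hq h.1)]
          simp [lft_of_not_mem _ hq]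
    obtain ⟨q2, h1, h2, h3, h4⟩ := hq2
    refine ⟨q2, h1, h2, fun m hm hm' hq ψ hψ => ?_⟩
    have hle1 : m * m1 ≤ m := Ideal.mul_le_left
    have hle2 : m * m1 ≤ m1 := Ideal.mul_le_right
    have hb : m * m1 ≠ ⊥ := mul_ne_zero hm hm1
    have ht : m * m1 ≠ ⊤ := fun h => hm' (top_le_iff.1 (h ▸ hle1))
    have e1 := exc_infl hle1 hb hψ
    have e2 := exc_infl hle2 hb hψ1
    have e3 : infl hle1 ψ = infl hle2 ψ1 :=
      mul_right_cancel ((exc_mul hW hb ht e1 e2).trans (exc_mul hW hb ht e2 e2).symm)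
    have hX : q2.asIdeal ∈ Xm (m * m1) := by
      rw [mem_Xm, ← Ideal.isCoprime_iff_sup_eq] at *
      exact hq.mul_right h3
    rw [← lft_infl hle1 ψ hX, e3, lft_infl hle2 ψ1 hX, h4]
  · push Not at hex
    have : ∃ q2 ∈ W, q2 ∉ F := by
      by_contra! hcon
      exact hW (summable_ind_mono hcon (summable_ind_finite hF _))
    obtain ⟨q2, h1, h2⟩ := this
    exact ⟨q2, h1, h2, fun m hm hm' _ ψ hψ => absurd hψ (hex m hm hm' ψ)⟩

/-- Some `y ≡ y0 mod m` generates a prime `q1`, or the product of a prime `q1` with `q2`. The first case is used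
when the exceptional character, if any, is `-1` on `(y0)`, and the second when it is `1`. -/
lemma exists_generator {W : Set (PI K)} (hW : ¬ Summable (W.indicator (wt 1))) {q2 : PI K}
    (hq2 : ∀ m : Ideal (𝓞 K), m ≠ ⊥ → m ≠ ⊤ → q2.asIdeal ∈ Xm m → ∀ ψ : Ch m, Exc ψ → lft ψ q2.asIdeal = -1)
    {B : Set (PI K)} (hB : Summable (B.indicator (wt 1)))
    {m : Ideal (𝓞 K)} (hm : m ≠ ⊥) (hm' : m ≠ ⊤) (hqm : q2.asIdeal ∈ Xm m) {y0 : 𝓞 K} (hy : Ideal.span {y0} ∈ Xm m) :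
    ∃ (y : 𝓞 K) (q1 : PI K), y - y0 ∈ m ∧ q1 ∉ B ∧
      (Ideal.span {y} = q1.asIdeal ∨ Ideal.span {y} = q1.asIdeal * q2.asIdeal) := by
  by_cases hc : ∀ ψ : Ch m, Exc ψ → ψ (Additive.ofMul (cl m ⟨_, hy⟩)) = -1
  · obtain ⟨q, hq, hqc, hqB⟩ := class_primes hW hm hm' _ hc hB
    obtain ⟨y, h1, h2⟩ := gen_of_class hm' hy ⟨_, hq⟩ hqc
    exact ⟨y, q, h1, hqB, Or.inl h2⟩
  · push Not at hc
    obtain ⟨ψ, hψ, hne⟩ := hc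
    have hsq := exc_mul hW hm hm' hψ hψ
    have hone : ψ (Additive.ofMul (cl m ⟨_, hy⟩)) = 1 := by
      refine (mul_self_eq_one_iff.1 ?_).resolve_right hne
      rw [← AddChar.mul_apply, hsq]; rfl
    have hc' : ∀ ψ' : Ch m, Exc ψ' → ψ' (Additive.ofMul (cl m ⟨_, hy⟩ * (cl m ⟨_, hqm⟩)⁻¹)) = -1 := by
      intro ψ' hψ'
      have : ψ' = ψ := mul_right_cancel ((exc_mul hW hm hm' hψ' hψ).trans hsq.symm)
      subst this
      have h2 := hq2 m hm hm' hqm ψ' hψ'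
      rw [lft_of_mem _ hqm] at h2
      have := Gm_finite hm hm'
      rw [ofMul_mul, ofMul_inv, AddChar.map_add_eq_mul, hone, AddChar.map_neg_eq_conj, h2]
      simp
    obtain ⟨q, hq, hqc, hqB⟩ := class_primes hW hm hm' _ hc' hB
    have h3 : cl m (⟨_, hq⟩ * ⟨_, hqm⟩) = cl m ⟨_, hy⟩ := by
      rw [map_mul, hqc, inv_mul_cancel_right]
    obtain ⟨y, h1, h2⟩ := gen_of_class hm' hy _ h3
    exact ⟨y, q, h1, hqB, Or.inr h2⟩

/-- Above a rational prime there are at most `[K : ℚ]` primes. -/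
lemma card_over (p : ℕ) (hp : p.Prime) :
    ∃ f : {q : PI K | (p : 𝓞 K) ∈ q.asIdeal} → Fin (finrank ℚ K), Function.Injective f := by
  have hp0 : Ideal.span {(p : ℤ)} ≠ ⊥ := by simp [hp.ne_zero]
  have hpp : (Ideal.span {(p : ℤ)}).IsPrime := by
    rw [Ideal.span_singleton_prime (by exact_mod_cast hp.ne_zero)]
    exact Nat.prime_iff_prime_int.1 hp
  have hmax : (Ideal.span {(p : ℤ)}).IsMaximal := hpp.isMaximal hp0
  have hcard := Ideal.card_primesOverFinset_le_finrank (𝓞 K) ℚ K hp0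
  let t := IsDedekindDomain.primesOverFinset (Ideal.span {(p : ℤ)}) (𝓞 K)
  have hmem : ∀ q : {q : PI K | (p : 𝓞 K) ∈ q.asIdeal}, q.1.asIdeal ∈ t := by
    intro q
    rw [IsDedekindDomain.mem_primesOverFinset_iff hp0]
    refine ⟨q.1.isPrime, ⟨?_⟩⟩
    have hle : Ideal.span {(p : ℤ)} ≤ q.1.asIdeal.under ℤ := by
      rw [Ideal.span_singleton_le_iff_mem, Ideal.under_def, Ideal.mem_comap]
      have h2 : (p : 𝓞 K) ∈ q.1.asIdeal := q.2
      rwa [map_natCast]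
    have hq := q.1.isPrime
    exact (hmax.eq_of_le (Ideal.IsPrime.under ℤ q.1.asIdeal).ne_top hle)
  obtain ⟨g⟩ : Nonempty (t ↪ Fin (finrank ℚ K)) := by
    rw [Function.Embedding.nonempty_iff_card_le]
    simpa using hcard
  refine ⟨fun q => g ⟨_, hmem q⟩, fun a b hab => ?_⟩
  have := congrArg Subtype.val (g.injective hab)
  exact Subtype.ext (prime_inj this)

/-- Prime ideals of residue degree greater than one are sparse. -/
lemma summable_nonprime : Summable ({q : PI K | ¬ (Ideal.absNorm q.asIdeal).Prime}.indicator (wt 1)) := by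
  have hex : ∀ q : PI K, ∃ p : ℕ, p.Prime ∧ (p : 𝓞 K) ∈ q.asIdeal ∧
      (¬ (Ideal.absNorm q.asIdeal).Prime → (p : ℝ) ^ 2 ≤ N q.asIdeal) := by
    intro q
    have h0 : Ideal.absNorm q.asIdeal ≠ 1 := by
      rw [Ne, Ideal.absNorm_eq_one_iff]; exact q.isPrime.ne_top
    have hq := q.isPrime
    have hmem : ((Ideal.absNorm q.asIdeal : ℕ) : 𝓞 K) ∈ q.asIdeal := Ideal.absNorm_mem _
    obtain ⟨p, hp, hpd, hpm⟩ : ∃ p : ℕ, p.Prime ∧ p ∣ Ideal.absNorm q.asIdeal ∧ (p : 𝓞 K) ∈ q.asIdeal := by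
      have hne : Ideal.absNorm q.asIdeal ≠ 0 := Ideal.absNorm_eq_zero_iff.not.2 q.ne_bot
      have hprod := Nat.prod_primeFactorsList hne
      rw [← hprod, Nat.cast_list_prod, ← Multiset.prod_coe, hq.multiset_prod_mem_iff_exists_mem] at hmem
      obtain ⟨x, hx, hxq⟩ := hmem
      obtain ⟨p, hp, rfl⟩ := List.mem_map.1 hx
      exact ⟨p, Nat.prime_of_mem_primeFactorsList hp, Nat.dvd_of_mem_primeFactorsList hp, hxq⟩
    refine ⟨p, hp, hpm, fun hnp => ?_⟩
    obtain ⟨k, hk⟩ : ∃ k, Ideal.absNorm q.asIdeal = p ^ k := by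
      have hdvd : Ideal.absNorm q.asIdeal ∣ p ^ finrank ℚ K := by
        have h1 : Ideal.absNorm q.asIdeal ∣ Ideal.absNorm (Ideal.span {(p : 𝓞 K)}) :=
          Ideal.absNorm_dvd_absNorm_of_le ((Ideal.span_singleton_le_iff_mem _).2 hpm)
        rw [Ideal.absNorm_span_singleton] at h1
        have h2 : (Algebra.norm ℤ (p : 𝓞 K)) = (p : ℤ) ^ finrank ℚ K := by
          have := Algebra.norm_algebraMap (S := 𝓞 K) (p : ℤ)
          rw [RingOfIntegers.rank] at this
          simpa using this
        rw [h2, Int.natAbs_pow] at h1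
        simpa using h1
      obtain ⟨k, _, hk⟩ := (Nat.dvd_prime_pow hp).1 hdvd
      exact ⟨k, hk⟩
    have hk2 : 2 ≤ k := by
      rcases k with _ | _ | k
      · simp at hk; exact absurd hk q.isPrime.ne_top
      · rw [hk] at hnp; simp at hnp; exact absurd hp hnp
      · omega
    rw [N, hk]
    exact_mod_cast Nat.pow_le_pow_right hp.pos hk2
  choose p hp hpm hpN using hex
  have hinj : ∃ j : PI K → ℕ × Fin (finrank ℚ K), Function.Injective j ∧ ∀ q, (j q).1 = p q := by
    choose f' hf' using fun (r : {r : ℕ // r.Prime}) => card_over (K := K) r.1 r.2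
    refine ⟨fun q => (p q, f' ⟨p q, hp q⟩ ⟨q, hpm q⟩), ?_, fun q => rfl⟩
    have gen : ∀ (r r' : {r : ℕ // r.Prime}) (q q' : PI K) (h : (r.1 : 𝓞 K) ∈ q.asIdeal) (h' : (r'.1 : 𝓞 K) ∈ q'.asIdeal),
        r = r' → f' r ⟨q, h⟩ = f' r' ⟨q', h'⟩ → q = q' := by
      rintro r r' q q' h h' rfl e
      exact congrArg Subtype.val (hf' r e)
    intro q q' hqq
    rw [Prod.mk.injEq] at hqq
    exact gen _ _ q q' (hpm q) (hpm q') (Subtype.ext hqq.1) hqq.2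
  obtain ⟨j, hj, hjp⟩ := hinj
  have hs : Summable fun x : ℕ × Fin (finrank ℚ K) => 4 * (x.1 : ℝ) ^ (-(3/2) : ℝ) * 1 := by
    refine Summable.mul_of_nonneg (f := fun x : ℕ => 4 * (x : ℝ) ^ (-(3/2) : ℝ)) (g := fun _ : Fin (finrank ℚ K) => (1 : ℝ))
      ?_ (Summable.of_finite) (fun x => by positivity) (fun _ => zero_le_one)
    exact (Real.summable_nat_rpow.2 (by norm_num)).mul_left 4
  refine Summable.of_nonneg_of_le (ind_wt_nonneg _) (fun q => ?_) (hs.comp_injective hj)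
  simp only [Function.comp, hjp, mul_one]
  by_cases hq : q ∈ {q : PI K | ¬ (Ideal.absNorm q.asIdeal).Prime}
  · rw [Set.indicator_of_mem hq]
    have h1 := hpN q hq
    have hN := N_pos q.ne_bot
    have hp0 : (0 : ℝ) < p q := by exact_mod_cast (hp q).pos
    have h2 := log_N_le q.asIdeal (show (0 : ℝ) < 1 / 4 by norm_num)
    calc wt 1 q ≤ (N q.asIdeal ^ (1 / 4 : ℝ) / (1 / 4)) * N q.asIdeal ^ (-1 : ℝ) := by
          unfold wt; gcongr
      _ = 4 * N q.asIdeal ^ (-(3/4) : ℝ) := by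
          rw [div_mul_eq_mul_div, ← Real.rpow_add hN]; norm_num; ring
      _ ≤ 4 * ((p q : ℝ) ^ 2) ^ (-(3/4) : ℝ) := by
          gcongr 4 * ?_
          exact Real.rpow_le_rpow_of_nonpos (by positivity) h1 (by norm_num)
      _ = 4 * (p q : ℝ) ^ (-(3/2) : ℝ) := by
          rw [← Real.rpow_natCast, ← Real.rpow_mul hp0.le]; norm_num
  · rw [Set.indicator_of_notMem hq]; positivity

end

end KD

/-! ### Split primes of cyclotomic fields -/

namespace KD

section
open NumberField NumberField.InfinitePlace Module Filter Topology
open scoped Classical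
variable {K : Type*} [Field K] [NumberField K]

variable {e : ℕ} [NeZero e] [IsCyclotomicExtension {e} ℚ K]

/-- A rational prime congruent to `1` modulo `e` splits completely. -/
lemma exists_prime_norm (e : ℕ) [NeZero e] [IsCyclotomicExtension {e} ℚ K] {r : ℕ} (hr : r.Prime) (h : (r : ZMod e) = 1) :
    ∃ q : PI K, Ideal.absNorm q.asIdeal = r := by
  have hre : ¬ r ∣ e := by
    intro hd
    have h1 := congrArg (ZMod.castHom hd (ZMod r)) h
    have : Fact r.Prime := ⟨hr⟩
    rw [map_natCast, map_one, ZMod.natCast_self] at h1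
    exact zero_ne_one h1
  have : Fact r.Prime := ⟨hr⟩
  have hpp : (Ideal.span {(r : ℤ)}).IsPrime := by
    rw [Ideal.span_singleton_prime (by exact_mod_cast hr.ne_zero)]
    exact Nat.prime_iff_prime_int.1 hr
  obtain ⟨⟨P, hP1, hP2⟩⟩ := (Ideal.span {(r : ℤ)}).nonempty_primesOver (S := 𝓞 K)
  have hP0 : P ≠ ⊥ := Ideal.ne_bot_of_liesOver_of_ne_bot (p := Ideal.span {(r : ℤ)}) (by simpa using hr.ne_zero) P
  have hPm : P.IsMaximal := hP1.isMaximal hP0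
  have hpm : (Ideal.span {(r : ℤ)}).IsMaximal := hpp.isMaximal (by simpa using hr.ne_zero)
  have h1 := IsCyclotomicExtension.Rat.inertiaDeg_eq_of_not_dvd (m := e) (p := r) (K := K) (P := P) hre
  have h2 := Ideal.absNorm_eq_pow_inertiaDeg' P hr
  rw [h, orderOf_one] at h1
  rw [Ideal.inertiaDeg'_eq_inertiaDeg, h1, pow_one] at h2
  exact ⟨⟨P, hP1, hP0⟩, h2⟩

/-- Primes of degree one with norm congruent to `1` modulo `Q` are not sparse, by Dirichlet's theorem over
`ℤ`. -/
lemma not_summable_W (e : ℕ) [NeZero e] [IsCyclotomicExtension {e} ℚ K] {Q : ℕ} (hQ : Q ≠ 0) (heQ : e ∣ Q) :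
    ¬ Summable ({q : PI K | (Ideal.absNorm q.asIdeal).Prime ∧ ((Ideal.absNorm q.asIdeal : ℕ) : ZMod Q) = 1}.indicator (wt 1)) := by
  intro hS
  have : NeZero Q := ⟨hQ⟩
  apply ArithmeticFunction.vonMangoldt.not_summable_residueClass_prime_div (q := Q) (a := 1) isUnit_one
  have hex : ∀ r : {r : ℕ | r.Prime ∧ (r : ZMod Q) = 1}, ∃ q : PI K, Ideal.absNorm q.asIdeal = r := by
    rintro ⟨r, hr, h⟩
    refine exists_prime_norm e hr ?_
    have := congrArg (ZMod.castHom heQ (ZMod e)) h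
    rwa [map_natCast, map_one] at this
  choose f hf using hex
  have hinj : Function.Injective f := fun a b hab => Subtype.ext (by rw [← hf a, ← hf b, hab])
  have h1 := hS.comp_injective hinj
  have h2 := summable_subtype_iff_indicator (s := {r : ℕ | r.Prime ∧ (r : ZMod Q) = 1}) (f := fun r : ℕ => Real.log r / r)
  refine (h2.1 ?_).congr ?_
  · refine h1.congr fun r => ?_
    simp only [Function.comp]
    rw [Set.indicator_of_mem]
    · simp only [wt, N, hf, Real.rpow_neg_one]; rfl
    · have := r.2
      simp only [Set.mem_ofPred_eq] at this ⊢
      rwa [hf]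
  · intro r
    by_cases hr : r.Prime
    · by_cases h : (r : ZMod Q) = 1
      · rw [Set.indicator_of_mem (by exact ⟨hr, h⟩), if_pos hr, ArithmeticFunction.vonMangoldt.residueClass,
          Set.indicator_of_mem (by exact h), ArithmeticFunction.vonMangoldt_apply_prime hr]
      · rw [Set.indicator_of_notMem (fun hh => h hh.2), if_pos hr, ArithmeticFunction.vonMangoldt.residueClass,
          Set.indicator_of_notMem (by exact h)]; simp
    · rw [Set.indicator_of_notMem (fun hh => hr hh.1), if_neg hr]; simp

/-- A residue class `y0` modulo `b`, prime to `b`, contains a generator `y` of a prime `q1` of degree one or of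
`q1 q2`. The prime `q2` depends only on `Q` and `a`. -/
theorem KD_main (e : ℕ) [NeZero e] [IsCyclotomicExtension {e} ℚ K] {Q : ℕ} (hQ : Q ≠ 0) (heQ : e ∣ Q)
    {a : 𝓞 K} (ha : a ≠ 0) :
    ∃ q2 : PI K, (Ideal.absNorm q2.asIdeal).Prime ∧ ((Ideal.absNorm q2.asIdeal : ℕ) : ZMod Q) = 1 ∧
      a ∉ q2.asIdeal ∧ ∀ b y0 : 𝓞 K, b ≠ 0 → ¬ IsUnit b → b ∉ q2.asIdeal → IsCoprime y0 b →
        ∃ (y : 𝓞 K) (q1 : PI K), b ∣ y - y0 ∧ (Ideal.absNorm q1.asIdeal).Prime ∧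
          Ideal.absNorm q1.asIdeal ≠ Ideal.absNorm q2.asIdeal ∧
          (Ideal.span {y} = q1.asIdeal ∨ Ideal.span {y} = q1.asIdeal * q2.asIdeal) := by
  have hcop : ∀ (c : 𝓞 K) (q : PI K), c ∉ q.asIdeal ↔ q.asIdeal ∈ Xm (Ideal.span {c}) := by
    intro c q
    rw [mem_Xm]
    constructor
    · intro h
      by_contra hne
      refine h ?_
      rw [q.isMaximal.eq_of_le hne le_sup_left]
      exact Ideal.mem_sup_right (Ideal.mem_span_singleton_self c)
    · intro h h'
      rw [sup_of_le_left ((Ideal.span_singleton_le_iff_mem _).2 h')] at h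
      exact q.isPrime.ne_top h
  obtain ⟨q2, hW, hF, hq2⟩ := exists_q2 (not_summable_W (K := K) e hQ heQ)
    (finite_not_Xm (m := Ideal.span {a}) (by simpa using ha))
  refine ⟨q2, hW.1, hW.2, (hcop _ _).2 (by simpa using hF), fun b y0 hb hbu hbq hy => ?_⟩
  have hB := summable_ind_union (summable_nonprime (K := K)) (summable_ind_finite
    (finite_not_Xm (m := Ideal.span {((Ideal.absNorm q2.asIdeal : ℕ) : 𝓞 K)})
      (by simpa using hW.1.ne_zero)) (wt 1))
  obtain ⟨y, q1, h1, h2, h3⟩ := exists_generator (not_summable_W (K := K) e hQ heQ) hq2 hB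
    (m := Ideal.span {b}) (by simpa using hb) (by simpa [Ideal.span_singleton_eq_top] using hbu)
    ((hcop _ _).1 hbq) (y0 := y0) (by
      rw [mem_Xm, ← Ideal.isCoprime_iff_sup_eq, Ideal.isCoprime_span_singleton_iff]; exact hy)
  rw [Set.mem_union, not_or] at h2
  refine ⟨y, q1, Ideal.mem_span_singleton.1 h1, by simpa using h2.1, fun hh => ?_, h3⟩
  apply h2.2
  rw [Set.mem_ofPred_eq, ← hcop, not_not, ← hh]
  exact Ideal.absNorm_mem _

end

end KD

/-! ### Reductions of rows -/

namespace RD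

section
open NumberField Module
open scoped Classical

section red
variable {A : Type*} [CommRing A]

/-- The row `(α, β)` can be brought to first entry `1` by adding multiples of `α` to `β`, adding multiples of
`π β` to `α`, and the moves `(α, β) ↦ (w α, w⁻¹ β)` for units `w ≡ 1 mod π`. -/
inductive Red (π : A) : A → A → Prop
  | base (β : A) : Red π 1 β
  | addr (α β t : A) : Red π α (β + t * α) → Red π α β
  | addl (α β t : A) : Red π (α + t * (π * β)) β → Red π α β
  | unit (α β : A) (w : Aˣ) : π ∣ (w : A) - 1 → Red π (w * α) (((w⁻¹ : Aˣ) : A) * β) → Red π α β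

lemma Red.right {π α β β' : A} (h : α ∣ β' - β) (hr : Red π α β') : Red π α β := by
  obtain ⟨t, ht⟩ := h
  refine Red.addr α β t ?_
  rwa [show β + t * α = β' by linear_combination -ht]

lemma Red.left {π α α' β : A} (h : π * β ∣ α' - α) (hr : Red π α' β) : Red π α β := by
  obtain ⟨t, ht⟩ := h
  refine Red.addl α β t ?_
  rwa [show α + t * (π * β) = α' by linear_combination -ht]

lemma Red.of_unit {π α : A} (η : Aˣ) (h : π ∣ α - 1) : Red π α (η : A) := by
  refine Red.left (α' := 1) ?_ (Red.base _)
  rw [← neg_sub, dvd_neg]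
  exact (Units.mul_right_dvd).2 h

/-- If `p ≡ 1 mod e`, the Frobenius map fixes `ζ` modulo `p`, and therefore all of `ℤ[ζ]`. -/
lemma fermat {ζ : A} (hgen : Algebra.adjoin ℤ {ζ} = ⊤) {e p : ℕ} (hζ : ζ ^ e = 1) (hp : p.Prime) (hpe : e ∣ p - 1) (x : A) :
    (p : A) ∣ x ^ p - x := by
  have hx : x ∈ Algebra.adjoin ℤ {ζ} := hgen ▸ Algebra.mem_top
  have hfact : Fact p.Prime := ⟨hp⟩
  induction hx using Algebra.adjoin_induction with
  | mem x hx =>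
    rw [Set.mem_singleton_iff] at hx
    subst hx
    obtain ⟨c, hc⟩ := hpe
    have : p = p - 1 + 1 := by have := hp.pos; omega
    rw [show x ^ p = x by rw [this, pow_succ, hc, pow_mul, hζ, one_pow, one_mul], sub_self]
    exact dvd_zero _
  | algebraMap r =>
    have h : (p : ℤ) ∣ r ^ p - r := by
      rw [← ZMod.intCast_zmod_eq_zero_iff_dvd]
      simp
    have := map_dvd (algebraMap ℤ A) h
    simpa using this
  | add x y _ _ hx hy =>
    obtain ⟨c, hc⟩ := exists_add_pow_prime_eq hp x y
    rw [hc, show x ^ p + y ^ p + p * x * y * c - (x + y) = (x ^ p - x) + (y ^ p - y) + p * (x * y * c) by ring]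
    exact dvd_add (dvd_add hx hy) (dvd_mul_right _ _)
  | mul x y _ _ hx hy =>
    rw [mul_pow, show x ^ p * y ^ p - x * y = x ^ p * (y ^ p - y) + y * (x ^ p - x) by ring]
    exact dvd_add (hy.mul_left _) (hx.mul_left _)

end red

lemma one_add_pow_exp {A : Type*} [CommRing A] (y : A) (n : ℕ) : ∃ c, (1 + y) ^ n = 1 + n * y + y ^ 2 * c := by
  induction n with
  | zero => exact ⟨0, by simp⟩
  | succ n ih =>
    obtain ⟨c, hc⟩ := ih
    refine ⟨n + c + y * c, ?_⟩
    rw [pow_succ, hc]; push_cast; ring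

lemma pow_M_pow {M : ℕ} {d κ : ℤ} (hd : (M : ℤ) ^ 2 ∣ d) (hκ : IsCoprime κ (M : ℤ)) (j : ℕ) :
    ∃ κ' : ℤ, IsCoprime κ' (M : ℤ) ∧ (1 + d * κ) ^ (M ^ j) = 1 + d * M ^ j * κ' := by
  induction j with
  | zero => exact ⟨κ, hκ, by simp⟩
  | succ j ih =>
    obtain ⟨κ', h1, h2⟩ := ih
    obtain ⟨c, hc⟩ := one_add_pow_exp (d * M ^ j * κ') M
    obtain ⟨d', rfl⟩ := hd
    refine ⟨κ' + M * (d' * M ^ j * κ' ^ 2 * c), IsCoprime.add_mul_left_left h1 _, ?_⟩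
    rw [pow_succ M, pow_mul, h2, hc]; push_cast; ring

/-- The powers of `1 + d κ`, with `κ` prime to `M` and `M ^ 2 ∣ d`, fill the residue classes congruent to `1`
modulo `d` in `ℤ / d M ^ j`. -/
lemma int_unit_claim {M : ℕ} {d κ : ℤ} (hd : (M : ℤ) ^ 2 ∣ d) (hκ : IsCoprime κ (M : ℤ)) {γ : ℤ} (hγ : d ∣ γ - 1) (j : ℕ) :
    ∃ i : ℕ, d * M ^ j ∣ γ - (1 + d * κ) ^ i := by
  induction j with
  | zero => exact ⟨0, by simpa using hγ⟩
  | succ j ih =>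
    obtain ⟨i, x, hx⟩ := ih
    obtain ⟨κ', hκ', h2⟩ := pow_M_pow hd hκ j
    have hω : IsCoprime ((1 + d * κ) ^ i * κ') (M : ℤ) := by
      refine IsCoprime.mul_left (IsCoprime.pow_left ?_) hκ'
      obtain ⟨d', rfl⟩ := hd
      have := IsCoprime.add_mul_left_left (isCoprime_one_left (x := (M : ℤ))) (M * d' * κ)
      rwa [show 1 + (M : ℤ) ^ 2 * d' * κ = 1 + M * (M * d' * κ) by ring]
    obtain ⟨a, b, hab⟩ := hω
    by_cases hM : M = 0
    · subst hM
      obtain ⟨d', rfl⟩ := hd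
      refine ⟨i, ?_⟩
      simp at hx ⊢
      exact hx
    obtain ⟨c, hc⟩ : ∃ c : ℕ, (M : ℤ) ∣ (c : ℤ) - x * a := by
      refine ⟨((x * a) % M).toNat, ?_⟩
      rw [Int.toNat_of_nonneg (Int.emod_nonneg _ (by exact_mod_cast hM))]
      rw [Int.emod_def]
      exact ⟨-(x * a / M), by ring⟩
    obtain ⟨f, hf⟩ := hc
    obtain ⟨g, hg⟩ := one_add_pow_exp (d * M ^ j * κ') c
    obtain ⟨d', rfl⟩ := hd
    refine ⟨i + M ^ j * c, x * b - (1 + (M : ℤ) ^ 2 * d' * κ) ^ i * κ' * f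
        - (1 + (M : ℤ) ^ 2 * d' * κ) ^ i * M * d' * M ^ j * κ' ^ 2 * g, ?_⟩
    rw [pow_add, pow_mul, h2, hg]
    rw [show (c : ℤ) = M * f + x * a by linear_combination hf]
    generalize (1 + (M : ℤ) ^ 2 * d' * κ) ^ i = W at *
    linear_combination hx - (M : ℤ) ^ 2 * d' * M ^ j * x * hab

section zlem
variable {A : Type*} [CommRing A]

/-- If `z` divides the integer `M` with coprime cofactor and every residue class modulo `z` contains an integer,
then the same holds modulo all powers of `z`; here with a factor `z ^ s` matched by `M ^ s`. -/
lemma zlem {z ρ : A} {M : ℕ} (hM : (M : A) = z * ρ) (hc : IsCoprime ρ z) (h0 : ∀ y : A, ∃ c : ℤ, z ∣ y - c) (t : ℕ) :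
    ∀ (s : ℕ) (y : A), ∃ x : ℤ, z ^ (s + t) ∣ z ^ s * y - (M : A) ^ s * x := by
  induction t with
  | zero => exact fun s y => ⟨0, ⟨y, by simp⟩⟩
  | succ t ih =>
    intro s y
    obtain ⟨a, b, hab⟩ : IsCoprime (ρ ^ s) z := hc.pow_left
    obtain ⟨c, k, hk⟩ := h0 (a * y)
    obtain ⟨x, g, hg⟩ := ih (s + 1) (b * y + ρ ^ s * k)
    refine ⟨c + M * x, g, ?_⟩
    push_cast
    have h1 : y = ρ ^ s * c + z * (b * y + ρ ^ s * k) := by linear_combination ρ ^ s * hk - y * hab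
    have h2 : (M : A) ^ s = z ^ s * ρ ^ s := by rw [hM, mul_pow]
    have e1 : s + 1 + t = s + (t + 1) := by ring
    rw [e1] at hg
    rw [← hg, mul_add, ← sub_sub, ← mul_assoc ((M : A) ^ s), ← pow_succ, pow_succ z]
    rw [h2]
    linear_combination z ^ s * h1
end zlem

end

end RD

/-! ### Integers of the form `u + v ζ` -/

namespace RD

section
open NumberField Module
open scoped Classical

variable {K : Type*} [Field K] [NumberField K]

lemma norm_congr {x y : 𝓞 K} {Q : ℕ} (h : (Q : 𝓞 K) ∣ x - y) :
    (Q : ℤ) ∣ Algebra.norm ℤ x - Algebra.norm ℤ y := by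
  obtain ⟨t, ht⟩ := h
  have hx : x = y + Q * t := by linear_combination ht
  rw [← ZMod.intCast_zmod_eq_zero_iff_dvd, Int.cast_sub, sub_eq_zero]
  let b := RingOfIntegers.basis K
  rw [Algebra.norm_eq_matrix_det b, Algebra.norm_eq_matrix_det b]
  have h1 : ∀ M : Matrix (Free.ChooseBasisIndex ℤ (𝓞 K)) (Free.ChooseBasisIndex ℤ (𝓞 K)) ℤ, ((M.det : ℤ) : ZMod Q) = (((Int.castRingHom (ZMod Q)).mapMatrix M).det) := fun M => by
    rw [← RingHom.map_det]; rfl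
  rw [h1, h1]
  congr 1
  rw [hx, map_add, map_mul, map_add, map_mul]
  have : Algebra.leftMulMatrix b (Q : 𝓞 K) = (Q : Matrix _ _ ℤ) := map_natCast _ _
  rw [this, map_natCast]
  have h0 : ((Q : ℕ) : Matrix (Free.ChooseBasisIndex ℤ (𝓞 K)) (Free.ChooseBasisIndex ℤ (𝓞 K)) (ZMod Q)) = 0 := by
    rw [← map_natCast (algebraMap (ZMod Q) (Matrix _ _ (ZMod Q))) Q, ZMod.natCast_self, map_zero]
  rw [h0, zero_mul, add_zero]

lemma norm_int (u : ℤ) : Algebra.norm ℤ ((u : ℤ) : 𝓞 K) = u ^ finrank ℚ K := by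
  have := Algebra.norm_algebraMap (S := 𝓞 K) u
  rw [RingOfIntegers.rank] at this
  simpa using this

lemma not_coprime_of_dvd_norm {z : 𝓞 K} {ℓ : ℕ} (hℓ : ℓ.Prime) (h : (ℓ : ℤ) ∣ Algebra.norm ℤ z) :
    ¬ IsCoprime (ℓ : 𝓞 K) z := by
  rintro ⟨x, y, hxy⟩
  have h1 : (ℓ : 𝓞 K) ∣ 1 - y * z := ⟨x, by linear_combination -hxy⟩
  have h2 := norm_congr h1
  rw [map_one, map_mul] at h2
  have h3 : (ℓ : ℤ) ∣ 1 := by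
    have := dvd_add h2 (h.mul_left (Algebra.norm ℤ y))
    simpa using this
  exact hℓ.one_lt.ne' (by exact_mod_cast Int.eq_one_of_dvd_one (by positivity) h3)

lemma dvd_of_pow_eq_one {A : Type*} [CommRing A] [IsDomain A] {x : A} {e : ℕ} (h : x ^ e = 1) (h1 : x ≠ 1) : 1 - x ∣ (e : A) := by
  have hg : (∑ i ∈ Finset.range e, x ^ i) = 0 := by
    have := mul_geom_sum x e
    rw [h, sub_self] at this
    exact (mul_eq_zero.1 this).resolve_left (sub_ne_zero.2 h1)
  have : (e : A) = ∑ i ∈ Finset.range e, (1 - x ^ i) := by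
    rw [Finset.sum_sub_distrib, hg]; simp
  rw [this]
  exact Finset.dvd_sum fun i _ => by simpa using sub_dvd_pow_sub_pow (1 : A) x i

lemma isCoprime_of_int {A : Type*} [CommRing A] {a b : A} {m n : ℤ} (hmn : IsCoprime m n) 
    (h1 : a ∣ (m : A)) (h2 : ∃ x y : A, (n : A) = x * a + y * b) : IsCoprime a b := by
  obtain ⟨r, s, hrs⟩ := hmn
  obtain ⟨c, hc⟩ := h1
  obtain ⟨x, y, hxy⟩ := h2
  have := congrArg (Int.cast : ℤ → A) hrs
  push_cast at this
  exact ⟨r * c + s * x, s * y, by linear_combination this - r * hc - s * hxy⟩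

/-- If the norm of `u + v ζ` is prime to `v` and `e`, then `u + v ζ` is coprime to its cofactor in its norm,
because it is coprime to each of its other conjugates. -/
lemma exists_cofactor {e : ℕ} [NeZero e] [IsCyclotomicExtension {e} ℚ K] {ζ : 𝓞 K} (hζ : IsPrimitiveRoot ζ e)
    (hgen : Algebra.adjoin ℤ {ζ} = ⊤)
    (u v : ℤ) (hv : IsCoprime (Algebra.norm ℤ ((u : 𝓞 K) + v * ζ)) v)
    (he : IsCoprime (Algebra.norm ℤ ((u : 𝓞 K) + v * ζ)) (e : ℤ)) :
    ∃ ρ : 𝓞 K, (((Algebra.norm ℤ ((u : 𝓞 K) + v * ζ)).natAbs : ℕ) : 𝓞 K) = (u + v * ζ) * ρ ∧ IsCoprime ρ (u + v * ζ) := by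
  have hgal : IsGalois ℚ K := IsCyclotomicExtension.isGalois {e} ℚ K
  set z : 𝓞 K := u + v * ζ with hz
  have hprod := prod_galRestrict_eq_norm ℤ ℚ K (𝓞 K) z
  have hn : (∏ σ : Gal(K/ℚ), galRestrict ℤ ℚ K (𝓞 K) σ z) = ((Algebra.norm ℤ z : ℤ) : 𝓞 K) := by
    rw [hprod, eq_intCast]
    congr 1
    apply Int.cast_injective (α := ℚ)
    rw [← eq_intCast (algebraMap ℤ ℚ), IsIntegralClosure.algebraMap_mk']
    rw [← Algebra.coe_norm_int]
  rw [← Finset.mul_prod_erase _ _ (Finset.mem_univ (1 : Gal(K/ℚ))), map_one] at hn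
  change z * _ = _ at hn
  set ρ := ∏ σ ∈ Finset.univ.erase (1 : Gal(K/ℚ)), galRestrict ℤ ℚ K (𝓞 K) σ z with hρ
  have hcop : IsCoprime ρ z := by
    refine IsCoprime.prod_left fun σ hσ => ?_
    have hσ1 : σ ≠ 1 := (Finset.mem_erase.1 hσ).1
    set g := galRestrict ℤ ℚ K (𝓞 K) σ with hg
    have hgζ : g ζ ≠ ζ := by
      intro h
      apply hσ1
      have : g = 1 := by
        ext x
        have hx : x ∈ Algebra.adjoin ℤ {ζ} := hgen ▸ Algebra.mem_top
        have : ∀ x ∈ Algebra.adjoin ℤ {ζ}, g x = x := fun x hx => by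
          induction hx using Algebra.adjoin_induction with
          | mem x hx => rw [Set.mem_singleton_iff] at hx; rw [hx, h]
          | algebraMap r => exact g.commutes r
          | add x y _ _ hx hy => rw [map_add, hx, hy]
          | mul x y _ _ hx hy => rw [map_mul, hx, hy]
        rw [this x hx]; rfl
      rw [hg] at this
      exact (map_eq_one_iff _ (MulEquiv.injective _)).1 this
    have hunit : IsUnit ζ := hζ.isUnit (NeZero.ne e)
    obtain ⟨ζi, hζi⟩ := hunit.exists_left_inv
    have hd : 1 - g ζ * ζi ∣ (e : 𝓞 K) := by
      refine dvd_of_pow_eq_one ?_ ?_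
      · rw [mul_pow, ← map_pow, hζ.pow_eq_one, map_one, one_mul]
        have := congrArg (· ^ e) hζi
        simpa [mul_pow, hζ.pow_eq_one] using this
      · intro h
        apply hgζ
        linear_combination ζ * h - g ζ * hζi
    obtain ⟨c, hc⟩ := hd
    refine (isCoprime_of_int (hv.mul_right he) ⟨ρ, hn.symm⟩ ⟨ζi * c, -ζi * c, ?_⟩).symm
    have hgz : g z = u + v * g ζ := by
      rw [hz, map_add, map_mul, map_intCast, map_intCast]
    push_cast
    rw [hgz, hc, hz]
    linear_combination (-v * c) * hζi
  rcases Int.natAbs_eq (Algebra.norm ℤ z) with h | h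
  · refine ⟨ρ, ?_, hcop⟩
    rw [hn, ← Int.cast_natCast, ← h]
  · refine ⟨-ρ, ?_, hcop.neg_left⟩
    rw [mul_neg, hn, ← Int.cast_natCast, ← Int.cast_neg, Int.cast_inj]
    linarith

/-- As `v` is invertible modulo `u + v ζ`, the generator `ζ` is congruent to an integer. -/
lemma int_mod_z {A : Type*} [CommRing A] {ζ : A} (hgen : Algebra.adjoin ℤ {ζ} = ⊤) {u v : ℤ} {M : ℕ} {ρ : A}
    (hM : (M : A) = (u + v * ζ) * ρ) (hv : IsCoprime (M : ℤ) v) (y : A) : ∃ c : ℤ, u + v * ζ ∣ y - c := by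
  have hy : y ∈ Algebra.adjoin ℤ {ζ} := hgen ▸ Algebra.mem_top
  induction hy using Algebra.adjoin_induction with
  | mem x hx =>
    rw [Set.mem_singleton_iff] at hx
    subst hx
    obtain ⟨a, b, hab⟩ := hv
    have := congrArg (Int.cast : ℤ → A) hab
    push_cast at this
    exact ⟨-(u * b), b + ρ * a * x, by push_cast; linear_combination (-x) * this + a * x * hM⟩
  | algebraMap r => exact ⟨r, by simp⟩
  | add x y _ _ hx hy =>
    obtain ⟨c, hc⟩ := hx
    obtain ⟨d, hd⟩ := hy
    refine ⟨c + d, ?_⟩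
    push_cast
    rw [show x + y - (c + d) = (x - c) + (y - d) by ring]
    exact dvd_add hc hd
  | mul x y _ _ hx hy =>
    obtain ⟨c, hc⟩ := hx
    obtain ⟨d, hd⟩ := hy
    refine ⟨c * d, ?_⟩
    push_cast
    rw [show x * y - (c * d) = y * (x - c) + c * (y - d) by ring]
    exact dvd_add (hc.mul_left _) (hd.mul_left _)

end

end RD

/-! ### Powers of a unit of infinite order -/

namespace RD

section
open NumberField Module
open scoped Classical

variable {K : Type*} [Field K] [NumberField K]

lemma unit_pow_congr {π : 𝓞 K} (hπ : π ≠ 0) (w : (𝓞 K)ˣ) : ∃ k : ℕ, 0 < k ∧ π ∣ (w : 𝓞 K) ^ k - 1 := by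
  have hfin : Finite (𝓞 K ⧸ Ideal.span {π}) := Ideal.finiteQuotientOfFreeOfNeBot _ (by simpa using hπ)
  let w' := Units.map (Ideal.Quotient.mk (Ideal.span {π})).toMonoidHom w
  refine ⟨orderOf w', orderOf_pos w', ?_⟩
  have h := congrArg Units.val (pow_orderOf_eq_one w')
  rw [← Ideal.mem_span_singleton, ← Ideal.Quotient.eq_zero_iff_mem, map_sub, map_pow, map_one, sub_eq_zero]
  rw [Units.val_pow_eq_pow_val] at h
  exact h

/-- The unit rank is positive because the degree exceeds `2`. -/
lemma exists_unit_inf (hK : 2 < finrank ℚ K) {π : 𝓞 K} (hπ : π ≠ 0) :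
    ∃ w : (𝓞 K)ˣ, π ∣ (w : 𝓞 K) - 1 ∧ ∀ k : ℕ, 0 < k → (w : 𝓞 K) ^ k ≠ 1 := by
  have h1 := InfinitePlace.card_add_two_mul_card_eq_rank K
  have h2 := InfinitePlace.card_eq_nrRealPlaces_add_nrComplexPlaces K
  have h3 : 1 < Fintype.card (InfinitePlace K) := by omega
  obtain ⟨v1, v2, hne⟩ := Fintype.one_lt_card_iff.1 h3
  obtain ⟨u, hu⟩ := Units.dirichletUnitTheorem.exists_unit K v1
  have hlog := hu v2 hne.symm
  obtain ⟨k, hk, hkπ⟩ := unit_pow_congr hπ u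
  refine ⟨u ^ k, by simpa using hkπ, fun j hj h => ?_⟩
  have h4 : v2 ((algebraMap (𝓞 K) K u) ^ (k * j)) = 1 := by
    have := congrArg (algebraMap (𝓞 K) K) h
    rw [pow_mul]
    rw [Units.val_pow_eq_pow_val, map_pow, map_pow, map_one] at this
    rw [this, map_one]
  have h5 := congrArg Real.log h4
  rw [map_pow, Real.log_pow, Real.log_one] at h5
  have : (0 : ℝ) < ((k * j : ℕ) : ℝ) := by exact_mod_cast Nat.mul_pos hk hj
  have h6 := mul_neg_of_pos_of_neg this hlog
  exact absurd h5 h6.ne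

/-- The completion at `z` is a product of copies of `ℤ_ℓ`, `ℓ ∣ M`, in which the powers of the unit `w` are
dense in a neighbourhood of `1`. Consequently, once `α` is close to an integer `a` prime to `M` and `p` is
close to `a`, some `w ^ i α` is as close to `p` as desired. The bound `s` depends only on `z` and `w`. -/
theorem unit_claim {z ρ : 𝓞 K} {M : ℕ} (hM0 : M ≠ 0) (hM : (M : 𝓞 K) = z * ρ) (hc : IsCoprime ρ z)
    (h0 : ∀ y : 𝓞 K, ∃ c : ℤ, z ∣ y - c)
    (hprop : ∀ ℓ : ℕ, ℓ.Prime → ℓ ∣ M → ¬ IsCoprime (ℓ : 𝓞 K) z)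
    (w : 𝓞 K) (hwu : IsUnit w) (hw : ∀ k : ℕ, 0 < k → w ^ k ≠ 1) :
    ∃ s : ℕ, 0 < s ∧ ∀ (α : 𝓞 K) (a : ℤ), z ^ s ∣ α - a → IsCoprime a (M : ℤ) → ∀ p : ℤ, (M : ℤ) ^ s ∣ p - a →
      ∀ m : ℕ, ∃ i : ℕ, z ^ m ∣ w ^ i * α - p := by
  obtain ⟨w', hw'⟩ := hwu
  have hM0' : (M : 𝓞 K) ≠ 0 := by exact_mod_cast hM0
  obtain ⟨k, hk, T', hT'⟩ := unit_pow_congr (pow_ne_zero 2 hM0') w'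
  rw [hw'] at hT'
  set T : 𝓞 K := w ^ k - 1 with hT
  have hTne : T ≠ 0 := sub_ne_zero.2 (hw k hk)
  set s := Ideal.absNorm (Ideal.span {T}) + 2 with hs
  have hzM : ∀ n, z ^ n ∣ ((M : 𝓞 K)) ^ n := fun n => pow_dvd_pow_of_dvd ⟨ρ, hM⟩ n
  refine ⟨s, by omega, fun α a hαa ha p hp m => ?_⟩
  -- an integer approximating `T`
  obtain ⟨τ', hτ'⟩ := zlem hM hc h0 (s + m) 0 T'
  simp only [pow_zero, one_mul, zero_add] at hτ'
  set τ : ℤ := M ^ 2 * τ' with hτ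
  have hTτ : z ^ (s + m) ∣ T - τ := by
    rw [hT', hτ]; push_cast
    rw [← mul_sub]
    exact hτ'.mul_left _
  have hr : ∀ r : ℕ, r.Prime → r ∣ M → ¬ ((r : ℤ) ^ s ∣ τ) := by
    intro r hr hrM hrτ
    set I : Ideal (𝓞 K) := Ideal.span {(r : 𝓞 K), z} with hI
    have hI1 : I ≠ ⊤ := by
      intro h
      apply hprop r hr hrM
      rw [← Ideal.isCoprime_span_singleton_iff, Ideal.isCoprime_iff_sup_eq, ← h, hI, Ideal.span_insert]
    have hrI : (r : 𝓞 K) ∈ I := Ideal.subset_span (by simp)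
    have hzI : z ∈ I := Ideal.subset_span (by simp)
    have hI0 : I ≠ ⊥ := by
      intro h
      rw [h, Ideal.mem_bot] at hrI
      exact hr.ne_zero (by exact_mod_cast hrI)
    have hTI : T ∈ I ^ s := by
      obtain ⟨c, hc⟩ := hTτ
      obtain ⟨d, hd⟩ := hrτ
      have : T = (r : 𝓞 K) ^ s * d + z ^ s * (z ^ m * c) := by
        have h2 : ((τ : ℤ) : 𝓞 K) = (r : 𝓞 K) ^ s * d := by rw [hd]; push_cast; ring
        rw [← h2]; linear_combination hc
      rw [this]
      exact Ideal.add_mem _ (Ideal.mul_mem_right _ _ (Ideal.pow_mem_pow hrI s)) (Ideal.mul_mem_right _ _ (Ideal.pow_mem_pow hzI s))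
    have h1 : Ideal.absNorm (I ^ s) ∣ Ideal.absNorm (Ideal.span {T}) :=
      Ideal.absNorm_dvd_absNorm_of_le ((Ideal.span_singleton_le_iff_mem _).2 hTI)
    have hpos : 0 < Ideal.absNorm (Ideal.span {T}) :=
      Nat.pos_of_ne_zero (Ideal.absNorm_eq_zero_iff.not.2 (by simpa using hTne))
    have h2 := Nat.le_of_dvd hpos h1
    rw [map_pow] at h2
    have h3 : 2 ≤ Ideal.absNorm I := by
      have a1 : Ideal.absNorm I ≠ 0 := Ideal.absNorm_eq_zero_iff.not.2 hI0
      have a2 : Ideal.absNorm I ≠ 1 := Ideal.absNorm_eq_one_iff.not.2 hI1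
      omega
    have h4 : 2 ^ s ≤ Ideal.absNorm I ^ s := Nat.pow_le_pow_left h3 s
    have h5 : s < 2 ^ s := Nat.lt_two_pow_self
    omega
  -- extract the part of `τ` supported on `M`
  obtain ⟨κ, f, hκf, hκ, hf⟩ : ∃ κ f : ℤ, IsCoprime κ f ∧ τ = (Int.gcd τ (M ^ s) : ℤ) * κ ∧ (M : ℤ) ^ s = (Int.gcd τ (M ^ s) : ℤ) * f := by
    have hg : 0 < Int.gcd τ ((M : ℤ) ^ s) := Int.gcd_pos_of_ne_zero_right _ (by positivity)
    obtain ⟨κ, f, h1, h2, h3⟩ := Int.exists_gcd_one hg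
    exact ⟨κ, f, Int.isCoprime_iff_gcd_eq_one.2 h1, by linarith, by linarith⟩
  set d : ℤ := (Int.gcd τ (M ^ s) : ℤ) with hd
  have hdM2 : (M : ℤ) ^ 2 ∣ d := by
    rw [hd]
    refine Int.dvd_coe_gcd ⟨τ', hτ⟩ (pow_dvd_pow _ (by omega))
  have hκM : IsCoprime κ (M : ℤ) := by
    rw [Int.isCoprime_iff_gcd_eq_one]
    by_contra hne
    obtain ⟨r, hrp, hrd⟩ := Nat.exists_prime_and_dvd hne
    have h1 : (r : ℤ) ∣ κ := (Int.natCast_dvd_natCast.2 hrd).trans (Int.gcd_dvd_left _ _)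
    have h2 : (r : ℤ) ∣ (M : ℤ) := (Int.natCast_dvd_natCast.2 hrd).trans (Int.gcd_dvd_right _ _)
    have h3 : IsCoprime ((r : ℤ) ^ s) f := (hκf.of_isCoprime_of_dvd_left h1).pow_left
    have h4 : (r : ℤ) ^ s ∣ d * f := hf ▸ pow_dvd_pow_of_dvd h2 s
    exact hr r hrp (by exact_mod_cast h2) ((h3.dvd_of_dvd_mul_right h4).trans ⟨κ, hκ⟩)
  -- refine `a`
  obtain ⟨y, hy⟩ := hαa
  obtain ⟨x, hx⟩ := zlem hM hc h0 m s y
  set a' : ℤ := a + M ^ s * x with ha'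
  have hαa' : z ^ (s + m) ∣ α - a' := by
    rw [ha']; push_cast
    rwa [show α - (a + (M : 𝓞 K) ^ s * x) = z ^ s * y - (M : 𝓞 K) ^ s * x by linear_combination hy]
  have ha'M : IsCoprime a' ((M : ℤ) ^ (s + m)) := by
    refine IsCoprime.pow_right ?_
    rw [ha', show (M : ℤ) ^ s = M * M ^ (s - 1) by rw [← pow_succ']; congr 1, mul_assoc]
    exact ha.add_mul_left_left _
  obtain ⟨b, c, hbc⟩ := ha'M
  have hγ : d ∣ b * p - 1 := by
    have hdMs : d ∣ (M : ℤ) ^ s := ⟨f, hf⟩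
    refine hdMs.trans ?_
    obtain ⟨g, hg⟩ := hp
    refine ⟨b * g - b * x - c * M ^ m, ?_⟩
    rw [pow_add] at hbc
    linear_combination b * hg + hbc + b * ha'
  obtain ⟨i, hi⟩ := int_unit_claim hdM2 hκM hγ (s + m)
  refine ⟨k * i, (pow_dvd_pow z (Nat.le_add_left m s)).trans ?_⟩
  have e1 : z ^ (s + m) ∣ w ^ (k * i) - ((1 + d * κ : ℤ) : 𝓞 K) ^ i := by
    rw [pow_mul]
    refine Dvd.dvd.trans ?_ (sub_dvd_pow_sub_pow _ _ i)
    rw [← hκ]; push_cast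
    rwa [show w ^ k - (1 + (τ : 𝓞 K)) = T - τ by rw [hT]; ring]
  have e2 : (M : ℤ) ^ (s + m) ∣ a' * (1 + d * κ) ^ i - p := by
    obtain ⟨g, hg⟩ := hi
    exact ⟨-p * c - a' * d * g, by linear_combination (-a') * hg + p * hbc⟩
  have e3 : z ^ (s + m) ∣ (a' : 𝓞 K) * ((1 + d * κ : ℤ) : 𝓞 K) ^ i - p := by
    refine (hzM (s + m)).trans ?_
    have := map_dvd (Int.castRingHom (𝓞 K)) e2
    simpa using this
  rw [show w ^ (k * i) * α - p = w ^ (k * i) * (α - a') + a' * (w ^ (k * i) - ((1 + d * κ : ℤ) : 𝓞 K) ^ i)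
    + ((a' : 𝓞 K) * ((1 + d * κ : ℤ) : 𝓞 K) ^ i - p) by ring]
  exact dvd_add (dvd_add (hαa'.mul_left _) (e1.mul_left _)) e3

end

end RD

/-! ### Rows whose second entry is a unit times an `E`-th power -/

namespace RD

section
open NumberField Module
open scoped Classical

variable {K : Type*} [Field K] [NumberField K]

/-- The Chinese remainder theorem for three moduli, with an invertible solution. -/
lemma crt3 {m1 m2 m3 t1 t2 t3 : ℤ} (h12 : IsCoprime m1 m2) (h13 : IsCoprime m1 m3) (h23 : IsCoprime m2 m3)
    (h1 : IsCoprime t1 m1) (h2 : IsCoprime t2 m2) (h3 : IsCoprime t3 m3) :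
    ∃ c : ℤ, m1 ∣ c - t1 ∧ m2 ∣ c - t2 ∧ m3 ∣ c - t3 ∧ IsCoprime c (m1 * m2 * m3) := by
  obtain ⟨a, b, hab⟩ := h12
  obtain ⟨r, s, hrs⟩ := h13.mul_left h23
  have e1 : m1 ∣ (t3 * (r * (m1 * m2)) + (t2 * (a * m1) + t1 * (b * m2)) * (s * m3)) - t1 :=
    ⟨t3 * r * m2 + t2 * a * s * m3 - t1 * a * s * m3 - t1 * r * m2, by
      linear_combination t1 * hrs + t1 * s * m3 * hab⟩
  have e2 : m2 ∣ (t3 * (r * (m1 * m2)) + (t2 * (a * m1) + t1 * (b * m2)) * (s * m3)) - t2 :=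
    ⟨t3 * r * m1 + t1 * b * s * m3 - t2 * b * s * m3 - t2 * r * m1, by
      linear_combination t2 * hrs + t2 * s * m3 * hab⟩
  have e3 : m3 ∣ (t3 * (r * (m1 * m2)) + (t2 * (a * m1) + t1 * (b * m2)) * (s * m3)) - t3 :=
    ⟨(t2 * (a * m1) + t1 * (b * m2)) * s - t3 * s, by linear_combination t3 * hrs⟩
  have key : ∀ {c t m : ℤ}, m ∣ c - t → IsCoprime t m → IsCoprime c m := by
    rintro c t m ⟨x, hx⟩ h
    rw [show c = t + m * x by linear_combination hx]
    exact h.add_mul_left_left x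
  exact ⟨_, e1, e2, e3, ((key e1 h1).mul_right (key e2 h2)).mul_right (key e3 h3)⟩

/-- Product of the primes dividing `a` but not `b`. -/
def pr (a b : ℕ) : ℕ := ∏ ℓ ∈ a.primeFactors.filter (fun ℓ => ¬ ℓ ∣ b), ℓ

lemma dvd_pr {a b ℓ : ℕ} (ha : a ≠ 0) (hℓ : ℓ.Prime) (h1 : ℓ ∣ a) (h2 : ¬ ℓ ∣ b) : ℓ ∣ pr a b :=
  Finset.dvd_prod_of_mem (fun x => x) (by simp [hℓ, h1, h2, ha])

lemma pr_ne_zero (a b : ℕ) : pr a b ≠ 0 :=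
  Finset.prod_ne_zero_iff.2 fun ℓ hℓ => (Nat.prime_of_mem_primeFactors (Finset.mem_filter.1 hℓ).1).ne_zero

lemma pr_coprime (a b : ℕ) : (pr a b).Coprime b :=
  Nat.Coprime.prod_left fun ℓ hℓ => by
    have := Finset.mem_filter.1 hℓ
    exact (Nat.Prime.coprime_iff_not_dvd (Nat.prime_of_mem_primeFactors this.1)).2 this.2

lemma prime_dvd_pr {a b ℓ : ℕ} (hℓ : ℓ.Prime) (h : ℓ ∣ pr a b) : ℓ ∣ a := by
  obtain ⟨q, hq, hd⟩ := (Nat.Prime.prime hℓ).exists_mem_finset_dvd h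
  have hq' := Nat.prime_of_mem_primeFactors (Finset.mem_filter.1 hq).1
  rw [(Nat.prime_dvd_prime_iff_eq hℓ hq').1 hd]
  exact Nat.dvd_of_mem_primeFactors (Finset.mem_filter.1 hq).1

/-- Reduction of a row `(α, η z₀ ^ E)`. The integer `z₀` is lifted modulo `v` to `z = u + v ζ` whose norm, up
to sign `M`, is prime to `E o`. A prime `p` is chosen with `p ≡ a mod M ^ s`, where `a` approximates `α` at `z`, and
such that `(p - 1) / E` is prime to `o`; then some multiple `m` of `p - 1` is congruent to `E` modulo `o`, so
that `z ^ m` represents `z₀ ^ E` modulo `α`. A power of a unit of infinite order brings `α` to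
`p` modulo `z ^ m`, and `z ^ m ≡ 1 mod p` by `fermat`. -/
theorem red_power {e : ℕ} [NeZero e] [IsCyclotomicExtension {e} ℚ K] {ζ : 𝓞 K} (hζ : IsPrimitiveRoot ζ e)
    (hgen : Algebra.adjoin ℤ {ζ} = ⊤) (hK : 2 < finrank ℚ K) {E : ℕ} (hE0 : E ≠ 0) (heE : e ∣ E) (h2E : 2 ∣ E)
    {π : 𝓞 K} (hπ : π ≠ 0) (hπE : π ∣ (E : 𝓞 K)) {α : 𝓞 K} (hα : π ∣ α - 1) {v o : ℕ} (hv : α ∣ (v : 𝓞 K))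
    (hvE : v.Coprime E) {z0 : ℤ} (hz0 : IsCoprime z0 (v : ℤ)) (ho : 1 < o) (hzo : α ∣ (z0 : 𝓞 K) ^ o - 1) (η : (𝓞 K)ˣ) :
    Red π α (η * (z0 : 𝓞 K) ^ E) := by
  have hEo : E * o ≠ 0 := by positivity
  obtain ⟨u, hu1, hu2⟩ : ∃ u : ℤ, (v : ℤ) ∣ u - z0 ∧ ((pr (E * o) v : ℕ) : ℤ) ∣ u := by
    obtain ⟨r, s, hrs⟩ := Nat.isCoprime_iff_coprime.2 (pr_coprime (E * o) v)
    exact ⟨z0 * (r * (pr (E * o) v : ℕ)), ⟨-z0 * s, by linear_combination z0 * hrs⟩, ⟨z0 * r, by ring⟩⟩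
  set z : 𝓞 K := u + ((v : ℤ) : 𝓞 K) * ζ with hz
  set n : ℤ := Algebra.norm ℤ z with hn
  have huv : IsCoprime u (v : ℤ) := by
    obtain ⟨x, hx⟩ := hu1
    rw [show u = z0 + v * x by linear_combination hx]
    exact hz0.add_mul_left_left x
  have hnv : IsCoprime n (v : ℤ) := by
    have h1 : ((v : ℕ) : 𝓞 K) ∣ z - (u : ℤ) := ⟨ζ, by rw [hz]; push_cast; ring⟩
    obtain ⟨x, hx⟩ := norm_congr h1
    rw [norm_int] at hx
    rw [show n = u ^ finrank ℚ K + v * x by linear_combination hx]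
    exact huv.pow_left.add_mul_left_left x
  have hnu : IsCoprime n u := by
    have h1 : ((u.natAbs : ℕ) : 𝓞 K) ∣ z - ((v : ℤ) : 𝓞 K) * ζ := by
      rw [hz, add_sub_cancel_right]
      have : ((u.natAbs : ℕ) : ℤ) ∣ u := Int.natAbs_dvd.2 dvd_rfl
      have := map_dvd (Int.castRingHom (𝓞 K)) this
      simpa using this
    have h2 := norm_congr h1
    obtain ⟨x, hx⟩ := Int.natAbs_dvd.1 h2
    rw [map_mul, norm_int] at hx
    rw [show n = v ^ finrank ℚ K * Algebra.norm ℤ ζ + u * x by linear_combination hx]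
    refine IsCoprime.add_mul_left_left (IsCoprime.mul_left huv.symm.pow_left ?_) x
    have : IsUnit (Algebra.norm ℤ ζ) := (hζ.isUnit (NeZero.ne e)).map _
    obtain ⟨y, hy⟩ := this.exists_left_inv
    exact ⟨y, 0, by rw [hy]; ring⟩
  have hpn : ∀ ℓ : ℕ, ℓ.Prime → ℓ ∣ E * o → ¬ ((ℓ : ℤ) ∣ n) := by
    intro ℓ hℓ h h'
    have hone : ∀ {t : ℤ}, IsCoprime n t → (ℓ : ℤ) ∣ t → False := by
      intro t ht hℓt
      have := ht.isUnit_of_dvd' h' hℓt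
      rw [Int.isUnit_iff] at this
      have := hℓ.one_lt
      omega
    by_cases hℓv : ℓ ∣ v
    · exact hone hnv (by exact_mod_cast hℓv)
    · exact hone hnu ((Int.natCast_dvd_natCast.2 (dvd_pr hEo hℓ h hℓv)).trans hu2)
  have hn0 : n ≠ 0 := by
    intro h
    exact hpn 2 Nat.prime_two (h2E.mul_right o) (h ▸ dvd_zero _)
  set M : ℕ := n.natAbs with hM
  have hM0 : M ≠ 0 := Int.natAbs_ne_zero.2 hn0
  have hMEo : M.Coprime (E * o) := by
    rw [Nat.coprime_iff_gcd_eq_one]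
    by_contra hne
    obtain ⟨ℓ, hℓ, hd⟩ := Nat.exists_prime_and_dvd hne
    exact hpn ℓ hℓ (hd.trans (Nat.gcd_dvd_right _ _)) (Int.natCast_dvd.2 (hd.trans (Nat.gcd_dvd_left _ _)))
  have hME : M.Coprime E := hMEo.coprime_dvd_right (Dvd.intro _ rfl)
  have hMo : M.Coprime o := hMEo.coprime_dvd_right (Dvd.intro_left _ rfl)
  have hne : IsCoprime n (e : ℤ) := by
    rw [Int.isCoprime_iff_gcd_eq_one]
    exact hME.coprime_dvd_right heE
  obtain ⟨ρ, hρ, hρc⟩ := exists_cofactor hζ hgen u v hnv hne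
  have h0 := int_mod_z hgen hρ (by rw [Int.isCoprime_iff_gcd_eq_one] at hnv ⊢; exact hnv)
  have hprop : ∀ ℓ : ℕ, ℓ.Prime → ℓ ∣ M → ¬ IsCoprime (ℓ : 𝓞 K) z := fun ℓ hℓ hd =>
    not_coprime_of_dvd_norm hℓ (Int.natCast_dvd.2 hd)
  obtain ⟨w, hwπ, hw⟩ := exists_unit_inf hK hπ
  obtain ⟨s, hs0, hs⟩ := unit_claim hM0 hρ hρc h0 hprop w w.isUnit hw
  obtain ⟨a, ha⟩ := zlem hρ hρc h0 s 0 α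
  simp only [pow_zero, one_mul, zero_add] at ha
  have hzz0 : α ∣ z - z0 := by
    have h1 := map_dvd (Int.castRingHom (𝓞 K)) hu1
    rw [hz, show (u : 𝓞 K) + ((v : ℤ) : 𝓞 K) * ζ - z0 = (u - z0) + ((v : ℤ) : 𝓞 K) * ζ by ring]
    simp only [eq_intCast, Int.cast_sub, Int.cast_natCast] at h1 ⊢
    exact dvd_add (hv.trans h1) (hv.mul_right _)
  have hzo1 : α ∣ z ^ o - 1 := by
    have := hzz0.trans (sub_dvd_pow_sub_pow z (z0 : 𝓞 K) o)
    simpa using dvd_add this hzo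
  have hαz : IsCoprime α z := by
    obtain ⟨x, hx⟩ := hzo1
    refine ⟨-x, z ^ (o - 1), ?_⟩
    rw [← pow_succ, show o - 1 + 1 = o by omega]
    linear_combination hx
  have haz : IsCoprime (a : 𝓞 K) z := by
    obtain ⟨x, hx⟩ := ha
    rw [show (a : 𝓞 K) = α + z * (-(z ^ (s - 1) * x)) by
      have : z ^ s = z * z ^ (s - 1) := by rw [← pow_succ']; congr 1; omega
      rw [this] at hx
      linear_combination -hx]
    exact hαz.add_mul_left_left _
  have haM : IsCoprime a (M : ℤ) := by
    rw [Int.isCoprime_iff_gcd_eq_one]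
    by_contra hne
    obtain ⟨ℓ, hℓ, hd⟩ := Nat.exists_prime_and_dvd hne
    have h1 : (ℓ : ℤ) ∣ a := (Int.natCast_dvd_natCast.2 hd).trans (Int.gcd_dvd_left _ _)
    have h2 : (ℓ : ℤ) ∣ (M : ℤ) := (Int.natCast_dvd_natCast.2 hd).trans (Int.gcd_dvd_right _ _)
    refine hprop ℓ hℓ (by exact_mod_cast h2) (haz.of_isCoprime_of_dvd_left ?_)
    have := map_dvd (Int.castRingHom (𝓞 K)) h1
    simpa using this
  -- the auxiliary rational prime
  obtain ⟨c, hc1, hc2, hc3, hc⟩ : ∃ c : ℤ, (M : ℤ) ^ s ∣ c - a ∧ (E : ℤ) ^ 2 ∣ c - (1 + E) ∧ ((pr o E : ℕ) : ℤ) ∣ c - 2 ∧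
      IsCoprime c ((M : ℤ) ^ s * (E : ℤ) ^ 2 * (pr o E : ℕ)) := by
    have hME' : IsCoprime (M : ℤ) E := Nat.isCoprime_iff_coprime.2 hME
    have hpE : IsCoprime ((pr o E : ℕ) : ℤ) E := Nat.isCoprime_iff_coprime.2 (pr_coprime o E)
    refine crt3 (hME'.pow) (IsCoprime.pow_left ?_) hpE.symm.pow_left haM.pow_right ?_ ?_
    · refine Nat.isCoprime_iff_coprime.2 ?_
      rw [Nat.coprime_iff_gcd_eq_one]
      by_contra hne
      obtain ⟨ℓ, hℓ, hd⟩ := Nat.exists_prime_and_dvd hne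
      have h1 := prime_dvd_pr hℓ (hd.trans (Nat.gcd_dvd_right _ _))
      exact hℓ.one_lt.ne' (Nat.dvd_one.1 (hMo ▸ Nat.dvd_gcd (hd.trans (Nat.gcd_dvd_left _ _)) h1))
    · refine IsCoprime.pow_right ?_
      simpa using (isCoprime_one_left (x := (E : ℤ))).add_mul_left_left 1
    · obtain ⟨E', hE'⟩ := h2E
      exact (hpE.of_isCoprime_of_dvd_right ⟨E', by rw [hE']; push_cast; ring⟩).symm
  obtain ⟨p, hpgt, hp, hpc⟩ := Nat.forall_exists_prime_gt_and_zmodEq 1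
    (q := M ^ s * E ^ 2 * pr o E) (a := c) (by have := pr_ne_zero o E; positivity) (by push_cast; exact hc)
  have hpc' := hpc.symm.dvd
  push_cast at hpc'
  obtain ⟨g, hg⟩ := hpc'
  have hpa : (M : ℤ) ^ s ∣ p - a := by
    obtain ⟨x, hx⟩ := hc1
    exact ⟨E ^ 2 * (pr o E : ℕ) * g + x, by linear_combination hg + hx⟩
  obtain ⟨x2, hx2⟩ : ∃ x2 : ℤ, (p : ℤ) - 1 = E * (1 + E * x2) := by
    obtain ⟨x, hx⟩ := hc2
    exact ⟨M ^ s * (pr o E : ℕ) * g + x, by linear_combination hg + hx⟩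
  have hp3 : ((pr o E : ℕ) : ℤ) ∣ p - 2 := by
    obtain ⟨x, hx⟩ := hc3
    exact ⟨M ^ s * E ^ 2 * g + x, by linear_combination hg + hx⟩
  obtain ⟨t, ht⟩ : E ∣ p - 1 := by
    have : (E : ℤ) ∣ ((p - 1 : ℕ) : ℤ) := by
      rw [Nat.cast_sub hp.one_lt.le]
      exact ⟨_, by exact_mod_cast hx2⟩
    exact_mod_cast this
  have hpt : (p : ℤ) - 1 = E * t := by
    rw [← Nat.cast_one, ← Nat.cast_sub hp.one_lt.le, ht]; push_cast; ring
  have htx : (t : ℤ) = 1 + E * x2 := by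
    have : (E : ℤ) ≠ 0 := by exact_mod_cast hE0
    exact mul_left_cancel₀ this (by rw [← hpt, hx2])
  have hto : t.Coprime o := by
    rw [Nat.coprime_iff_gcd_eq_one]
    by_contra hne
    obtain ⟨ℓ, hℓ, hd⟩ := Nat.exists_prime_and_dvd hne
    have hℓt : (ℓ : ℤ) ∣ t := Int.natCast_dvd_natCast.2 (hd.trans (Nat.gcd_dvd_left _ _))
    have hℓo : ℓ ∣ o := hd.trans (Nat.gcd_dvd_right _ _)
    have habs : ¬ ((ℓ : ℤ) ∣ 1) := fun h => hℓ.one_lt.ne' (Nat.dvd_one.1 (by exact_mod_cast h))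
    by_cases hℓE : ℓ ∣ E
    · apply habs
      have : (ℓ : ℤ) ∣ E * x2 := (Int.natCast_dvd_natCast.2 hℓE).mul_right _
      have := dvd_sub hℓt this
      rwa [htx, add_sub_cancel_right] at this
    · apply habs
      have h1 := (Int.natCast_dvd_natCast.2 (dvd_pr (by omega) hℓ hℓo hℓE)).trans hp3
      have h2 : (ℓ : ℤ) ∣ p - 1 := hpt ▸ hℓt.mul_left _
      have := dvd_sub h2 h1
      simpa using this
  obtain ⟨y, hy⟩ := Nat.exists_mul_mod_eq_one_of_coprime hto ho
  have hy' := Nat.div_add_mod (t * y) o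
  rw [hy.2] at hy'
  set m := (p - 1) * y with hm
  have hmE : m = E + o * (E * (t * y / o)) := by
    rw [hm, ht, mul_assoc, ← hy']
    have : (o * (t * y / o) + 1) / o = t * y / o := by rw [hy']
    rw [this]; ring
  have hm0 : 0 < m := by rw [hmE]; positivity
  have hzm : α ∣ η * z ^ m - η * (z0 : 𝓞 K) ^ E := by
    have h1 : α ∣ z ^ E - (z0 : 𝓞 K) ^ E := hzz0.trans (sub_dvd_pow_sub_pow _ _ _)
    have h2 : α ∣ (z ^ o) ^ (E * (t * y / o)) - 1 := by
      have := hzo1.trans (sub_dvd_pow_sub_pow (z ^ o) 1 (E * (t * y / o)))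
      simpa using this
    rw [hmE, pow_add, pow_mul, show (η : 𝓞 K) * (z ^ E * (z ^ o) ^ (E * (t * y / o))) - η * (z0 : 𝓞 K) ^ E
      = η * z ^ E * ((z ^ o) ^ (E * (t * y / o)) - 1) + η * (z ^ E - (z0 : 𝓞 K) ^ E) by ring]
    exact dvd_add (h2.mul_left _) (h1.mul_left _)
  refine Red.right hzm ?_
  obtain ⟨i, hi⟩ := hs α a ha haM p hpa m
  have hwi : π ∣ ((w ^ i : (𝓞 K)ˣ) : 𝓞 K) - 1 := by
    have := hwπ.trans (sub_dvd_pow_sub_pow (w : 𝓞 K) 1 i)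
    simpa using this
  refine Red.unit _ _ (w ^ i) hwi ?_
  have hpπ : π ∣ (p : 𝓞 K) - 1 := by
    refine hπE.trans ⟨t, ?_⟩
    have := congrArg (Int.cast : ℤ → 𝓞 K) hpt
    push_cast at this
    exact this
  have hpz : IsCoprime (p : 𝓞 K) z := by
    obtain ⟨x, hx⟩ := hi
    have h1 : IsCoprime ((w : 𝓞 K) ^ i * α) z := by
      refine IsCoprime.mul_left (IsCoprime.pow_left ?_) hαz
      obtain ⟨b, hb⟩ := w.isUnit.exists_left_inv
      exact ⟨b, 0, by rw [hb]; ring⟩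
    rw [show (p : 𝓞 K) = (w : 𝓞 K) ^ i * α + z * (-(z ^ (m - 1) * x)) by
      have : z ^ m = z * z ^ (m - 1) := by rw [← pow_succ']; congr 1; omega
      rw [this] at hx
      push_cast at hx
      linear_combination -hx]
    exact h1.add_mul_left_left _
  set η' : (𝓞 K)ˣ := (w ^ i)⁻¹ * η with hη'
  rw [show (((w ^ i)⁻¹ : (𝓞 K)ˣ) : 𝓞 K) * (η * z ^ m) = η' * z ^ m by rw [hη']; push_cast; ring]
  refine Red.left (α' := (p : 𝓞 K)) ?_ ?_
  · rw [show π * ((η' : 𝓞 K) * z ^ m) = η' * (π * z ^ m) by ring, Units.mul_left_dvd]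
    refine IsCoprime.mul_dvd ?_ ?_ ?_
    · refine IsCoprime.pow_right ?_
      obtain ⟨b1, hb1⟩ := hπE
      obtain ⟨r1, r2, hr⟩ := Nat.isCoprime_iff_coprime.2 hME
      have hr' := congrArg (Int.cast : ℤ → 𝓞 K) hr
      push_cast at hr'
      exact ⟨r2 * b1, r1 * ρ, by linear_combination hr' - r2 * hb1 - r1 * hρ⟩
    · rw [show (p : 𝓞 K) - ((w ^ i : (𝓞 K)ˣ) : 𝓞 K) * α = (p - 1) - ((w ^ i : (𝓞 K)ˣ) : 𝓞 K) * (α - 1)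
        - (((w ^ i : (𝓞 K)ˣ) : 𝓞 K) - 1) by ring]
      exact dvd_sub (dvd_sub hpπ (hα.mul_left _)) hwi
    · rw [← neg_sub, dvd_neg, Units.val_pow_eq_pow_val]
      rw [hz]
      simpa only [Int.cast_natCast] using hi
  · refine Red.right (β' := (η' : 𝓞 K)) ?_ (Red.of_unit η' hpπ)
    have h1 := fermat hgen hζ.pow_eq_one hp (heE.trans ⟨t, ht⟩) z
    have h2 : (p : 𝓞 K) ∣ z * (z ^ (p - 1) - 1) := by
      rw [mul_sub, ← pow_succ', show p - 1 + 1 = p by have := hp.pos; omega, mul_one]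
      exact h1
    have h3 := hpz.dvd_of_dvd_mul_left h2
    have h4 : (p : 𝓞 K) ∣ z ^ m - 1 := by
      have := h3.trans (sub_dvd_pow_sub_pow (z ^ (p - 1)) 1 y)
      rw [hm, pow_mul]
      simpa using this
    rw [show (η' : 𝓞 K) - η' * z ^ m = -(η' * (z ^ m - 1)) by ring, dvd_neg]
    exact h4.mul_left _

end

end RD

/-! ### Norms of `1 + x ζ ^ i` -/

namespace RD

section
open NumberField Module
open scoped Classical

open Polynomial in
/-- The first two coefficients of a cyclotomic polynomial of squarefree index are `1` and `±1` up to sign. -/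
lemma cyc_eval (M : ℕ) (hM : Squarefree M) : ∃ s ε : ℤ, s ^ 2 = 1 ∧ ε ^ 2 = 1 ∧ (M ≠ 1 → s = 1) ∧ (M = 1 → s = -1) ∧
    ∀ x : ℤ, x ^ 2 ∣ (cyclotomic M ℤ).eval x - s * (1 + ε * x) := by
  induction M using induction_on_primes with
  | zero => exact absurd hM (by simp)
  | one => exact ⟨-1, -1, by norm_num, by norm_num, by simp, by simp, fun x => by
    rw [cyclotomic_one, eval_sub, eval_X, eval_one, show x - 1 - -1 * (1 + -1 * x) = 0 by ring]; exact dvd_zero _⟩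
  | prime_mul p a hp ih =>
    have ha : Squarefree a := hM.squarefree_of_dvd (Dvd.intro_left _ rfl)
    have hpa : ¬ p ∣ a := by
      rintro ⟨b, rfl⟩
      exact hp.one_lt.ne' (by simpa using hM p ⟨b, by ring⟩)
    obtain ⟨s, ε, hs, hε, -, -, h⟩ := ih ha
    refine ⟨1, -ε, by norm_num, by rw [neg_sq, hε], fun _ => rfl, fun h => ?_, fun x => ?_⟩
    · exact absurd (Nat.eq_one_of_mul_eq_one_right h) hp.one_lt.ne'
    have h1 := congrArg (eval x) (cyclotomic_expand_eq_cyclotomic_mul hp hpa ℤ)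
    rw [expand_eval, eval_mul, mul_comm a p] at h1
    obtain ⟨A, hA⟩ := h x
    obtain ⟨B, hB⟩ := h (x ^ p)
    obtain ⟨q, rfl⟩ : ∃ q, p = q + 2 := ⟨p - 2, by have := hp.two_le; omega⟩
    set C := eval x (cyclotomic ((q + 2) * a) ℤ)
    have e1 : x ^ (q + 2) = x ^ q * x ^ 2 := pow_add _ _ _
    generalize eval (x ^ (q + 2)) (cyclotomic a ℤ) = P at *
    generalize eval x (cyclotomic a ℤ) = Q at *
    rw [e1] at hB
    refine ⟨(C - 0) * ε ^ 2 - s * (1 - ε * x) * C * A + s * (1 - ε * x) * (s * ε * x ^ q + x ^ (2 * q) * x ^ 2 * B), ?_⟩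
    have hs2 : s * s = 1 := by rw [← hs]; ring
    have e2 : x ^ (2 * q) = x ^ q * x ^ q := by rw [two_mul, pow_add]
    rw [e2]
    linear_combination (-s * (1 - ε * x)) * h1 + s * (1 - ε * x) * hB - s * (1 - ε * x) * C * hA - (C * (1 - ε ^ 2 * x ^ 2) - (1 - ε * x)) * hs

open Polynomial in
/-- The norm of `x + ζ_M` from `ℚ(ζ_M)` to `ℚ`. -/
noncomputable def gcy (M : ℕ) (x : ℤ) : ℤ := (-1) ^ Nat.totient M * (cyclotomic M ℤ).eval (-x)

/-- First-order expansion of `gcy` at `0` for odd squarefree index. -/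
lemma gcyA {m : ℕ} (hm : Squarefree m) (ho : Odd m) : ∃ ε : ℤ, ε ^ 2 = 1 ∧ ∀ x : ℤ, x ^ 2 ∣ gcy m x - (1 + ε * x) := by
  obtain ⟨s, ε, hs, hε, h1, h2, h⟩ := cyc_eval m hm
  refine ⟨-ε, by rw [neg_sq, hε], fun x => ?_⟩
  have := h (-x)
  rw [neg_sq] at this
  by_cases hm1 : m = 1
  · have hs1 := h2 hm1
    subst hm1 hs1
    obtain ⟨c, hc⟩ := this
    refine ⟨-c, ?_⟩
    rw [gcy, Nat.totient_one, pow_one]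
    linear_combination -hc
  · have hs1 := h1 hm1
    subst hs1
    have : 2 < m := by
      rcases ho with ⟨k, rfl⟩
      omega
    rw [gcy, (Nat.totient_even this).neg_one_pow]
    convert h (-x) using 1 <;> ring

open Polynomial in
/-- Second-order expansion of `gcy` at `0` for four times an odd squarefree index, from `Φ_{4m}(x) = Φ_{2m}(x²)`. -/
lemma gcyB {m : ℕ} (hm : Squarefree m) (ho : Odd m) : ∃ ε : ℤ, ε ^ 2 = 1 ∧ ∀ x : ℤ, (x ^ 2) ^ 2 ∣ gcy (4 * m) x - (1 + ε * x ^ 2) := by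
  have h2m : Squarefree (2 * m) := by
    rw [Nat.squarefree_mul (Nat.coprime_two_left.2 ho)]
    exact ⟨Nat.prime_two.prime.squarefree, hm⟩
  obtain ⟨s, ε, hs, hε, h1, h2, h⟩ := cyc_eval (2 * m) h2m
  refine ⟨ε, hε, fun x => ?_⟩
  have hs1 := h1 (by omega)
  subst hs1
  have : 2 < 4 * m := by
    rcases ho with ⟨k, rfl⟩
    omega
  rw [gcy, (Nat.totient_even this).neg_one_pow]
  have h3 := congrArg (eval (-x)) (cyclotomic_expand_eq_cyclotomic Nat.prime_two (Dvd.intro m rfl) ℤ)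
  rw [expand_eval, neg_sq, show 2 * m * 2 = 4 * m by ring] at h3
  rw [← h3]
  simpa using h (x ^ 2)

lemma pow_prime_exp {p : ℕ} (hp : p.Prime) (y : ℤ) : ∃ c, (1 + y) ^ p = 1 + p * y + p * y ^ 2 * c + y ^ p := by
  obtain ⟨q, rfl⟩ : ∃ q, p = q + 2 := ⟨p - 2, by have := hp.two_le; omega⟩
  have h : ((q + 2 : ℕ) : ℤ) * y ^ 2 ∣ ∑ j ∈ Finset.range q, y ^ (j + 1 + 1) * ((q + 2).choose (j + 1 + 1) : ℤ) := by
    refine Finset.dvd_sum fun j hj => ?_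
    rw [mul_comm (y ^ (j + 1 + 1))]
    refine mul_dvd_mul ?_ (pow_dvd_pow _ (by omega))
    exact_mod_cast hp.dvd_choose_self (by omega) (by have := Finset.mem_range.1 hj; omega)
  obtain ⟨c, hc⟩ := h
  refine ⟨c, ?_⟩
  rw [add_comm 1 y, add_pow, Finset.sum_range_succ, Finset.sum_range_succ', Finset.sum_range_succ']
  simp only [one_pow, mul_one, hc]
  simp
  ring

lemma lte_step {p : ℕ} (hp : p.Prime) {d κ : ℤ} (hd : (p : ℤ) ∣ d) (h2 : p = 2 → (4 : ℤ) ∣ d) (hκ : IsCoprime κ d) :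
    ∃ κ' : ℤ, IsCoprime κ' (d * p) ∧ (1 + d * κ) ^ p = 1 + d * p * κ' := by
  suffices h : ∃ κ' : ℤ, IsCoprime κ' d ∧ (1 + d * κ) ^ p = 1 + d * p * κ' by
    obtain ⟨κ', h1, h3⟩ := h
    exact ⟨κ', h1.mul_right (h1.of_isCoprime_of_dvd_right hd), h3⟩
  by_cases hp2 : p = 2
  · obtain ⟨d0, rfl⟩ := h2 hp2
    subst hp2
    refine ⟨κ * (1 + 2 * d0 * κ), hκ.mul_left ?_, by push_cast; ring⟩
    have : IsCoprime (1 + (2 * d0) * κ) (2 * d0) := isCoprime_one_left.add_mul_left_left κ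
    exact (this.pow_right (n := 2)).of_isCoprime_of_dvd_right ⟨d0, by ring⟩
  · obtain ⟨q, rfl⟩ : ∃ q, p = q + 3 := ⟨p - 3, by have := hp.two_le; omega⟩
    obtain ⟨c, hc⟩ := pow_prime_exp hp (d * κ)
    obtain ⟨d0, hd0⟩ := hd
    refine ⟨κ + d * (κ ^ 2 * c + d0 * d ^ q * κ ^ (q + 3)), hκ.add_mul_left_left _, ?_⟩
    rw [hc, mul_pow d κ (q + 3)]
    linear_combination (d ^ (q + 2) * κ ^ (q + 3)) * hd0

/-- Lifting the exponent: `(1 + d κ) ^ n` is `1 + d n κ'` with `κ'` still prime to `d`. -/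
lemma lte {n : ℕ} : ∀ {d κ : ℤ}, (∀ p : ℕ, p.Prime → p ∣ n → (p : ℤ) ∣ d) → (2 ∣ n → (4 : ℤ) ∣ d) → IsCoprime κ d →
    ∃ κ' : ℤ, IsCoprime κ' d ∧ (1 + d * κ) ^ n = 1 + d * n * κ' := by
  induction n using induction_on_primes with
  | zero => exact fun _ _ hκ => ⟨_, hκ, by simp⟩
  | one => exact fun _ _ hκ => ⟨_, hκ, by simp⟩
  | prime_mul p a hp ih =>
    intro d κ h1 h2 hκ
    obtain ⟨κ1, hk1, e1⟩ := lte_step hp (h1 p hp (Dvd.intro _ rfl)) (fun h => h2 (h ▸ Dvd.intro _ rfl)) hκ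
    obtain ⟨κ2, hk2, e2⟩ := ih (d := d * p) (fun q hq hqa => (h1 q hq (hqa.mul_left _)).mul_right _) (fun h => (h2 (h.mul_left _)).mul_right _) hk1
    exact ⟨κ2, hk2.of_mul_right_left, by rw [pow_mul, e1, e2]; push_cast; ring⟩

variable {K : Type*} [Field K] [NumberField K]

open Polynomial IntermediateField in
lemma norm_add_root {e : ℕ} [NeZero e] [IsCyclotomicExtension {e} ℚ K] {M : ℕ} (hM0 : 0 < M) {ξ : K} (hξ : IsPrimitiveRoot ξ M) (x : ℤ) :
    ∃ n : ℕ, Nat.totient M * n = Nat.totient e ∧ Algebra.norm ℚ ((x : K) + ξ) = (gcy M x : ℚ) ^ n := by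
  set y : K := (x : K) + ξ with hy
  have hyint : IsIntegral ℚ y := Algebra.IsIntegral.isIntegral y
  have hmin : minpoly ℚ y = (cyclotomic M ℚ).comp (X - C (x : ℚ)) := by
    rw [cyclotomic_eq_minpoly_rat hξ hM0, ← minpoly.add_algebraMap, hy, add_comm]
    simp
  have hdeg : (minpoly ℚ y).natDegree = Nat.totient M := by
    rw [hmin, natDegree_comp, natDegree_cyclotomic, natDegree_X_sub_C, mul_one]
  refine ⟨finrank ℚ⟮y⟯ K, ?_, ?_⟩
  · rw [← hdeg, ← IntermediateField.adjoin.finrank hyint, Module.finrank_mul_finrank]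
    exact IsCyclotomicExtension.finrank K (cyclotomic.irreducible_rat (NeZero.pos e))
  · rw [Algebra.norm_eq_norm_adjoin]
    congr 1
    have := Algebra.PowerBasis.norm_gen_eq_coeff_zero_minpoly (IntermediateField.adjoin.powerBasis hyint)
    rw [IntermediateField.adjoin.powerBasis_gen, IntermediateField.minpoly_gen, IntermediateField.adjoin.powerBasis_dim, hdeg, hmin] at this
    rw [this, gcy, coeff_zero_eq_eval_zero, eval_comp]
    push_cast
    congr 1
    rw [← map_cyclotomic_int M ℚ]
    have h := eval_intCast_map (Int.castRingHom ℚ) (cyclotomic M ℤ) (-x)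
    simpa using h

lemma norm_one_add {e : ℕ} [NeZero e] [IsCyclotomicExtension {e} ℚ K] (he : e ≠ 2) {ζ : 𝓞 K} (hζ : IsPrimitiveRoot ζ e) {M : ℕ} (hM : M ∣ e) (x : ℤ) :
    ∃ n : ℕ, Nat.totient M * n = Nat.totient e ∧ Algebra.norm ℤ (1 + (x : 𝓞 K) * ζ ^ (e / M)) = (gcy M x) ^ n := by
  have hM0 : 0 < M := Nat.pos_of_dvd_of_pos hM (NeZero.pos e)
  have hζK : IsPrimitiveRoot (ζ : K) e := hζ.map_of_injective RingOfIntegers.coe_injective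
  have hξ : IsPrimitiveRoot ((ζ : K) ^ (e / M)) M := hζK.pow (NeZero.pos e) (Nat.div_mul_cancel hM).symm
  obtain ⟨n, hn, h⟩ := norm_add_root (e := e) hM0 hξ.inv x
  refine ⟨n, hn, ?_⟩
  apply Int.cast_injective (α := ℚ)
  rw [Algebra.coe_norm_int]
  have hne : (ζ : K) ^ (e / M) ≠ 0 := pow_ne_zero _ (hζK.ne_zero (NeZero.ne e))
  have : ((1 + (x : 𝓞 K) * ζ ^ (e / M) : 𝓞 K) : K) = (ζ : K) ^ (e / M) * (x + ((ζ : K) ^ (e / M))⁻¹) := by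
    change algebraMap (𝓞 K) K (1 + (x : 𝓞 K) * ζ ^ (e / M)) = _
    rw [map_add, map_one, map_mul, map_intCast, map_pow, mul_add, mul_inv_cancel₀ hne]; ring
  rw [this, map_mul, map_pow, hζK.norm_eq_one he (Polynomial.cyclotomic.irreducible_rat (NeZero.pos e)), h]
  push_cast; ring

end

end RD

/-! ### An element of prescribed norm modulo `E ^ 2` -/

namespace RD

section
open NumberField Module
open scoped Classical

/-- The product of the odd primes dividing `e`. -/
def oddRad (e : ℕ) : ℕ := ∏ p ∈ e.primeFactors.erase 2, p

lemma oddRad_odd (e : ℕ) : Odd (oddRad e) := by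
  refine Finset.prod_induction _ Odd (fun a b => Odd.mul) odd_one fun p hp => ?_
  have := Finset.mem_erase.1 hp
  exact (Nat.prime_of_mem_primeFactors this.2).odd_of_ne_two this.1

lemma oddRad_sq (e : ℕ) : Squarefree (oddRad e) := by
  refine Finset.squarefree_prod_of_pairwise_isCoprime ?_ ?_
  · intro p hp q hq hpq
    have hp := Nat.prime_of_mem_primeFactors (Finset.mem_of_mem_erase (Finset.mem_coe.1 hp))
    have hq := Nat.prime_of_mem_primeFactors (Finset.mem_of_mem_erase (Finset.mem_coe.1 hq))
    exact Nat.coprime_iff_isRelPrime.1 ((Nat.coprime_primes hp hq).2 hpq)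
  · intro p hp
    exact (Nat.prime_of_mem_primeFactors (Finset.mem_of_mem_erase hp)).prime.squarefree

lemma oddRad_dvd (e : ℕ) : oddRad e ∣ e :=
  (Finset.prod_dvd_prod_of_subset _ _ _ (Finset.erase_subset _ _)).trans (Nat.prod_primeFactors_dvd e)

lemma prime_dvd_oddRad {e p : ℕ} (he : e ≠ 0) (hp : p.Prime) (h : p ∣ e) : p ∣ 2 * oddRad e := by
  by_cases h2 : p = 2
  · exact h2 ▸ Dvd.intro _ rfl
  · exact (Finset.dvd_prod_of_mem (fun x => x) (by simp [h2, hp, h, he])).mul_left _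

lemma oddRad_totient (e : ℕ) : Nat.totient (oddRad e) = ∏ p ∈ e.primeFactors.erase 2, (p - 1) := by
  have : (oddRad e).primeFactors = e.primeFactors.erase 2 :=
    Nat.primeFactors_prod fun p hp => Nat.prime_of_mem_primeFactors (Finset.mem_of_mem_erase hp)
  have h := Nat.totient_mul_prod_primeFactors (oddRad e)
  rw [this] at h
  have h0 : 0 < oddRad e := (oddRad_odd e).pos
  change _ * oddRad e = oddRad e * _ at h
  rw [mul_comm] at h
  exact Nat.eq_of_mul_eq_mul_left h0 h

/-- With `n` the degree of `ℚ(ζ_e)` over `ℚ(ζ_m)`, `m` the odd radical of `e`, the number of roots of unity in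
`ℚ(ζ_e)` is `2 m n`. -/
lemma oddRad_mul {e : ℕ} (he : e ≠ 0) {n : ℕ} (hn : Nat.totient (oddRad e) * n = Nat.totient e) :
    2 * oddRad e * n = if Even e then e else 2 * e := by
  have h := Nat.totient_mul_prod_primeFactors e
  have h0 : 0 < Nat.totient (oddRad e) := Nat.totient_pos.2 (oddRad_odd e).pos
  split_ifs with hev
  · have h2 : 2 ∈ e.primeFactors := by simp [Nat.prime_two, hev.two_dvd, he]
    rw [← Finset.mul_prod_erase _ _ h2, ← Finset.mul_prod_erase _ (fun p => p - 1) h2, ← oddRad_totient, ← hn] at h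
    change _ * (2 * oddRad e) = _ at h
    refine Nat.eq_of_mul_eq_mul_left h0 ?_
    simp at h
    linarith
  · have h2 : 2 ∉ e.primeFactors := fun h => hev (even_iff_two_dvd.2 (Nat.dvd_of_mem_primeFactors h))
    rw [← Finset.erase_eq_of_notMem h2, ← oddRad_totient, ← hn] at h
    change _ * oddRad e = _ at h
    refine Nat.eq_of_mul_eq_mul_left h0 ?_
    linarith

lemma coprime_of_primes {E : ℕ} {d κ : ℤ} (hE : ∀ p : ℕ, p.Prime → p ∣ E → (p : ℤ) ∣ d) (h : IsCoprime κ d) : IsCoprime κ (E : ℤ) := by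
  rw [Int.isCoprime_iff_gcd_eq_one]
  by_contra hne
  obtain ⟨p, hp, hd⟩ := Nat.exists_prime_and_dvd hne
  have h1 : (p : ℤ) ∣ κ := (Int.natCast_dvd_natCast.2 hd).trans (Int.gcd_dvd_left _ _)
  have h2 : (p : ℤ) ∣ (E : ℤ) := (Int.natCast_dvd_natCast.2 hd).trans (Int.gcd_dvd_right _ _)
  have := h.isUnit_of_dvd' h1 (hE p hp (Int.natCast_dvd_natCast.1 h2))
  rw [Int.isUnit_iff] at this
  have := hp.one_lt
  omega

variable {K : Type*} [Field K] [NumberField K]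

/-- An element congruent to `1` modulo every squarefree divisor of `E` with norm `1 + E t`, `t` prime to `E`. Let `m` be the
odd radical of `e`. If `4 ∤ e`, then `1 + 2m ζ_m` works; if `4 ∣ e`, then
`(1 + 4m ζ_m) (1 + 2m² ζ_{4m})` does, the first factor making `t` prime to `m` and the second making it odd. -/
theorem exists_Y {e : ℕ} [NeZero e] [IsCyclotomicExtension {e} ℚ K] (he : e ≠ 2) {ζ : 𝓞 K} (hζ : IsPrimitiveRoot ζ e)
    {E : ℕ} (hE : E = if Even e then e else 2 * e) :
    ∃ (Y : 𝓞 K) (t : ℤ), (∀ r : ℕ, Squarefree r → r ∣ E → (r : 𝓞 K) ∣ Y - 1) ∧ IsCoprime t (E : ℤ) ∧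
      Algebra.norm ℤ Y = 1 + E * t := by
  have he0 : e ≠ 0 := NeZero.ne e
  set m := oddRad e with hm
  have hmo : Odd m := oddRad_odd e
  have hms : Squarefree m := oddRad_sq e
  have hme : m ∣ e := oddRad_dvd e
  have hpE : ∀ p : ℕ, p.Prime → p ∣ E → p ∣ 2 * m := by
    intro p hp h
    have : p ∣ 2 * e := by
      rw [hE] at h
      split_ifs at h
      · exact h.mul_left _
      · exact h
    rcases (Nat.Prime.dvd_mul hp).1 this with h | h
    · exact h.mul_right _
    · exact prime_dvd_oddRad he0 hp h
  have hr : ∀ r : ℕ, Squarefree r → r ∣ E → r ∣ 2 * m := by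
    intro r hr hrE
    rw [← Nat.prod_primeFactors_of_squarefree hr]
    exact Finset.prod_primes_dvd _ (fun p hp => (Nat.prime_of_mem_primeFactors hp).prime)
      fun p hp => hpE p (Nat.prime_of_mem_primeFactors hp) ((Nat.dvd_of_mem_primeFactors hp).trans hrE)
  have hr' : ∀ Y : 𝓞 K, ((2 * m : ℕ) : 𝓞 K) ∣ Y - 1 → ∀ r : ℕ, Squarefree r → r ∣ E → (r : 𝓞 K) ∣ Y - 1 :=
    fun Y hY r h1 h2 => (Nat.cast_dvd_cast (hr r h1 h2)).trans hY
  by_cases h4 : 4 ∣ e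
  · have hev : Even e := even_iff_two_dvd.2 (dvd_trans (by norm_num) h4)
    have h4m : 4 * m ∣ e := Nat.Coprime.mul_dvd_of_dvd_of_dvd (by
      rw [show 4 = 2 ^ 2 by norm_num]; exact (Nat.coprime_two_left.2 hmo).pow_left 2) h4 hme
    obtain ⟨n1, hn1, hN1⟩ := norm_one_add he hζ hme (4 * m)
    obtain ⟨n2, hn2, hN2⟩ := norm_one_add he hζ h4m (2 * m ^ 2)
    have hE1 : 2 * m * n1 = E := hE ▸ oddRad_mul he0 hn1
    have h12 : n1 = 2 * n2 := by
      have h : Nat.totient (4 * m) = 2 * Nat.totient m := by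
        rw [Nat.totient_mul (by rw [show 4 = 2 ^ 2 by norm_num]; exact (Nat.coprime_two_left.2 hmo).pow_left 2)]
        rfl
      rw [h, ← hn1] at hn2
      have h0 : 0 < Nat.totient m := Nat.totient_pos.2 hmo.pos
      refine Nat.eq_of_mul_eq_mul_left h0 ?_
      linarith
    have hE2 : 4 * m * n2 = E := by rw [← hE1, h12]; ring
    obtain ⟨ε1, hε1, hg1⟩ := gcyA hms hmo
    obtain ⟨ε2, hε2, hg2⟩ := gcyB hms hmo
    obtain ⟨c1, hc1⟩ := hg1 (4 * m)
    obtain ⟨c2, hc2⟩ := hg2 (2 * m ^ 2)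
    have hu1 : IsCoprime (ε1 + (4 * m) * c1) (4 * (m : ℤ)) := by
      refine IsCoprime.add_mul_left_left ?_ _
      exact ⟨ε1, 0, by linear_combination hε1⟩
    have hu2 : IsCoprime (ε2 + (4 * m ^ 4) * c2) (4 * (m : ℤ) ^ 4) := by
      refine IsCoprime.add_mul_left_left ?_ _
      exact ⟨ε2, 0, by linear_combination hε2⟩
    have hp1 : ∀ p : ℕ, p.Prime → p ∣ E → (p : ℤ) ∣ 4 * m := fun p hp h => by
      have := (hpE p hp h).mul_left 2
      rw [← mul_assoc] at this
      exact_mod_cast this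
    obtain ⟨k1, hk1, e1⟩ := lte (n := n1) (fun p hp h => hp1 p hp (hE1 ▸ h.mul_left _)) (fun _ => Dvd.intro _ rfl) hu1
    obtain ⟨k2, hk2, e2⟩ := lte (n := n2) (d := 4 * (m : ℤ) ^ 4) (fun p hp h => (hp1 p hp (hE2 ▸ h.mul_left _)).trans ⟨m ^ 3, by ring⟩) (fun _ => Dvd.intro _ rfl) hu2
    have hEz1 : (E : ℤ) = 2 * m * n1 := by rw [← hE1]; push_cast; ring
    have hEz2 : (E : ℤ) = 4 * m * n2 := by rw [← hE2]; push_cast; ring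
    have hN1' : Algebra.norm ℤ (1 + ((4 * m : ℤ) : 𝓞 K) * ζ ^ (e / m)) = 1 + 2 * E * k1 := by
      rw [hN1, show gcy m (4 * m) = 1 + 4 * m * (ε1 + (4 * m) * c1) by linear_combination hc1, e1, hEz1]; ring
    have hN2' : Algebra.norm ℤ (1 + ((2 * m ^ 2 : ℤ) : 𝓞 K) * ζ ^ (e / (4 * m))) = 1 + E * m ^ 3 * k2 := by
      rw [hN2, show gcy (4 * m) (2 * m ^ 2) = 1 + 4 * m ^ 4 * (ε2 + (4 * m ^ 4) * c2) by linear_combination hc2, e2, hEz2]; ring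
    refine ⟨(1 + ((4 * m : ℤ) : 𝓞 K) * ζ ^ (e / m)) * (1 + ((2 * m ^ 2 : ℤ) : 𝓞 K) * ζ ^ (e / (4 * m))),
      m ^ 3 * k2 + 2 * k1 + 2 * E * m ^ 3 * k1 * k2, hr' _ ?_, ?_, ?_⟩
    · push_cast
      exact ⟨2 * ζ ^ (e / m) + m * ζ ^ (e / (4 * m)) + 4 * m ^ 2 * ζ ^ (e / m) * ζ ^ (e / (4 * m)), by ring⟩
    · refine coprime_of_primes (d := 2 * m) (fun p hp h => by exact_mod_cast hpE p hp h) (IsCoprime.mul_right ?_ ?_)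
      · rw [show m ^ 3 * k2 + 2 * k1 + 2 * E * m ^ 3 * k1 * k2 = m ^ 3 * k2 + 2 * (k1 + E * m ^ 3 * k1 * k2) by ring]
        refine IsCoprime.add_mul_left_left (IsCoprime.mul_left (IsCoprime.pow_left ?_) ?_) _
        · exact (Nat.isCoprime_iff_coprime (n := 2)).2 (Nat.coprime_two_right.2 hmo)
        · exact hk2.of_isCoprime_of_dvd_right ⟨2 * m ^ 4, by ring⟩
      · rw [show m ^ 3 * k2 + 2 * k1 + 2 * E * m ^ 3 * k1 * k2 = 2 * k1 + m * (m ^ 2 * k2 + 2 * E * m ^ 2 * k1 * k2) by ring]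
        refine IsCoprime.add_mul_left_left (IsCoprime.mul_left ?_ ?_) _
        · exact (Nat.isCoprime_iff_coprime (m := 2)).2 (Nat.coprime_two_left.2 hmo)
        · exact hk1.of_isCoprime_of_dvd_right ⟨4, by ring⟩
    · rw [map_mul, hN1', hN2']; ring
  · obtain ⟨n1, hn1, hN1⟩ := norm_one_add he hζ hme (2 * m)
    have hE1 : 2 * m * n1 = E := hE ▸ oddRad_mul he0 hn1
    obtain ⟨ε1, hε1, hg1⟩ := gcyA hms hmo
    obtain ⟨c1, hc1⟩ := hg1 (2 * m)
    have hu1 : IsCoprime (ε1 + (2 * m) * c1) (2 * (m : ℤ)) := by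
      refine IsCoprime.add_mul_left_left ?_ _
      exact ⟨ε1, 0, by linear_combination hε1⟩
    have hp1 : ∀ p : ℕ, p.Prime → p ∣ E → (p : ℤ) ∣ 2 * m := fun p hp h => by
      exact_mod_cast hpE p hp h
    obtain ⟨k1, hk1, e1⟩ := lte (n := n1) (fun p hp h => hp1 p hp (hE1 ▸ h.mul_left _)) (fun ⟨x, hx⟩ => by
      exfalso
      apply h4
      have : 4 ∣ E := ⟨m * x, by rw [← hE1, hx]; ring⟩
      rw [hE] at this
      split_ifs at this with hev
      · exact this
      · rw [Nat.not_even_iff_odd] at hev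
        obtain ⟨y, rfl⟩ := hev
        omega) hu1
    have hEz1 : (E : ℤ) = 2 * m * n1 := by rw [← hE1]; push_cast; ring
    refine ⟨1 + ((2 * m : ℤ) : 𝓞 K) * ζ ^ (e / m), k1, hr' _ ?_, coprime_of_primes hp1 hk1, ?_⟩
    · push_cast
      exact ⟨ζ ^ (e / m), by ring⟩
    · rw [hN1, show gcy m (2 * m) = 1 + 2 * m * (ε1 + (2 * m) * c1) by linear_combination hc1, e1, hEz1]

end

end RD

/-! ### Residue fields of prime order -/

namespace RD

section
open NumberField Module
open scoped Classical

variable {K : Type*} [Field K] [NumberField K]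

lemma int_surj {P : Ideal (𝓞 K)} (hP : (Ideal.absNorm P).Prime) (x : 𝓞 K) : ∃ c : ℤ, x - c ∈ P := by
  have hcard : Nat.card (𝓞 K ⧸ P) = Ideal.absNorm P := (Ideal.absNorm_apply P).symm
  have : Finite (𝓞 K ⧸ P) := Nat.finite_of_card_ne_zero (hcard ▸ hP.ne_zero)
  let _ := Fintype.ofFinite (𝓞 K ⧸ P)
  let f := ZMod.ringEquivOfPrime (𝓞 K ⧸ P) hP (by rw [← hcard, Nat.card_eq_fintype_card])
  refine ⟨((f.symm (Ideal.Quotient.mk P x)).val : ℤ), ?_⟩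
  rw [← Ideal.Quotient.eq]
  have : NeZero (Ideal.absNorm P) := ⟨hP.ne_zero⟩
  have h := congrArg f (ZMod.natCast_zmod_val (f.symm (Ideal.Quotient.mk P x)))
  rw [f.apply_symm_apply, map_natCast] at h
  rw [Int.cast_natCast, map_natCast, h]

lemma pow_card_mem {P : Ideal (𝓞 K)} [P.IsMaximal] (hP : (Ideal.absNorm P).Prime) (x : 𝓞 K ⧸ P) (hx : x ≠ 0) :
    x ^ (Ideal.absNorm P - 1) = 1 := by
  let _ : Field (𝓞 K ⧸ P) := Ideal.Quotient.field P
  have hcard : Nat.card (𝓞 K ⧸ P) = Ideal.absNorm P := (Ideal.absNorm_apply P).symm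
  have : Finite (𝓞 K ⧸ P) := Nat.finite_of_card_ne_zero (hcard ▸ hP.ne_zero)
  let _ := Fintype.ofFinite (𝓞 K ⧸ P)
  have := FiniteField.pow_card_sub_one_eq_one x hx
  rwa [← Nat.card_eq_fintype_card, hcard] at this

/-- Let `P` be a prime of prime norm `1 + E t` with `t` prime to `E`. Modulo `P`, every `β ∉ P` is a root of
unity times the `E`-th power of an integer. -/
lemma residue_one {P : Ideal (𝓞 K)} [P.IsMaximal] (hP : (Ideal.absNorm P).Prime) {E : ℕ} [NeZero E] {ξ : 𝓞 K} (hξ : IsPrimitiveRoot ξ E)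
    {t : ℕ} (ht : Ideal.absNorm P = 1 + E * t) (hc : t.Coprime E) {β : 𝓞 K} (hβ : β ∉ P) :
    ∃ (k : ℕ) (c : ℤ), β - ξ ^ k * (c : 𝓞 K) ^ E ∈ P := by
  let _ : Field (𝓞 K ⧸ P) := Ideal.Quotient.field P
  have hcop : (Ideal.absNorm P).Coprime E := by rw [ht]; simp
  have hξ' := hξ.idealQuotient_mk (I := P) hP.one_lt.ne' hcop
  set x : 𝓞 K ⧸ P := Ideal.Quotient.mk P β with hx
  have hx0 : x ≠ 0 := fun h => hβ (Ideal.Quotient.eq_zero_iff_mem.1 h)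
  obtain ⟨a, b, hab⟩ := Nat.isCoprime_iff_coprime.2 hc
  have h1 : ((x ^ t) ^ a) ^ E = 1 := by
    rw [← zpow_natCast, zpow_comm, zpow_natCast, ← pow_mul, mul_comm t, show E * t = Ideal.absNorm P - 1 by omega, pow_card_mem hP x hx0, one_zpow]
  obtain ⟨k, -, hk⟩ := hξ'.eq_pow_of_pow_eq_one h1
  obtain ⟨y, hy⟩ := Ideal.Quotient.mk_surjective (x ^ b)
  obtain ⟨c, hc⟩ := int_surj hP y
  refine ⟨k, c, ?_⟩
  rw [← Ideal.Quotient.eq] at hc ⊢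
  rw [map_mul, map_pow, map_pow, ← hc, hy, hk, ← hx]
  rw [← zpow_natCast, ← zpow_natCast (x ^ b), ← zpow_mul, ← zpow_mul, ← zpow_add₀ hx0, mul_comm (t : ℤ), hab, zpow_one]

/-- If the prime norm of `P` is congruent to `1` modulo `E ^ 2`, every `E`-th root of unity is an `E`-th power
modulo `P`. -/
lemma residue_two {P : Ideal (𝓞 K)} [P.IsMaximal] (hP : (Ideal.absNorm P).Prime) {E : ℕ} (hE : E ≠ 0) 
    (hPE : E ^ 2 ∣ Ideal.absNorm P - 1) (η : (𝓞 K)ˣ) (hη : η ^ E = 1) :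
    ∃ c : ℤ, 1 - η * (c : 𝓞 K) ^ E ∈ P := by
  let _ : Field (𝓞 K ⧸ P) := Ideal.Quotient.field P
  have hcard : Nat.card (𝓞 K ⧸ P) = Ideal.absNorm P := (Ideal.absNorm_apply P).symm
  have : Finite (𝓞 K ⧸ P) := Nat.finite_of_card_ne_zero (hcard ▸ hP.ne_zero)
  let x : (𝓞 K ⧸ P)ˣ := Units.map (Ideal.Quotient.mk P : 𝓞 K →* 𝓞 K ⧸ P) η⁻¹
  have hx : x ^ E = 1 := by rw [← map_pow, inv_pow, hη]; simp
  obtain ⟨g, hg⟩ := IsCyclic.exists_generator (α := (𝓞 K ⧸ P)ˣ)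
  obtain ⟨j, hj⟩ := Subgroup.mem_zpowers_iff.1 (hg x)
  have hord : orderOf g = Ideal.absNorm P - 1 := by
    rw [orderOf_eq_card_of_forall_mem_zpowers hg, Nat.card_units, hcard]
  have h1 : (orderOf g : ℤ) ∣ j * E := by
    rw [orderOf_dvd_iff_zpow_eq_one, zpow_mul, hj, zpow_natCast, hx]
  rw [hord] at h1
  have h2 : ((E : ℕ) : ℤ) ^ 2 ∣ j * E := (by exact_mod_cast hPE : ((E : ℕ) : ℤ) ^ 2 ∣ ((Ideal.absNorm P - 1 : ℕ) : ℤ)).trans h1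
  have h3 : (E : ℤ) ∣ j := by
    obtain ⟨y, hy⟩ := h2
    exact ⟨y, mul_right_cancel₀ (b := (E : ℤ)) (by exact_mod_cast hE) (by linear_combination hy)⟩
  obtain ⟨i, rfl⟩ := h3
  obtain ⟨y, hy⟩ := Ideal.Quotient.mk_surjective ((g ^ i : (𝓞 K ⧸ P)ˣ) : 𝓞 K ⧸ P)
  obtain ⟨c, hc⟩ := int_surj hP y
  refine ⟨c, ?_⟩
  rw [← Ideal.Quotient.eq] at hc ⊢
  rw [map_mul, map_pow, ← hc, hy, map_one, ← Units.val_pow_eq_pow_val, ← zpow_natCast, ← zpow_mul, mul_comm i, hj]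
  change _ = Ideal.Quotient.mk P η * Ideal.Quotient.mk P ((η⁻¹ : (𝓞 K)ˣ) : 𝓞 K)
  rw [← map_mul, Units.mul_inv, map_one]

/-- Over a Dedekind domain, the second entry of a unimodular row can be made prime to any nonzero `N`. -/
lemma exists_coprime_shift {α β N : 𝓞 K} (h : IsCoprime α β) (hN : N ≠ 0) : ∃ t, IsCoprime (β + t * α) N := by
  let S := (UniqueFactorizationMonoid.normalizedFactors (Ideal.span {N})).toFinset
  have hS : ∀ P ∈ S, Prime P := fun P hP => UniqueFactorizationMonoid.prime_of_normalized_factor P (Multiset.mem_toFinset.1 hP)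
  obtain ⟨t, ht⟩ := IsDedekindDomain.exists_forall_sub_mem_ideal (s := S) (fun P => P) (fun _ => 1) hS (fun _ _ _ _ h => h)
    (fun P => if β ∈ P.1 then 1 else 0)
  refine ⟨t, ?_⟩
  rw [← Ideal.isCoprime_span_singleton_iff, Ideal.isCoprime_iff_sup_eq]
  by_contra hne
  obtain ⟨P, hP, hle⟩ := Ideal.exists_le_maximal _ hne
  have h1 : β + t * α ∈ P := hle (Ideal.mem_sup_left (Ideal.mem_span_singleton_self _))
  have h2 : Ideal.span {N} ≤ P := le_sup_right.trans hle
  have hP0 : P ≠ ⊥ := by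
    rintro rfl
    exact hN (by simpa using h2)
  have hPS : P ∈ S := by
    rw [Multiset.mem_toFinset, UniqueFactorizationMonoid.mem_normalizedFactors_iff (by simpa using hN)]
    exact ⟨Ideal.prime_of_isPrime hP0 hP.isPrime, Ideal.dvd_iff_le.2 h2⟩
  have h3 := ht P hPS
  simp only [pow_one] at h3
  split_ifs at h3 with hβ
  · obtain ⟨x, y, hxy⟩ := h
    apply hP.ne_top
    rw [Ideal.eq_top_iff_one]
    have h4 : α ∈ P := by
      have := P.sub_mem (P.sub_mem h1 hβ) (P.mul_mem_right α h3)
      rwa [show β + t * α - β - (t - 1) * α = α by ring] at this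
    rw [← hxy]
    exact P.add_mem (P.mul_mem_left _ h4) (P.mul_mem_left _ hβ)
  · apply hβ
    have := P.sub_mem h1 (P.mul_mem_right α h3)
    rwa [show β + t * α - (t - 0) * α = β by ring] at this

end

end RD

/-! ### Reducibility of unimodular rows over the integers of a cyclotomic field -/

namespace RD

section
open NumberField Module
open scoped Classical

variable {K : Type*} [Field K] [NumberField K]

/-- Reduction of a row `(y, β)` such that `y` divides everything in `q1 q2` and `β ≡ 1 mod q2`. Both modulo `q1` and
modulo `q2`, `β` agrees with `η z₀ ^ E` for one root of unity `η` and one integer `z₀`. -/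
lemma red_final {e : ℕ} [NeZero e] [IsCyclotomicExtension {e} ℚ K] {ζ : 𝓞 K} (hζ : IsPrimitiveRoot ζ e)
    (hgen : Algebra.adjoin ℤ {ζ} = ⊤) (hK : 2 < finrank ℚ K) {E : ℕ} (hE3 : 2 < E) (heE : e ∣ E) (h2E : 2 ∣ E)
    {ξ : (𝓞 K)ˣ} (hξ : IsPrimitiveRoot (ξ : 𝓞 K) E)
    {π : 𝓞 K} (hπ : π ≠ 0) (hπE : π ∣ (E : 𝓞 K)) {y β : 𝓞 K} (hy : π ∣ y - 1)
    {q1 q2 : Ideal (𝓞 K)} [q1.IsMaximal] [q2.IsMaximal] (hr1 : (Ideal.absNorm q1).Prime) (hr2 : (Ideal.absNorm q2).Prime)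
    (hne : Ideal.absNorm q1 ≠ Ideal.absNorm q2) (hyq : q1 * q2 ≤ Ideal.span {y})
    {t : ℕ} (ht : Ideal.absNorm q1 = 1 + E * t) (htE : t.Coprime E) (hr2E : E ^ 2 ∣ Ideal.absNorm q2 - 1)
    (hβ1 : β ∉ q1) (hβ2 : β - 1 ∈ q2) : Red π y β := by
  have hE0 : E ≠ 0 := by omega
  have : NeZero E := ⟨hE0⟩
  set r1 := Ideal.absNorm q1 with hr1def
  set r2 := Ideal.absNorm q2 with hr2def
  obtain ⟨k, c1, hc1⟩ := residue_one hr1 hξ ht htE hβ1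
  have hη : (ξ ^ k) ^ E = 1 := by
    rw [← pow_mul, mul_comm, pow_mul]
    have : ξ ^ E = 1 := Units.ext (by simpa using hξ.pow_eq_one)
    rw [this, one_pow]
  obtain ⟨c2, hc2⟩ := residue_two hr2 hE0 hr2E (ξ ^ k) hη
  have hcop : IsCoprime (r1 : ℤ) (r2 : ℤ) := Nat.isCoprime_iff_coprime.2 ((Nat.coprime_primes hr1 hr2).2 hne)
  obtain ⟨z0, hz1, hz2⟩ : ∃ z0 : ℤ, (r1 : ℤ) ∣ z0 - c1 ∧ (r2 : ℤ) ∣ z0 - c2 := by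
    obtain ⟨a, b, hab⟩ := hcop
    exact ⟨c2 * (a * r1) + c1 * (b * r2), ⟨(c2 - c1) * a, by linear_combination c1 * hab⟩, ⟨(c1 - c2) * b, by linear_combination c2 * hab⟩⟩
  have hmem : ∀ (q : Ideal (𝓞 K)) (n : ℤ), ((Ideal.absNorm q : ℕ) : ℤ) ∣ n → (n : 𝓞 K) ∈ q := by
    rintro q n ⟨m, rfl⟩
    push_cast
    exact q.mul_mem_right _ (Ideal.absNorm_mem q)
  have hpow : ∀ (q : Ideal (𝓞 K)) (c : ℤ), ((Ideal.absNorm q : ℕ) : ℤ) ∣ z0 - c → (c : 𝓞 K) ^ E - (z0 : 𝓞 K) ^ E ∈ q := by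
    intro q c hc
    have h1 := hmem q _ hc
    obtain ⟨s, hs⟩ := sub_dvd_pow_sub_pow (z0 : 𝓞 K) (c : 𝓞 K) E
    rw [← neg_sub, hs]
    push_cast at h1
    exact q.neg_mem (q.mul_mem_right _ h1)
  have hb1 : β - ξ ^ k * (z0 : 𝓞 K) ^ E ∈ q1 := by
    have := q1.add_mem hc1 (q1.mul_mem_left ((ξ : 𝓞 K) ^ k) (hpow q1 c1 hz1))
    rwa [show β - ξ ^ k * (c1 : 𝓞 K) ^ E + (ξ : 𝓞 K) ^ k * ((c1 : 𝓞 K) ^ E - (z0 : 𝓞 K) ^ E) = β - ξ ^ k * (z0 : 𝓞 K) ^ E by ring] at this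
  have hb2 : β - ξ ^ k * (z0 : 𝓞 K) ^ E ∈ q2 := by
    rw [Units.val_pow_eq_pow_val] at hc2
    have := q2.add_mem (q2.add_mem hβ2 hc2) (q2.mul_mem_left ((ξ : 𝓞 K) ^ k) (hpow q2 c2 hz2))
    rwa [show β - 1 + (1 - ξ ^ k * (c2 : 𝓞 K) ^ E) + (ξ : 𝓞 K) ^ k * ((c2 : 𝓞 K) ^ E - (z0 : 𝓞 K) ^ E) = β - ξ ^ k * (z0 : 𝓞 K) ^ E by ring] at this
  have hβ2' : β ∉ q2 := by
    intro h
    apply (inferInstance : q2.IsMaximal).ne_top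
    rw [Ideal.eq_top_iff_one]
    have := q2.sub_mem h hβ2
    rwa [sub_sub_cancel] at this
  have hz : ∀ q : Ideal (𝓞 K), (Ideal.absNorm q).Prime → β ∉ q → β - ξ ^ k * (z0 : 𝓞 K) ^ E ∈ q → IsCoprime z0 ((Ideal.absNorm q : ℕ) : ℤ) := by
    intro q hq hβq hb
    refine ((Prime.coprime_iff_not_dvd (Nat.prime_iff_prime_int.1 hq)).2 fun hd => hβq ?_).symm
    have h1 : (z0 : 𝓞 K) ^ E ∈ q := q.pow_mem_of_mem (hmem q _ hd) E (by omega)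
    have := q.add_mem hb (q.mul_mem_left ((ξ : 𝓞 K) ^ k) h1)
    rwa [sub_add_cancel] at this
  have hz1' := hz q1 hr1 hβ1 hb1
  have hz2' := hz q2 hr2 hβ2' hb2
  have hq12 : q1 ≠ q2 := fun h => hne (by rw [hr1def, hr2def, h])
  have hinf : q1 * q2 = q1 ⊓ q2 := Ideal.mul_eq_inf_of_isCoprime (Ideal.isCoprime_of_isMaximal hq12)
  have hdvd : ∀ x, x ∈ q1 → x ∈ q2 → y ∣ x := fun x h1 h2 =>
    Ideal.mem_span_singleton.1 (hyq (hinf ▸ Ideal.mem_inf.2 ⟨h1, h2⟩))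
  have hv : y ∣ ((r1 * r2 : ℕ) : 𝓞 K) := by
    refine hdvd _ ?_ ?_
    · push_cast; exact q1.mul_mem_right _ (Ideal.absNorm_mem q1)
    · push_cast; exact q2.mul_mem_left _ (Ideal.absNorm_mem q2)
  have hr2ge : E ^ 2 ≤ r2 - 1 := Nat.le_of_dvd (by have := hr2.one_lt; omega) hr2E
  have ht0 : t ≠ 0 := by
    rintro rfl
    simp at htE
    omega
  have hvE : (r1 * r2).Coprime E := by
    refine Nat.Coprime.mul_left ?_ ?_
    · rw [ht]; simp
    · obtain ⟨x, hx⟩ := hr2E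
      have : r2 = 1 + E * (E * x) := by have := hr2.one_lt; nlinarith [Nat.sub_add_cancel this.le]
      rw [this]; simp
  have hfer : ∀ r : ℕ, r.Prime → IsCoprime z0 (r : ℤ) → ∀ n, (r : ℤ) ∣ z0 ^ ((r - 1) * n) - 1 := by
    intro r hr hc n
    have := (Int.ModEq.pow_card_sub_one_eq_one hr hc).pow n
    rw [← pow_mul, one_pow] at this
    exact this.symm.dvd
  have hzo : ((r1 * r2 : ℕ) : ℤ) ∣ z0 ^ ((r1 - 1) * (r2 - 1)) - 1 := by
    push_cast
    refine hcop.mul_dvd (hfer r1 hr1 hz1' _) ?_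
    rw [mul_comm (r1 - 1)]
    exact hfer r2 hr2 hz2' _
  refine Red.right (β' := ((ξ ^ k : (𝓞 K)ˣ) : 𝓞 K) * (z0 : 𝓞 K) ^ E) ?_
    (red_power hζ hgen hK hE0 heE h2E hπ hπE hy hv hvE (z0 := z0) (o := (r1 - 1) * (r2 - 1)) ?_ ?_ ?_ _)
  · rw [← neg_sub, dvd_neg, Units.val_pow_eq_pow_val]
    exact hdvd _ hb1 hb2
  · push_cast
    exact hz1'.mul_right hz2'
  · have h1 : 2 < r1 - 1 := by
      rw [ht]
      have : E * 1 ≤ E * t := Nat.mul_le_mul_left _ (by omega)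
      omega
    have h2 : 1 ≤ r2 - 1 := by have := hr2.one_lt; omega
    nlinarith
  · have := map_dvd (Int.castRingHom (𝓞 K)) hzo
    refine hv.trans ?_
    simpa using this

/-- Every unimodular row `(α, β)` with `α ≡ 1 mod π` is reducible. After making `β` prime to `E` and congruent to `1`
modulo `q2`, the entry `α` is replaced by a generator `y` of `q1` or `q1 q2` with `y ≡ α mod β` and
`y ≡ Y mod E ^ 2`, `Y` from `exists_Y`. As `N(q2) ≡ 1 mod E ^ 2`, the norm of `y` shows that `N(q1) = 1 + E t₁` with
`t₁` prime to `E`. -/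
theorem thmA {e : ℕ} [NeZero e] [IsCyclotomicExtension {e} ℚ K] {ζ : 𝓞 K} (hζ : IsPrimitiveRoot ζ e)
    (hgen : Algebra.adjoin ℤ {ζ} = ⊤) (hK : 2 < finrank ℚ K) {E : ℕ} (hE : E = if Even e then e else 2 * e)
    {π : 𝓞 K} (hπ : π ≠ 0) {r : ℕ} (hr : Squarefree r) (hrE : r ∣ E) (hπr : π ∣ (r : 𝓞 K))
    {α β : 𝓞 K} (hα : π ∣ α - 1) (hαβ : IsCoprime α β) : Red π α β := by
  by_cases hα0 : α = 0
  · subst hα0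
    have h1 : IsUnit π := by
      rw [zero_sub, dvd_neg] at hα
      exact isUnit_of_dvd_one hα
    have h2 : IsUnit β := isCoprime_zero_left.1 hαβ
    exact Red.left (α' := 1) ((h1.mul h2).dvd) (Red.base _)
  have he0 : e ≠ 0 := NeZero.ne e
  have hφ : 2 < Nat.totient e := by
    rwa [← IsCyclotomicExtension.finrank K (Polynomial.cyclotomic.irreducible_rat (NeZero.pos e))]
  have he2 : 2 < e := hφ.trans_le (Nat.totient_le e)
  have heE : e ∣ E := by rw [hE]; split_ifs <;> simp
  have h2E : 2 ∣ E := by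
    rw [hE]; split_ifs with h
    · exact h.two_dvd
    · simp
  have hE0 : E ≠ 0 := by rw [hE]; split_ifs <;> omega
  have hE3 : 2 < E := he2.trans_le (Nat.le_of_dvd (by omega) heE)
  have htor : Units.torsionOrder K = E := by rw [hE]; exact IsCyclotomicExtension.Rat.torsionOrder_eq
  have hEK : (E : 𝓞 K) ≠ 0 := by exact_mod_cast hE0
  have hπE : π ∣ (E : 𝓞 K) := hπr.trans (Nat.cast_dvd_cast hrE)
  obtain ⟨ξ, hξ⟩ : ∃ ξ : (𝓞 K)ˣ, IsPrimitiveRoot (ξ : 𝓞 K) E := by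
    obtain ⟨μ, hμ⟩ : ∃ μ : Units.torsion K, orderOf μ = Units.torsionOrder K := IsCyclic.exists_ofOrder_eq_natCard
    rw [← IsPrimitiveRoot.iff_orderOf, ← IsPrimitiveRoot.coe_submonoidClass_iff, ← IsPrimitiveRoot.coe_units_iff, htor] at hμ
    exact ⟨_, hμ⟩
  obtain ⟨q2, hr2, hr2E, haq2, hKD⟩ := KD.KD_main (K := K) e (Q := E ^ 2) (pow_ne_zero 2 hE0) (heE.trans (Dvd.intro_left _ (pow_two E).symm))
    (a := E * α) (mul_ne_zero hEK hα0)
  have hq2max : q2.asIdeal.IsMaximal := q2.isMaximal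
  have hr2E' : E ^ 2 ∣ Ideal.absNorm q2.asIdeal - 1 := by
    rw [← Nat.cast_one, ZMod.natCast_eq_natCast_iff] at hr2E
    exact (Nat.modEq_iff_dvd' hr2.one_lt.le).1 hr2E.symm
  have hEq2 : (E : 𝓞 K) ∉ q2.asIdeal := fun h => haq2 (q2.asIdeal.mul_mem_right _ h)
  -- the second entry may be taken prime to `E` and congruent to `1` modulo `q2`
  obtain ⟨t, ht⟩ := exists_coprime_shift hαβ hEK
  obtain ⟨s, i, hi, hs⟩ := hq2max.exists_inv haq2
  set β' := β + t * α + (1 - β - t * α) * s * (E * α) with hβ'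
  have hβq2 : β' - 1 ∈ q2.asIdeal := by
    have := q2.asIdeal.mul_mem_left (-(1 - β - t * α)) hi
    rwa [show -(1 - β - t * α) * i = β' - 1 by rw [hβ']; linear_combination (-(1 - β - t * α)) * hs] at this
  have hβE : IsCoprime β' (E : 𝓞 K) := by
    rw [show β' = β + t * α + E * ((1 - β - t * α) * s * α) by rw [hβ']; ring]
    exact ht.add_mul_left_left _
  have hαβ' : IsCoprime α β' := by
    rw [show β' = β + α * (t + (1 - β - t * α) * s * E) by rw [hβ']; ring]
    exact hαβ.add_mul_left_right _
  refine Red.right (β' := β') ⟨t + (1 - β - t * α) * s * E, by rw [hβ']; ring⟩ ?_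
  clear_value β'
  have hβq2' : β' ∉ q2.asIdeal := by
    intro h
    apply hq2max.ne_top
    rw [Ideal.eq_top_iff_one]
    have := q2.asIdeal.sub_mem h hβq2
    rwa [sub_sub_cancel] at this
  have hβ0 : β' ≠ 0 := fun h => hβq2' (h ▸ q2.asIdeal.zero_mem)
  obtain ⟨Y, t0, hYr, ht0, hYn⟩ := exists_Y (by omega) hζ hE
  have hYE : IsCoprime Y (E : 𝓞 K) := by
    obtain ⟨c, hc⟩ : Y ∣ ((Algebra.norm ℤ Y : ℤ) : 𝓞 K) := by
      have h1 := Ideal.mem_span_singleton.1 (Ideal.absNorm_mem (Ideal.span {Y}))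
      rw [Ideal.absNorm_span_singleton] at h1
      refine h1.trans ?_
      have h2 : ((Algebra.norm ℤ Y).natAbs : ℤ) ∣ Algebra.norm ℤ Y := Int.natAbs_dvd.2 dvd_rfl
      have := map_dvd (Int.castRingHom (𝓞 K)) h2
      simpa using this
    rw [hYn] at hc
    push_cast at hc
    exact ⟨c, -t0, by linear_combination -hc⟩
  have hβE2 : IsCoprime β' ((E : 𝓞 K) ^ 2) := hβE.pow_right
  obtain ⟨x1, x2, hx⟩ := id hβE2
  set y0 := α * (x2 * (E : 𝓞 K) ^ 2) + Y * (x1 * β') with hy0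
  have hy0β : β' ∣ y0 - α := ⟨(Y - α) * x1, by rw [hy0]; linear_combination α * hx⟩
  have hy0Y : (E : 𝓞 K) ^ 2 ∣ y0 - Y := ⟨(α - Y) * x2, by rw [hy0]; linear_combination Y * hx⟩
  have hy0c : IsCoprime y0 (β' * (E : 𝓞 K) ^ 2) := by
    refine IsCoprime.mul_right ?_ (IsCoprime.pow_right ?_)
    · obtain ⟨c, hc⟩ := hy0β
      rw [show y0 = α + β' * c by linear_combination hc]
      exact hαβ'.add_mul_left_left c
    · obtain ⟨c, hc⟩ := hy0Y
      rw [show y0 = Y + E * (E * c) by linear_combination hc]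
      exact hYE.add_mul_left_left _
  have hEnu : ¬ IsUnit (E : 𝓞 K) := by
    intro h
    have h1 := h.map (Algebra.norm ℤ)
    rw [← Int.cast_natCast, norm_int, isUnit_pow_iff (by omega), Int.isUnit_iff] at h1
    omega
  obtain ⟨y, q1, hyb, hr1, hr12, hyq⟩ := hKD (β' * (E : 𝓞 K) ^ 2) y0 (mul_ne_zero hβ0 (pow_ne_zero _ hEK))
    (fun h => hEnu ((isUnit_pow_iff two_ne_zero).1 (isUnit_of_mul_isUnit_right h)))
    (fun h => (q2.isPrime.mem_or_mem h).elim hβq2' fun h => hEq2 (q2.isPrime.mem_of_pow_mem _ h)) hy0c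
  have hq1max : q1.asIdeal.IsMaximal := q1.isMaximal
  have hyβ : β' ∣ y - α := by
    rw [show y - α = (y - y0) + (y0 - α) by ring]
    exact dvd_add ((Dvd.intro _ rfl).trans hyb) hy0β
  have hyY : (E : 𝓞 K) ^ 2 ∣ y - Y := by
    rw [show y - Y = (y - y0) + (y0 - Y) by ring]
    exact dvd_add ((Dvd.intro_left _ rfl).trans hyb) hy0Y
  have hyπ : π ∣ y - 1 := by
    rw [show y - 1 = (y - Y) + (Y - 1) by ring]
    exact dvd_add ((hπE.trans (dvd_pow_self _ two_ne_zero)).trans hyY) (hπr.trans (hYr r hr hrE))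
  refine Red.left (α' := y) ?_ ?_
  · refine IsCoprime.mul_dvd (hβE.of_isCoprime_of_dvd_right hπE).symm ?_ hyβ
    rw [show y - α = (y - 1) - (α - 1) by ring]
    exact dvd_sub hyπ hα
  have hyβc : IsCoprime y β' := by
    obtain ⟨c, hc⟩ := hyβ
    rw [show y = α + β' * c by linear_combination hc]
    exact hαβ'.add_mul_left_left c
  have hspan_le : Ideal.span {y} ≤ q1.asIdeal := by
    rcases hyq with h | h
    · exact h.le
    · exact h.le.trans Ideal.mul_le_left
  have hβq1 : β' ∉ q1.asIdeal := by
    intro h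
    apply hq1max.ne_top
    rw [Ideal.eq_top_iff_one]
    obtain ⟨a, b, hab⟩ := hyβc
    rw [← hab]
    exact q1.asIdeal.add_mem (q1.asIdeal.mul_mem_left _ (hspan_le (Ideal.mem_span_singleton_self y))) (q1.asIdeal.mul_mem_left _ h)
  -- the norm of `y` pins down the residue of the norm of `q1` modulo `E ^ 2`
  set r1 := Ideal.absNorm q1.asIdeal with hr1d
  set r2 := Ideal.absNorm q2.asIdeal with hr2d
  have hNy : ((E ^ 2 : ℕ) : ℤ) ∣ Algebra.norm ℤ y - (1 + E * t0) := by
    rw [← hYn]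
    exact norm_congr (by push_cast; exact hyY)
  have hsgn : ∃ σ : ℤ, (σ = 1 ∨ σ = -1) ∧ (E : ℤ) ^ 2 ∣ σ * r1 - (1 + E * t0) := by
    have h0 : (Algebra.norm ℤ y).natAbs = Ideal.absNorm (Ideal.span {y}) := (Ideal.absNorm_span_singleton y).symm
    obtain ⟨x, hx⟩ := hr2E'
    have hx' : (r2 : ℤ) = 1 + E ^ 2 * x := by
      have : r2 = 1 + E ^ 2 * x := by have := hr2.one_lt; omega
      exact_mod_cast this
    push_cast at hNy
    obtain ⟨c, hc⟩ := hNy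
    have h1 : ∃ σ : ℤ, (σ = 1 ∨ σ = -1) ∧ Algebra.norm ℤ y = σ * (Ideal.absNorm (Ideal.span {y}) : ℕ) := by
      rw [← h0]
      rcases Int.natAbs_eq (Algebra.norm ℤ y) with h | h
      · exact ⟨1, Or.inl rfl, by rw [one_mul]; exact h⟩
      · exact ⟨-1, Or.inr rfl, by rw [neg_one_mul]; exact h⟩
    obtain ⟨σ, hσ, h2⟩ := h1
    refine ⟨σ, hσ, ?_⟩
    rcases hyq with h | h
    · rw [h] at h2
      exact ⟨c, by rw [← hc, h2]⟩
    · rw [h, map_mul] at h2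
      push_cast at h2
      change Algebra.norm ℤ y = σ * ((r1 : ℤ) * (r2 : ℤ)) at h2
      rw [hx'] at h2
      exact ⟨c - σ * r1 * x, by linear_combination hc - h2⟩
  obtain ⟨σ, hσ, c, hc⟩ := hsgn
  have hr1E : r1.Coprime E := by
    rw [← Nat.isCoprime_iff_coprime]
    exact ⟨σ, -(t0 + E * c), by linear_combination hc⟩
  have hdiv : E ∣ r1 - 1 := by
    have := NumberField.torsionOrder_dvd_absNorm_sub_one q1.ne_bot q1.isPrime (by rw [htor]; exact hr1E)
    rwa [htor] at this
  obtain ⟨t1, ht1⟩ := hdiv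
  have ht1' : r1 = 1 + E * t1 := by have := hr1.one_lt; omega
  have ht1z : (r1 : ℤ) = 1 + E * t1 := by exact_mod_cast ht1'
  have hσ1 : σ = 1 := by
    rcases hσ with h | h
    · exact h
    · exfalso
      subst h
      have : (E : ℤ) ∣ 2 := ⟨-(t1 + t0 + E * c), by rw [ht1z] at hc; linear_combination -hc⟩
      have := Int.le_of_dvd (by norm_num) this
      omega
  subst hσ1
  have htE : t1.Coprime E := by
    rw [← Nat.isCoprime_iff_coprime]
    have h1 : (t1 : ℤ) = t0 + E * c := by
      refine mul_left_cancel₀ (a := (E : ℤ)) (by exact_mod_cast hE0) ?_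
      rw [ht1z] at hc
      linear_combination hc
    rw [h1]
    exact ht0.add_mul_left_left c
  refine red_final hζ hgen hK hE3 heE h2E hξ hπ hπE hyπ (q1 := q1.asIdeal) (q2 := q2.asIdeal) hr1 hr2 hr12 ?_ ht1' htE hr2E' hβq1 hβq2
  rcases hyq with h | h
  · rw [h]; exact Ideal.mul_le_left
  · exact h.ge

end

end RD

/-! ### From reductions of rows to products of elementary matrices -/

namespace RD

section
open NumberField Module
open scoped Classical

open Matrix in
/-- Every completion of the first row `(a, b)` to a matrix of determinant one is a product of
elementary matrices. -/
def Good {R : Type*} [CommRing R] (a b : R) : Prop :=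
  ∀ c d : R, a * d - b * c = 1 → !![a, b; c, d] ∈ Submonoid.closure (ElemMatrices 2 R)

section
variable {R : Type*} [CommRing R]

lemma transv01 (t : R) : !![1, t; 0, 1] ∈ Submonoid.closure (ElemMatrices 2 R) := by
  refine Submonoid.subset_closure ⟨0, 1, t, by decide, ?_⟩
  ext i j; fin_cases i <;> fin_cases j <;> simp [Matrix.transvection, Matrix.single]

lemma transv10 (t : R) : !![1, 0; t, 1] ∈ Submonoid.closure (ElemMatrices 2 R) := by
  refine Submonoid.subset_closure ⟨1, 0, t, by decide, ?_⟩
  ext i j; fin_cases i <;> fin_cases j <;> simp [Matrix.transvection, Matrix.single]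

lemma good_one : Good (1 : R) 0 := by
  intro c d h
  have : d = 1 := by linear_combination h
  subst this
  exact transv10 c

lemma good_addr {a b : R} (t : R) (h : Good a (b + t * a)) : Good a b := by
  intro c d hd
  have h1 := h c (d + t * c) (by linear_combination hd)
  have h2 : !![a, b; c, d] = !![a, b + t * a; c, d + t * c] * !![1, -t; 0, 1] := by
    rw [Matrix.mul_fin_two]; congr! <;> ring
  rw [h2]; exact mul_mem h1 (transv01 _)

lemma good_addl {a b : R} (t : R) (h : Good (a + t * b) b) : Good a b := by
  intro c d hd
  have h1 := h (c + t * d) d (by linear_combination hd)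
  have h2 : !![a, b; c, d] = !![a + t * b, b; c + t * d, d] * !![1, 0; -t, 1] := by
    rw [Matrix.mul_fin_two]; congr! <;> ring
  rw [h2]; exact mul_mem h1 (transv10 _)

/-- Whitehead's identity. -/
lemma diag_mem {u v : R} (h : u * v = 1) :
    !![u, 0; 0, v] ∈ Submonoid.closure (ElemMatrices 2 R) := by
  have h2 : !![u, 0; 0, v] = !![1, u; 0, 1] * !![1, 0; -v, 1] * !![1, u; 0, 1] *
      (!![1, -1; 0, 1] * !![1, 0; 1, 1] * !![1, -1; 0, 1]) := by
    simp only [Matrix.mul_fin_two]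
    congr! <;> first | linear_combination (0 : R) | linear_combination h | linear_combination (-1 : R) * h | linear_combination (-u) * h | linear_combination u * h
  rw [h2]
  exact mul_mem (mul_mem (mul_mem (transv01 _) (transv10 _)) (transv01 _))
    (mul_mem (mul_mem (transv01 _) (transv10 _)) (transv01 _))

lemma good_unit {a b u v : R} (huv : u * v = 1) (h : Good (u * a) (v * b)) : Good a b := by
  intro c d hd
  have h1 := h (u * c) (v * d) (by linear_combination hd + (a * d - b * c) * huv)
  have h2 : !![a, b; c, d] = !![u * a, v * b; u * c, v * d] * !![v, 0; 0, u] := by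
    rw [Matrix.mul_fin_two]
    congr!
    · linear_combination (-a) * huv
    · linear_combination (-b) * huv
    · linear_combination (-c) * huv
    · linear_combination (-d) * huv
  rw [h2]; exact mul_mem h1 (diag_mem (by rw [mul_comm]; exact huv))

lemma exists_inv_closure {N : Matrix (Fin 2) (Fin 2) R}
    (hN : N ∈ Submonoid.closure (ElemMatrices 2 R)) :
    ∃ N' ∈ Submonoid.closure (ElemMatrices 2 R), N * N' = 1 ∧ N' * N = 1 := by
  induction hN using Submonoid.closure_induction with
  | mem x hx =>
    obtain ⟨i, j, c, hij, rfl⟩ := hx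
    refine ⟨Matrix.transvection i j (-c), Submonoid.subset_closure ⟨i, j, -c, hij, rfl⟩, ?_, ?_⟩ <;>
    simp [Matrix.transvection_mul_transvection_same i j hij]
  | one => exact ⟨1, one_mem _, by simp, by simp⟩
  | mul x y _ _ hx hy =>
    obtain ⟨x', hx', h1, h2⟩ := hx
    obtain ⟨y', hy', h3, h4⟩ := hy
    refine ⟨y' * x', mul_mem hy' hx', ?_, ?_⟩
    · rw [mul_assoc, ← mul_assoc y, h3, one_mul, h1]
    · rw [mul_assoc, ← mul_assoc x', h2, one_mul, h4]

lemma lift_closure {R0 : Type*} [CommRing R0] {f : R →+* R0} (hf : Function.Surjective f)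
    {N : Matrix (Fin 2) (Fin 2) R0} (hN : N ∈ Submonoid.closure (ElemMatrices 2 R0)) :
    ∃ N' ∈ Submonoid.closure (ElemMatrices 2 R), f.mapMatrix N' = N := by
  induction hN using Submonoid.closure_induction with
  | mem x hx =>
    obtain ⟨i, j, c, hij, rfl⟩ := hx
    obtain ⟨c', rfl⟩ := hf c
    refine ⟨Matrix.transvection i j c', Submonoid.subset_closure ⟨i, j, c', hij, rfl⟩, ?_⟩
    ext a b
    simp [Matrix.transvection, Matrix.map_apply, Matrix.single_apply, Matrix.one_apply, apply_ite f]
  | one => exact ⟨1, one_mem _, map_one _⟩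
  | mul x y _ _ hx hy =>
    obtain ⟨x', hx', rfl⟩ := hx
    obtain ⟨y', hy', rfl⟩ := hy
    exact ⟨x' * y', mul_mem hx' hy', map_mul _ _ _⟩

lemma det_closure {N : Matrix (Fin 2) (Fin 2) R}
    (hN : N ∈ Submonoid.closure (ElemMatrices 2 R)) : N.det = 1 := by
  induction hN using Submonoid.closure_induction with
  | mem x hx =>
    obtain ⟨i, j, c, hij, rfl⟩ := hx
    exact Matrix.det_transvection_of_ne i j hij c
  | one => simp
  | mul x y _ _ hx hy => rw [Matrix.det_mul, hx, hy, one_mul]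

variable {A : Type*} [CommRing A] [IsDomain A]

/-- A reduction of `(α, β)` over the quotient `A` of `R` lifts to column operations over `R` on the
row `(1 + P r, P s)`, because multiplication by `P` factors through `φ : R → A`. -/
lemma Red.good {φ : R →+* A} (hφ : Function.Surjective φ) {P : R}
    (hann : ∀ x, φ x = 0 → P * x = 0) (hP : φ P ≠ 0) {α β : A} (h : Red (φ P) α β) :
    ∀ r s : R, φ (1 + P * r) = α → φ s = β → Good (1 + P * r) (P * s) := by
  have key : ∀ x, φ (P * x) = 0 → P * x = 0 := by
    intro x hx
    rw [map_mul] at hx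
    exact hann x ((mul_eq_zero.mp hx).resolve_left hP)
  induction h with
  | base β =>
    intro r s h1 _
    have : P * r = 0 := key r (by simpa using h1)
    rw [this, add_zero]
    refine good_addr (-(P * s)) ?_
    rw [mul_one, add_neg_cancel]
    exact good_one
  | addr α β t _ ih =>
    intro r s h1 h2
    obtain ⟨t', rfl⟩ := hφ t
    refine good_addr (P * t') ?_
    have h3 := ih r (s + t' * (1 + P * r)) h1 (by rw [map_add, map_mul, h1, h2])
    convert h3 using 1
    ring
  | addl α β t _ ih =>
    intro r s h1 h2
    obtain ⟨t', rfl⟩ := hφ t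
    refine good_addl t' ?_
    have h3 := ih (r + t' * s) s (by rw [← h1, ← h2]; simp only [map_add, map_mul, map_one]; ring) h2
    convert h3 using 1
    ring
  | unit α β w hw _ ih =>
    intro r s h1 h2
    obtain ⟨x, hx⟩ := hw
    obtain ⟨x', rfl⟩ := hφ x
    obtain ⟨y', hy⟩ := hφ (-(↑w⁻¹ * φ x'))
    have hw1 : φ (1 + P * x') = w := by
      simp only [map_add, map_mul, map_one]; linear_combination -hx
    have hw2 : φ (1 + P * y') = ↑w⁻¹ := by
      simp only [map_add, map_mul, map_one, hy]
      have := w.inv_mul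
      linear_combination (↑w⁻¹ : A) * hx - this
    have h3 : (1 + P * x') * (1 + P * y') = 1 := by
      have h4 : P * (x' + y' + P * x' * y') = 0 := by
        apply key
        have h5 : φ ((1 + P * x') * (1 + P * y')) = 1 := by rw [map_mul, hw1, hw2, w.mul_inv]
        have h6 : (1 + P * x') * (1 + P * y') = 1 + P * (x' + y' + P * x' * y') := by ring
        rw [h6, map_add, map_one] at h5
        simpa using h5
      linear_combination h4
    refine good_unit h3 ?_
    have h5 := ih (x' + r + P * x' * r) ((1 + P * y') * s)
      (by rw [← hw1, ← h1, ← map_mul]; congr 1; ring) (by rw [map_mul, hw2, h2])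
    convert h5 using 1 <;> ring

/-- Transfer of the `GE_2` property from `R₀ = R / P R` to `R`. -/
lemma isGE_of_red {R0 : Type*} [CommRing R0] {f : R →+* R0} (hf : Function.Surjective f)
    {φ : R →+* A} (hφ : Function.Surjective φ) {P : R}
    (hker : ∀ x, f x = 0 → ∃ y, x = P * y)
    (hann : ∀ x, φ x = 0 → P * x = 0) (hP : φ P ≠ 0)
    (hRed : ∀ α β, φ P ∣ α - 1 → IsCoprime α β → Red (φ P) α β)
    (hGE : IsGE R0 2) : IsGE R 2 := by
  intro M hM
  obtain ⟨N, hN, hNM⟩ := lift_closure hf (hGE (f.mapMatrix M) (by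
    rw [← RingHom.map_det, hM, map_one]))
  obtain ⟨N', hN', h1, h2⟩ := exists_inv_closure hN
  have hMe : M = N * (N' * M) := by rw [← mul_assoc, h1, one_mul]
  have hmap : f.mapMatrix (N' * M) = 1 := by
    rw [map_mul, ← hNM, ← map_mul, h2, map_one]
  have hdet : (N' * M).det = 1 := by rw [Matrix.det_mul, hM, det_closure hN', one_mul]
  rw [hMe]
  refine mul_mem hN ?_
  generalize N' * M = Q at hmap hdet
  have hij : ∀ i j, f (Q i j) = (1 : Matrix (Fin 2) (Fin 2) R0) i j := fun i j => by
    rw [← hmap]; rfl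
  obtain ⟨r, hr⟩ := hker (Q 0 0 - 1) (by rw [map_sub, hij]; simp)
  obtain ⟨s, hs⟩ := hker (Q 0 1) (by rw [hij]; simp)
  obtain ⟨c, hc⟩ := hker (Q 1 0) (by rw [hij]; simp)
  have hr' : Q 0 0 = 1 + P * r := by linear_combination hr
  rw [Matrix.det_fin_two, hr', hs] at hdet
  rw [Matrix.eta_fin_two Q, hr', hs]
  refine Red.good hφ hann hP (hRed (φ (1 + P * r)) (φ s) ?_ ?_) r s rfl rfl _ _ hdet
  · simp
  · refine IsCoprime.map ⟨Q 1 1, -(P * Q 1 0), ?_⟩ φ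
    linear_combination hdet

end

end

end RD

/-! ### Values of cyclotomic polynomials at roots of unity -/

namespace RD

section
open NumberField Module
open scoped Classical

open Polynomial in
lemma cyclotomic_isRelPrime {m n : ℕ} (hm : 0 < m) (hn : 0 < n) (h : m ≠ n) :
    IsRelPrime (cyclotomic m ℤ) (cyclotomic n ℤ) := by
  refine ((cyclotomic.irreducible hm).isRelPrime_iff_not_dvd).mpr fun hd => h ?_
  have h1 := (cyclotomic.irreducible hm).associated_of_dvd (cyclotomic.irreducible hn) hd
  exact cyclotomic_injective (R := ℤ)
    (eq_of_monic_of_associated (cyclotomic.monic m ℤ) (cyclotomic.monic n ℤ) h1)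

open Polynomial in
lemma mem_iInf_iff {S : Finset ℕ} (hS : ∀ d ∈ S, 0 < d) (x : ℤ[X]) :
    x ∈ (⨅ d ∈ S, Ideal.span {cyclotomic d ℤ} : Ideal ℤ[X]) ↔ ∏ d ∈ S, cyclotomic d ℤ ∣ x := by
  simp only [Ideal.mem_iInf, Ideal.mem_span_singleton]
  constructor
  · intro h
    have hp : (S : Set ℕ).Pairwise (Function.onFun IsRelPrime fun d => cyclotomic d ℤ) :=
      fun a ha b hb hab => cyclotomic_isRelPrime (hS a ha) (hS b hb) hab
    exact Finset.prod_dvd_of_isRelPrime hp h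
  · intro h d hd
    exact (Finset.dvd_prod_of_mem (fun d => cyclotomic d ℤ) hd).trans h

open Polynomial in
/-- Two cyclotomic polynomials with a common root in a field have indices whose ratio is a power of
the characteristic exponent. -/
lemma ratio_of_common_root {k : Type*} [Field k] {d e : ℕ} (hd : 0 < d) (he : 0 < e) (hde : d ≠ e)
    {μ : k} (h1 : (cyclotomic d k).IsRoot μ) (h2 : (cyclotomic e k).IsRoot μ) :
    ∃ p j : ℕ, p.Prime ∧ 0 < j ∧ (d = e * p ^ j ∨ e = d * p ^ j) := by
  obtain ⟨p, hp⟩ := CharP.exists k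
  rcases CharP.char_is_prime_or_zero k p with hpp | rfl
  · have : Fact p.Prime := ⟨hpp⟩
    obtain ⟨a, d', hd', rfl⟩ := Nat.exists_eq_pow_mul_and_not_dvd hd.ne' p hpp.ne_one
    obtain ⟨b, e', he', rfl⟩ := Nat.exists_eq_pow_mul_and_not_dvd he.ne' p hpp.ne_one
    have : NeZero (d' : k) := ⟨fun h => hd' ((CharP.cast_eq_zero_iff k p _).mp h)⟩
    have : NeZero (e' : k) := ⟨fun h => he' ((CharP.cast_eq_zero_iff k p _).mp h)⟩
    rw [isRoot_cyclotomic_prime_pow_mul_iff_of_charP] at h1 h2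
    obtain rfl := h1.unique h2
    rcases lt_trichotomy a b with hab | rfl | hab
    · refine ⟨p, b - a, hpp, by omega, Or.inr ?_⟩
      rw [mul_right_comm, ← pow_add, Nat.add_sub_cancel' hab.le]
    · exact absurd rfl hde
    · refine ⟨p, a - b, hpp, by omega, Or.inl ?_⟩
      rw [mul_right_comm, ← pow_add, Nat.add_sub_cancel' hab.le]
  · have := CharP.charP_to_charZero k
    rw [isRoot_cyclotomic_iff_charZero hd] at h1
    rw [isRoot_cyclotomic_iff_charZero he] at h2
    exact absurd (h1.unique h2) hde

open Polynomial in
lemma exists_pow_of_not_isUnit {A : Type*} [CommRing A] [IsDomain A] {d e : ℕ} (hd : 0 < d)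
    (he : 0 < e) (hde : d ≠ e) {ζ : A} (hζ : IsPrimitiveRoot ζ e)
    (hu : ¬ IsUnit (aeval ζ (cyclotomic d ℤ))) :
    ∃ p j : ℕ, p.Prime ∧ 0 < j ∧ (d = e * p ^ j ∨ e = d * p ^ j) := by
  obtain ⟨m, hm, hmem⟩ := exists_max_ideal_of_mem_nonunits hu
  let _ := Ideal.Quotient.field m
  have key : ∀ n, aeval ζ (cyclotomic n ℤ) ∈ m →
      (cyclotomic n (A ⧸ m)).IsRoot (Ideal.Quotient.mk m ζ) := by
    intro n hn
    rw [← Ideal.Quotient.eq_zero_iff_mem] at hn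
    rw [IsRoot.def, ← hn, aeval_def, hom_eval₂, ← map_cyclotomic_int n (A ⧸ m), eval_map]
    congr 1
  refine ratio_of_common_root hd he hde (key d hmem) (key e ?_)
  have h0 : aeval ζ (cyclotomic e ℤ) = 0 := by
    have := hζ.isRoot_cyclotomic he
    rwa [IsRoot.def, ← map_cyclotomic_int, eval_map] at this
  rw [h0]; exact m.zero_mem

open Polynomial in
/-- The value at `ζ` of the product of the cyclotomic polynomials of indices `d ≠ e` in `S` divides
the product of the primes dividing `e`: the factors that are not units have `d = e / ℓ ^ j`, and for
a fixed prime `ℓ` the product of those divides `ζ ^ (e / ℓ) - 1`, hence `ℓ`. -/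
lemma prod_dvd_radical {A : Type*} [CommRing A] [IsDomain A] {e : ℕ} (he : 0 < e) {ζ : A}
    (hζ : IsPrimitiveRoot ζ e) (S : Finset ℕ) (hS : ∀ d ∈ S, 0 < d)
    (hne : ∀ d ∈ S, d ≠ e) (hdiv : ∀ d ∈ S, ∀ p j : ℕ, p.Prime → 0 < j → d ≠ e * p ^ j) :
    ∏ d ∈ S, aeval ζ (cyclotomic d ℤ) ∣ ((∏ p ∈ e.primeFactors, p : ℕ) : A) := by
  rw [← Finset.prod_filter_mul_prod_filter_not S
    (fun d => IsUnit (aeval ζ (cyclotomic d ℤ)))]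
  have hU : IsUnit (∏ d ∈ S with IsUnit (aeval ζ (cyclotomic d ℤ)), aeval ζ (cyclotomic d ℤ)) := by
    rw [IsUnit.prod_iff]
    intro d hd
    exact (Finset.mem_filter.mp hd).2
  rw [hU.mul_left_dvd]
  have hT : ∀ d ∈ S.filter (fun d => ¬ IsUnit (aeval ζ (cyclotomic d ℤ))),
      (e / d).minFac ∈ e.primeFactors ∧ d ∣ e / (e / d).minFac := by
    intro d hd
    obtain ⟨hdS, hdu⟩ := Finset.mem_filter.mp hd
    obtain ⟨p, j, hp, hj, h | h⟩ := exists_pow_of_not_isUnit (hS d hdS) he (hne d hdS) hζ hdu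
    · exact absurd h (hdiv d hdS p j hp hj)
    · have h1 : e / d = p ^ j := by rw [h, Nat.mul_div_cancel_left _ (hS d hdS)]
      rw [h1, hp.pow_minFac hj.ne']
      obtain ⟨i, rfl⟩ := Nat.exists_eq_succ_of_ne_zero hj.ne'
      have h2 : e = d * p ^ i * p := by rw [h, pow_succ, mul_assoc]
      refine ⟨Nat.mem_primeFactors.mpr ⟨hp, ⟨d * p ^ i, by rw [h2]; ring⟩, he.ne'⟩, ?_⟩
      rw [h2, Nat.mul_div_cancel _ hp.pos]
      exact dvd_mul_right _ _
  rw [← Finset.prod_fiberwise_of_maps_to (fun d hd => (hT d hd).1), Nat.cast_prod]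
  refine Finset.prod_dvd_prod_of_dvd _ _ fun p hp => ?_
  obtain ⟨hpp, ⟨c, hc⟩, -⟩ := Nat.mem_primeFactors.mp hp
  have hc0 : 0 < c := Nat.pos_of_ne_zero (by rintro rfl; simp at hc; omega)
  have hep : e / p = c := by rw [hc, Nat.mul_div_cancel_left _ hpp.pos]
  have h1 : ζ ^ c ≠ 1 := hζ.pow_ne_one_of_pos_of_lt hc0.ne' (by
    rw [hc]; nlinarith [hpp.two_le])
  have h2 : (ζ ^ c) ^ p = 1 := by rw [← pow_mul, mul_comm, ← hc, hζ.pow_eq_one]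
  have h3 : ζ ^ c - 1 ∣ (p : A) := by
    rw [← neg_dvd, neg_sub]; exact dvd_of_pow_eq_one h2 h1
  refine dvd_trans ?_ h3
  have h4 : ∏ d ∈ c.divisors, aeval ζ (cyclotomic d ℤ) = ζ ^ c - 1 := by
    rw [← map_prod, prod_cyclotomic_eq_X_pow_sub_one hc0]; simp
  rw [← h4]
  refine Finset.prod_dvd_prod_of_subset _ _ _ fun d hd => ?_
  obtain ⟨hd1, hd2⟩ := Finset.mem_filter.mp hd
  have := (hT d hd1).2
  rw [hd2, hep] at this
  exact Nat.mem_divisors.mpr ⟨this, hc0.ne'⟩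

lemma two_lt_totient {e : ℕ} (he : 0 < e) (heS : e ∉ ({1, 2, 3, 4, 6} : Finset ℕ)) :
    2 < e.totient := by
  by_contra hlt
  have hpos := Nat.totient_pos.mpr he
  have big : ∀ n, n ∣ e → n.totient ≤ 2 := fun n hn =>
    (Nat.le_of_dvd hpos (Nat.totient_dvd_of_dvd hn)).trans (by omega)
  have h8 : ¬ 8 ∣ e := fun h => absurd (big 8 h) (by decide)
  have h9 : ¬ 9 ∣ e := fun h => absurd (big 9 h) (by decide)
  have h12 : ¬ 12 ∣ e := fun h => absurd (big 12 h) (by decide)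
  have hpr : ∀ p, p.Prime → p ∣ e → p = 2 ∨ p = 3 := by
    intro p hp hpe
    have := big p hpe
    rw [Nat.totient_prime hp] at this
    have := hp.two_le
    omega
  have h : e ∣ 12 := by
    rw [← Nat.factorization_le_iff_dvd he.ne' (by norm_num)]
    intro p
    by_cases hp : p.Prime ∧ p ∣ e
    · obtain ⟨hp, hpe⟩ := hp
      rw [← hp.pow_dvd_iff_le_factorization (by norm_num)]
      have h1 := Nat.ordProj_dvd e p
      rcases hpr p hp hpe with rfl | rfl
      · have : e.factorization 2 ≤ 2 := by
          by_contra h; push Not at h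
          exact h8 ((pow_dvd_pow 2 h).trans h1)
        exact (pow_dvd_pow 2 this).trans (by norm_num)
      · have : e.factorization 3 ≤ 1 := by
          by_contra h; push Not at h
          exact h9 ((pow_dvd_pow 3 h).trans h1)
        exact (pow_dvd_pow 3 this).trans (by norm_num)
    · have : e.factorization p = 0 := by
        rw [Nat.factorization_eq_zero_iff]; tauto
      rw [this]; exact Nat.zero_le _
  have hle := Nat.le_of_dvd (by norm_num) h
  simp only [Finset.mem_insert, Finset.mem_singleton, not_or] at heS
  interval_cases e <;> omega

open Polynomial in
/-- The theorem, with the `e`-th cyclotomic field given as an arbitrary model `K`. -/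
lemma main (K : Type*) [Field K] [NumberField K] (D : Finset ℕ) (hpos : ∀ d ∈ D, 0 < d) 
    (e : ℕ) [IsCyclotomicExtension {e} ℚ K] (he : e ∈ D) (heS : e ∉ ({1, 2, 3, 4, 6} : Finset ℕ))
    (hdiv : ∀ d ∈ D.erase e,
      ¬ ∃ (p k : ℕ), p.Prime ∧ 0 < k ∧ (d : ℚ) / (e : ℚ) = (p : ℚ) ^ k)
    (hGE : IsGE (Polynomial ℤ ⧸
      (⨅ d ∈ D.erase e, Ideal.span {Polynomial.cyclotomic d ℤ})) 2) :
    IsGE (Polynomial ℤ ⧸ (⨅ d ∈ D, Ideal.span {Polynomial.cyclotomic d ℤ})) 2 := by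
  have he0 : 0 < e := hpos e he
  have : NeZero e := ⟨he0.ne'⟩
  have hSpos : ∀ d ∈ D.erase e, 0 < d := fun d hd => hpos d (Finset.mem_of_mem_erase hd)
  have hζK : IsPrimitiveRoot (IsCyclotomicExtension.zeta e ℚ K) e :=
    IsCyclotomicExtension.zeta_spec e ℚ K
  have hgen : Algebra.adjoin ℤ {hζK.toInteger} = ⊤ :=
    IsCyclotomicExtension.Rat.adjoin_singleton_eq_top hζK
  have hζ : IsPrimitiveRoot hζK.toInteger e := hζK.toInteger_isPrimitiveRoot
  generalize hζK.toInteger = ζ at hgen hζ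
  have hK : 2 < finrank ℚ K := by
    rw [IsCyclotomicExtension.Rat.finrank (k := e) (K := K)]
    exact two_lt_totient he0 heS
  have hζ0 : aeval ζ (cyclotomic e ℤ) = 0 := by
    have := hζ.isRoot_cyclotomic he0
    rwa [IsRoot.def, ← map_cyclotomic_int, eval_map] at this
  have hmin : ∀ x : ℤ[X], aeval ζ x = 0 → cyclotomic e ℤ ∣ x := by
    intro x hx
    have hζ' : IsPrimitiveRoot (algebraMap (𝓞 K) K ζ) e :=
      hζ.map_of_injective (FaithfulSMul.algebraMap_injective (𝓞 K) K)
    rw [cyclotomic_eq_minpoly hζ' he0]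
    refine minpoly.isIntegrallyClosed_dvd (hζ'.isIntegral he0) ?_
    rw [aeval_algebraMap_apply, hx, map_zero]
  set Ψ : ℤ[X] := ∏ d ∈ D.erase e, cyclotomic d ℤ with hΨ
  have hprod : ∏ d ∈ D, cyclotomic d ℤ = cyclotomic e ℤ * Ψ :=
    (Finset.mul_prod_erase D _ he).symm
  let I : Ideal ℤ[X] := ⨅ d ∈ D, Ideal.span {cyclotomic d ℤ}
  let J : Ideal ℤ[X] := ⨅ d ∈ D.erase e, Ideal.span {cyclotomic d ℤ}
  have hI : ∀ x, x ∈ I ↔ cyclotomic e ℤ * Ψ ∣ x := fun x => by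
    rw [← hprod]; exact mem_iInf_iff hpos x
  have hJ : ∀ x, x ∈ J ↔ Ψ ∣ x := mem_iInf_iff hSpos
  have hIJ : I ≤ J := fun x hx => (hJ x).mpr ((dvd_mul_left _ _).trans ((hI x).mp hx))
  let f : ℤ[X] ⧸ I →+* ℤ[X] ⧸ J := Ideal.Quotient.factor hIJ
  let φ : ℤ[X] ⧸ I →+* 𝓞 K := Ideal.Quotient.lift I (aeval ζ).toRingHom (by
    intro x hx
    obtain ⟨y, rfl⟩ := (hI x).mp hx
    simp [hζ0])
  have hφmk : ∀ x, φ (Ideal.Quotient.mk I x) = aeval ζ x := fun x => Ideal.Quotient.lift_mk _ _ _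
  have hΨζ : aeval ζ Ψ = ∏ d ∈ D.erase e, aeval ζ (cyclotomic d ℤ) := map_prod _ _ _
  have hΨ0 : aeval ζ Ψ ≠ 0 := by
    rw [hΨζ, Finset.prod_ne_zero_iff]
    intro d hd h0
    have hne := Finset.ne_of_mem_erase hd
    exact (cyclotomic.irreducible he0).not_isUnit
      (cyclotomic_isRelPrime he0 (hSpos d hd) hne.symm dvd_rfl (hmin _ h0))
  refine isGE_of_red (f := f) (φ := φ) (P := Ideal.Quotient.mk I Ψ)
    (Ideal.Quotient.factor_surjective hIJ) ?_ ?_ ?_ ?_ ?_ hGE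
  · intro a
    have ha : a ∈ Algebra.adjoin ℤ {ζ} := by rw [hgen]; trivial
    rw [Algebra.adjoin_singleton_eq_range_aeval] at ha
    obtain ⟨x, rfl⟩ := ha
    exact ⟨Ideal.Quotient.mk I x, hφmk x⟩
  · intro x hx
    obtain ⟨x, rfl⟩ := Ideal.Quotient.mk_surjective x
    rw [Ideal.Quotient.factor_mk, Ideal.Quotient.eq_zero_iff_mem, hJ] at hx
    obtain ⟨y, rfl⟩ := hx
    exact ⟨Ideal.Quotient.mk I y, map_mul _ _ _⟩
  · intro x hx
    obtain ⟨x, rfl⟩ := Ideal.Quotient.mk_surjective x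
    rw [hφmk] at hx
    rw [← map_mul, Ideal.Quotient.eq_zero_iff_mem, hI, mul_comm Ψ]
    exact mul_dvd_mul_right (hmin x hx) Ψ
  · rw [hφmk]; exact hΨ0
  · intro α β hα hαβ
    rw [hφmk] at hα ⊢
    refine thmA hζ hgen hK rfl hΨ0 (r := ∏ p ∈ e.primeFactors, p) ?_ ?_ ?_ hα hαβ
    · rw [← Nat.radical_eq_prod_primeFactors]
      exact UniqueFactorizationMonoid.squarefree_radical
    · refine (Nat.prod_primeFactors_dvd e).trans ?_
      split_ifs
      · exact dvd_rfl
      · exact dvd_mul_left _ _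
    · rw [hΨζ]
      refine prod_dvd_radical he0 hζ _ hSpos (fun d hd => Finset.ne_of_mem_erase hd) ?_
      intro d hd p j hp hj h
      refine hdiv d hd ⟨p, j, hp, hj, ?_⟩
      have : (e : ℚ) ≠ 0 := by exact_mod_cast he0.ne'
      rw [h]; push_cast; field_simp

end

end RD

/-- If `e ∈ D`, `e ∉ {1,2,3,4,6}`, `d/e` is not a positive power of a prime for
any `d ∈ D \ {e}`, and `O(D \ {e})` is a `GE_2`-ring, then `O(D)` is a `GE_2`-ring. -/
theorem stmt_8 (D : Finset ℕ) (hpos : ∀ d ∈ D, 0 < d) (hcard : 2 ≤ D.card)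
    (e : ℕ) (he : e ∈ D) (heS : e ∉ ({1, 2, 3, 4, 6} : Finset ℕ))
    (hdiv : ∀ d ∈ D.erase e,
      ¬ ∃ (p k : ℕ), p.Prime ∧ 0 < k ∧ (d : ℚ) / (e : ℚ) = (p : ℚ) ^ k)
    (hGE : IsGE (Polynomial ℤ ⧸
      (⨅ d ∈ D.erase e, Ideal.span {Polynomial.cyclotomic d ℤ})) 2) :
    IsGE (Polynomial ℤ ⧸ (⨅ d ∈ D, Ideal.span {Polynomial.cyclotomic d ℤ})) 2 := by
  have : NeZero e := ⟨(hpos e he).ne'⟩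
  have : NeZero ((e : ℕ) : ℚ) := ⟨by exact_mod_cast (hpos e he).ne'⟩
  have : IsCyclotomicExtension {e} ℚ (CyclotomicField e ℚ) :=
    CyclotomicField.isCyclotomicExtension e ℚ
  exact RD.main (CyclotomicField e ℚ) D hpos e he heS hdiv hGE
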